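/- arXiv:2307.06453 — 2 statements merged into one kernel-verified Lean document; each statement's English description precedes it below -/
import Mathlib

section
/- For every natural number d and every ε > 0 there exists N such that every (finite simple) graph with at least N vertices and maximum degree at most d has an ε-almost-internal bisection, and also an ε-almost-external bisection. Equivalently: there are only finitely many graphs with maximum degree at most d which do not have an ε-almost-internal bisection, and only finitely many which do not have an ε-almost-external bisection. -/
namespace AIB
open Finset Classical

variable {V : Type*} [Fintype V]

/-- sign of a colour -/
def sg (b : Bool) : ℤ := if b then 1 else -1

lemma sg_not (b : Bool) : sg (!b) = - sg b := by cases b <;> rfl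
lemma sg_sq (b : Bool) : sg b * sg b = 1 := by cases b <;> rfl

/-- local field -/
noncomputable def fld (G : SimpleGraph V) (c : V → Bool) (v : V) : ℤ :=
  ∑ w, if G.Adj v w then sg (c w) else 0

def Bad (G : SimpleGraph V) (s : ℤ) (c : V → Bool) (v : V) : Prop :=
  s * (sg (c v) * fld G c v) < 0

noncomputable def flipSet (G : SimpleGraph V) (s : ℤ) (col : V → ℕ) (j : ℕ) (c : V → Bool) : Finset V :=
  univ.filter fun v => col v = j ∧ Bad G s c v

noncomputable def flp (F : Finset V) (c : V → Bool) : V → Bool :=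
  fun v => if v ∈ F then !c v else c v

noncomputable def st (G : SimpleGraph V) (s : ℤ) (col : V → ℕ) (q : ℕ) (x : V → Bool) : ℕ → V → Bool
  | 0 => x
  | t+1 => flp (flipSet G s col (t % q) (st G s col q x t)) (st G s col q x t)

noncomputable def energy (G : SimpleGraph V) (s : ℤ) (c : V → Bool) : ℤ :=
  ∑ v, s * (sg (c v) * fld G c v)

lemma sg_flp (F : Finset V) (c : V → Bool) (v : V) :
    sg (flp F c v) = sg (c v) - 2 * (if v ∈ F then sg (c v) else 0) := by
  unfold flp; split_ifs
  · rw [sg_not]; ring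
  · ring

lemma energy_flp (G : SimpleGraph V) (s : ℤ) (c : V → Bool) (F : Finset V)
    (hF : ∀ v ∈ F, ∀ w ∈ F, ¬ G.Adj v w) (hb : ∀ v ∈ F, Bad G s c v) :
    energy G s c + 4 * F.card ≤ energy G s (flp F c) := by
  have key : energy G s (flp F c) = energy G s c - 4 * ∑ v ∈ F, s * (sg (c v) * fld G c v) := by
    let a : V → V → ℤ := fun v w => if G.Adj v w then 1 else 0
    let y : V → ℤ := fun v => if v ∈ F then sg (c v) else 0
    have hsym : ∀ v w, a v w = a w v := fun v w => by simp only [a, G.adj_comm]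
    have hfld : ∀ c v, fld G c v = ∑ w, a v w * sg (c w) := by
      intro c v; unfold fld; refine Finset.sum_congr rfl fun w _ => ?_
      simp only [a]; split_ifs <;> simp
    have h0 : ∑ v, ∑ w, a v w * y v * y w = 0 := by
      refine Finset.sum_eq_zero fun v _ => Finset.sum_eq_zero fun w _ => ?_
      simp only [a, y]
      by_cases h1 : v ∈ F <;> by_cases h2 : w ∈ F <;> simp [h1, h2]
      intro h; exact absurd h (hF v h1 w h2)
    have h1 : ∑ v ∈ F, s * (sg (c v) * fld G c v) = s * ∑ v, ∑ w, a v w * y v * sg (c w) := by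
      rw [Finset.mul_sum, ← Finset.sum_subset (subset_univ F)]
      · refine Finset.sum_congr rfl fun v hv => ?_
        rw [hfld, Finset.mul_sum]
        congr 1; refine Finset.sum_congr rfl fun w _ => ?_
        simp only [y, if_pos hv]; ring
      · intro v _ hv
        simp [y, hv]
    have h2 : ∑ v, ∑ w, a v w * sg (c v) * y w = ∑ v, ∑ w, a v w * y v * sg (c w) := by
      rw [Finset.sum_comm]
      refine Finset.sum_congr rfl fun v _ => Finset.sum_congr rfl fun w _ => ?_
      rw [hsym]; ring
    have hE : ∀ c, energy G s c = s * ∑ v, ∑ w, a v w * sg (c v) * sg (c w) := by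
      intro c; unfold energy
      rw [Finset.mul_sum]
      refine Finset.sum_congr rfl fun v _ => ?_
      rw [hfld, Finset.mul_sum]
      congr 1; refine Finset.sum_congr rfl fun w _ => ?_
      ring
    have h3 : ∑ v, ∑ w, a v w * sg (flp F c v) * sg (flp F c w) =
        ∑ v, ∑ w, a v w * sg (c v) * sg (c w) - 2 * ∑ v, ∑ w, a v w * sg (c v) * y w
        - 2 * ∑ v, ∑ w, a v w * y v * sg (c w) + 4 * ∑ v, ∑ w, a v w * y v * y w := by
      simp only [Finset.mul_sum, ← Finset.sum_sub_distrib, ← Finset.sum_add_distrib]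
      refine Finset.sum_congr rfl fun v _ => Finset.sum_congr rfl fun w _ => ?_
      rw [sg_flp, sg_flp]; simp only [y]; ring
    rw [hE, hE, h3, h0, h1, h2]; ring
  have : ∑ v ∈ F, s * (sg (c v) * fld G c v) ≤ ∑ v ∈ F, (-1 : ℤ) := by
    refine Finset.sum_le_sum fun v hv => ?_
    have := hb v hv; unfold Bad at this; omega
  simp at this
  omega

/-- neighbours as finset -/
noncomputable def nb (G : SimpleGraph V) (v : V) : Finset V := univ.filter fun w => G.Adj v w
noncomputable def cnb (G : SimpleGraph V) (v : V) : Finset V := univ.filter fun w => w = v ∨ G.Adj v w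

lemma abs_sg (b : Bool) : |sg b| = 1 := by cases b <;> rfl

lemma abs_fld (G : SimpleGraph V) (c : V → Bool) (v : V) : |fld G c v| ≤ (nb G v).card := by
  unfold fld nb
  rw [← Finset.sum_filter]
  refine (Finset.abs_sum_le_sum_abs _ _).trans ?_
  simp [abs_sg]

lemma abs_energy (G : SimpleGraph V) (s : ℤ) (hs : |s| = 1) (d : ℕ) (hd : ∀ v, (nb G v).card ≤ d)
    (c : V → Bool) : |energy G s c| ≤ Fintype.card V * d := by
  unfold energy
  refine (Finset.abs_sum_le_sum_abs _ _).trans ?_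
  calc _ ≤ ∑ v : V, (d : ℤ) := by
        refine Finset.sum_le_sum fun v _ => ?_
        rw [abs_mul, abs_mul, hs, abs_sg]
        have := abs_fld G c v
        have := hd v
        omega
    _ = _ := by simp

lemma flips_total (G : SimpleGraph V) (s : ℤ) (hs : |s| = 1) (d : ℕ) (hd : ∀ v, (nb G v).card ≤ d)
    (col : V → ℕ) (hcol : ∀ v w, G.Adj v w → col v ≠ col w) (q : ℕ) (x : V → Bool) (T : ℕ) :
    ∑ t ∈ range T, (flipSet G s col (t % q) (st G s col q x t)).card ≤ Fintype.card V * d := by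
  have h : ∀ T, energy G s x + 4 * ∑ t ∈ range T, ((flipSet G s col (t % q) (st G s col q x t)).card : ℤ)
      ≤ energy G s (st G s col q x T) := by
    intro T
    induction T with
    | zero => simp [st]
    | succ T ih =>
      rw [Finset.sum_range_succ]
      have := energy_flp G s (st G s col q x T) (flipSet G s col (T % q) (st G s col q x T))
        (by
          intro v hv w hw h
          simp only [flipSet, mem_filter] at hv hw
          exact hcol v w h (hv.2.1.trans hw.2.1.symm))
        (by intro v hv; simp only [flipSet, mem_filter] at hv; exact hv.2.2)
      change _ ≤ energy G s (flp _ _)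
      linarith
  have h1 := h T
  have h2 := abs_le.1 (abs_energy G s hs d hd x)
  have h3 := abs_le.1 (abs_energy G s hs d hd (st G s col q x T))
  zify
  nlinarith [h2.1, h3.2, mul_nonneg (Int.natCast_nonneg (Fintype.card V)) (Int.natCast_nonneg d)]

lemma bad_congr (G : SimpleGraph V) (s : ℤ) (c c' : V → Bool) (v : V)
    (h : ∀ w ∈ cnb G v, c w = c' w) : Bad G s c v ↔ Bad G s c' v := by
  have h1 : c v = c' v := h v (by simp [cnb])
  have h2 : fld G c v = fld G c' v := by
    unfold fld
    refine Finset.sum_congr rfl fun w _ => ?_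
    split_ifs with hw
    · rw [h w (by simp [cnb, hw])]
    · rfl
  unfold Bad; rw [h1, h2]

lemma cnb_symm (G : SimpleGraph V) (v w : V) : w ∈ cnb G v ↔ v ∈ cnb G w := by
  simp [cnb, G.adj_comm, eq_comm]

lemma card_cnb (G : SimpleGraph V) (d : ℕ) (hd : ∀ v, (nb G v).card ≤ d) (v : V) :
    (cnb G v).card ≤ d + 1 := by
  have : cnb G v ⊆ insert v (nb G v) := by intro w; simp [cnb, nb]
  exact (card_le_card this).trans ((card_insert_le _ _).trans (by have := hd v; omega))

noncomputable def badSet (G : SimpleGraph V) (s : ℤ) (c : V → Bool) : Finset V :=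
  univ.filter fun v => Bad G s c v

lemma bad_cycle (G : SimpleGraph V) (s : ℤ) (d : ℕ) (hd : ∀ v, (nb G v).card ≤ d)
    (col : V → ℕ) (q : ℕ) (hq : ∀ v, col v < q) (x : V → Bool) (k : ℕ) :
    (badSet G s (st G s col q x (k * q))).card ≤
      ∑ i ∈ range q, (d + 1) * (flipSet G s col ((k * q + i) % q) (st G s col q x (k * q + i))).card := by
  have sub : badSet G s (st G s col q x (k * q)) ⊆ (range q).biUnion fun i =>
      (flipSet G s col ((k * q + i) % q) (st G s col q x (k * q + i))).biUnion fun w => cnb G w := by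
    intro v hv
    by_contra hcon
    simp only [mem_biUnion, mem_range, not_exists, not_and] at hcon
    have hconst : ∀ i ≤ q, ∀ w ∈ cnb G v, st G s col q x (k * q + i) w = st G s col q x (k * q) w := by
      intro i
      induction i with
      | zero => intros; rfl
      | succ i ih =>
        intro hi w hw
        rw [← ih (by omega) w hw]
        change flp (flipSet G s col ((k * q + i) % q) (st G s col q x (k * q + i)))
          (st G s col q x (k * q + i)) w = _
        unfold flp
        rw [if_neg]
        intro hmem
        exact hcon i (by omega) w hmem ((cnb_symm G v w).1 hw)
    refine hcon (col v) (hq v) v ?_ (by simp [cnb])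
    simp only [flipSet, mem_filter, mem_univ, true_and]
    refine ⟨?_, ?_⟩
    · rw [mul_comm k q, Nat.mul_add_mod, Nat.mod_eq_of_lt (hq v)]
    · rw [bad_congr G s _ _ v (hconst (col v) (hq v).le)]
      simpa [badSet] using hv
  refine (card_le_card sub).trans (card_biUnion_le.trans (Finset.sum_le_sum fun i _ => ?_))
  rw [mul_comm (d + 1)]
  exact card_biUnion_le_card_mul _ _ _ fun w _ => card_cnb G d hd w

lemma bad_total (G : SimpleGraph V) (s : ℤ) (hs : |s| = 1) (d : ℕ) (hd : ∀ v, (nb G v).card ≤ d)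
    (col : V → ℕ) (hcol : ∀ v w, G.Adj v w → col v ≠ col w) (q : ℕ) (hq : ∀ v, col v < q)
    (x : V → Bool) (K : ℕ) :
    ∑ k ∈ range K, (badSet G s (st G s col q x (k * q))).card ≤ (d + 1) * (Fintype.card V * d) := by
  refine le_trans ?_ (Nat.mul_le_mul_left _ (flips_total G s hs d hd col hcol q x (K * q)))
  rw [Finset.mul_sum]
  induction K with
  | zero => simp
  | succ K ih =>
    rw [Finset.sum_range_succ, add_mul, one_mul, Finset.sum_range_add]
    exact add_le_add ih (bad_cycle G s d hd col q hq x K)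

/-- balls -/
noncomputable def ball (G : SimpleGraph V) : ℕ → V → Finset V
  | 0, v => {v}
  | t+1, v => (cnb G v).biUnion (ball G t)

lemma card_ball (G : SimpleGraph V) (d : ℕ) (hd : ∀ v, (nb G v).card ≤ d) (t : ℕ) (v : V) :
    (ball G t v).card ≤ (d + 1) ^ t := by
  induction t generalizing v with
  | zero => simp [ball]
  | succ t ih =>
    rw [ball, pow_succ']
    exact (card_biUnion_le_card_mul _ _ _ fun w _ => ih w).trans
      (Nat.mul_le_mul_right _ (card_cnb G d hd v))

lemma mem_ball_succ' (G : SimpleGraph V) (t : ℕ) (v w : V) :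
    w ∈ ball G (t+1) v ↔ ∃ u ∈ ball G t v, w ∈ cnb G u := by
  induction t generalizing v with
  | zero => simp [ball]
  | succ t ih =>
    rw [ball, mem_biUnion]
    simp only [ih]
    rw [ball]
    simp only [mem_biUnion]
    constructor
    · rintro ⟨a, ha, b, hb, h⟩; exact ⟨b, ⟨a, ha, hb⟩, h⟩
    · rintro ⟨b, ⟨a, ha, hb⟩, h⟩; exact ⟨a, ha, b, hb, h⟩

lemma ball_symm (G : SimpleGraph V) (t : ℕ) (v w : V) : w ∈ ball G t v → v ∈ ball G t w := by
  induction t generalizing v with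
  | zero => simp [ball, eq_comm]
  | succ t ih =>
    intro h
    rw [ball, mem_biUnion] at h
    obtain ⟨u, hu, h⟩ := h
    rw [mem_ball_succ']
    exact ⟨u, ih u h, (cnb_symm G v u).1 hu⟩

lemma st_local (G : SimpleGraph V) (s : ℤ) (col : V → ℕ) (q : ℕ) (x y : V → Bool) (t : ℕ) (v : V)
    (h : ∀ w ∈ ball G t v, x w = y w) : st G s col q x t v = st G s col q y t v := by
  induction t generalizing v with
  | zero => exact h v (by simp [ball])
  | succ t ih =>
    have h1 : ∀ w ∈ cnb G v, st G s col q x t w = st G s col q y t w := by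
      intro w hw
      refine ih w fun u hu => h u ?_
      rw [ball, mem_biUnion]; exact ⟨w, hw, hu⟩
    have h2 := h1 v (by simp [cnb])
    have h3 := bad_congr G s _ _ v h1
    simp only [st, flp, flipSet, mem_filter, mem_univ, true_and, h2, h3]

lemma bad_not (G : SimpleGraph V) (s : ℤ) (c : V → Bool) (v : V) :
    Bad G s (fun w => !c w) v ↔ Bad G s c v := by
  have : fld G (fun w => !c w) v = - fld G c v := by
    unfold fld
    rw [← Finset.sum_neg_distrib]
    refine Finset.sum_congr rfl fun w _ => ?_
    split_ifs
    · rw [sg_not]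
    · simp
  unfold Bad
  rw [this, sg_not, neg_mul_neg]

lemma st_not (G : SimpleGraph V) (s : ℤ) (col : V → ℕ) (q : ℕ) (x : V → Bool) (t : ℕ) :
    st G s col q (fun w => !x w) t = fun w => !(st G s col q x t w) := by
  induction t with
  | zero => rfl
  | succ t ih =>
    funext v
    simp only [st, flp, flipSet, mem_filter, mem_univ, true_and, ih, bad_not]
    split_ifs <;> rfl

lemma cov_zero (G : SimpleGraph V) (s : ℤ) (col : V → ℕ) (q : ℕ) (t : ℕ) (v w : V)
    (h : Disjoint (ball G t v) (ball G t w)) :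
    ∑ x : V → Bool, sg (st G s col q x t v) * sg (st G s col q x t w) = 0 := by
  have hinv : Function.Involutive (flp (ball G t v)) := by
    intro x; funext u; unfold flp; split_ifs <;> simp
  let π : Equiv.Perm (V → Bool) := Function.Involutive.toPerm _ hinv
  have := Equiv.sum_comp π fun x => sg (st G s col q x t v) * sg (st G s col q x t w)
  have h2 : ∀ x, sg (st G s col q (π x) t v) * sg (st G s col q (π x) t w)
      = - (sg (st G s col q x t v) * sg (st G s col q x t w)) := by
    intro x
    have e1 : st G s col q (flp (ball G t v) x) t v = !(st G s col q x t v) := by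
      rw [← congrFun (st_not G s col q x t) v]
      refine st_local _ _ _ _ _ _ _ _ fun u hu => ?_
      simp [flp, hu]
    have e2 : st G s col q (flp (ball G t v) x) t w = st G s col q x t w := by
      refine st_local _ _ _ _ _ _ _ _ fun u hu => ?_
      simp [flp, Finset.disjoint_right.1 h hu]
    change sg (st G s col q (flp (ball G t v) x) t v) * sg (st G s col q (flp (ball G t v) x) t w) = _
    rw [e1, e2, sg_not, neg_mul]
  rw [Finset.sum_congr rfl fun x _ => h2 x, Finset.sum_neg_distrib] at this
  omega

noncomputable def mag (c : V → Bool) : ℤ := ∑ v, sg (c v)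

lemma second_moment (G : SimpleGraph V) (s : ℤ) (d : ℕ) (hd : ∀ v, (nb G v).card ≤ d)
    (col : V → ℕ) (q : ℕ) (t : ℕ) :
    ∑ x : V → Bool, mag (st G s col q x t) ^ 2 ≤
      ∑ _x : V → Bool, (Fintype.card V * (d + 1) ^ (2 * t) : ℤ) := by
  have e : ∀ x, mag (st G s col q x t) ^ 2 =
      ∑ v, ∑ w, sg (st G s col q x t v) * sg (st G s col q x t w) := by
    intro x; unfold mag; rw [sq, Finset.sum_mul_sum]
  simp only [e]
  rw [Finset.sum_comm]
  have hv : ∀ v : V, ∑ x : V → Bool, ∑ w, sg (st G s col q x t v) * sg (st G s col q x t w) ≤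
      ∑ _x : V → Bool, ((d + 1) ^ (2 * t) : ℤ) := by
    intro v
    rw [Finset.sum_comm]
    have hsub : ∑ w, ∑ x : V → Bool, sg (st G s col q x t v) * sg (st G s col q x t w)
       = ∑ w ∈ (ball G t v).biUnion (ball G t), ∑ x : V → Bool, sg (st G s col q x t v) * sg (st G s col q x t w) := by
      symm
      refine Finset.sum_subset (subset_univ _) fun w _ hw => cov_zero G s col q t v w ?_
      rw [Finset.disjoint_left]
      intro u hu hu'
      exact hw (mem_biUnion.2 ⟨u, hu, ball_symm G t w u hu'⟩)
    rw [hsub, Finset.sum_comm]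
    refine Finset.sum_le_sum fun x _ => ?_
    have hc : ((ball G t v).biUnion (ball G t)).card ≤ (d+1)^(2*t) := by
      rw [two_mul, pow_add]
      exact (card_biUnion_le_card_mul _ _ _ fun w _ => card_ball G d hd t w).trans
        (Nat.mul_le_mul_right _ (card_ball G d hd t v))
    calc _ ≤ ∑ w ∈ (ball G t v).biUnion (ball G t), (1:ℤ) := by
          refine Finset.sum_le_sum fun w _ => ?_
          cases st G s col q x t v <;> cases st G s col q x t w <;> decide
      _ ≤ _ := by simp only [sum_const, nsmul_eq_mul, mul_one]; exact_mod_cast hc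
  refine (Finset.sum_le_sum fun v _ => hv v).trans ?_
  rw [Finset.sum_comm]
  simp

lemma exists_start (G : SimpleGraph V) (s : ℤ) (d : ℕ) (hd : ∀ v, (nb G v).card ≤ d)
    (col : V → ℕ) (q : ℕ) (K : ℕ) :
    ∃ x : V → Bool, ∀ k < K, mag (st G s col q x (k * q)) ^ 2 ≤
      K * (Fintype.card V * (d + 1) ^ (2 * (K * q)) : ℤ) := by
  have h : ∑ x : V → Bool, ∑ k ∈ range K, mag (st G s col q x (k * q)) ^ 2 ≤
      ∑ _x : V → Bool, ∑ _k ∈ range K, (Fintype.card V * (d + 1) ^ (2 * (K * q)) : ℤ) := by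
    rw [Finset.sum_comm]
    conv_rhs => rw [Finset.sum_comm]
    refine Finset.sum_le_sum fun k hk => (second_moment G s d hd col q (k * q)).trans ?_
    refine Finset.sum_le_sum fun x _ => ?_
    have : k ≤ K := (mem_range.1 hk).le
    gcongr
    linarith [Int.natCast_nonneg d]
  obtain ⟨x, -, hx⟩ := Finset.exists_le_of_sum_le (univ_nonempty) h
  refine ⟨x, fun k hk => ?_⟩
  have := Finset.single_le_sum (f := fun k => mag (st G s col q x (k * q)) ^ 2)
    (fun i _ => sq_nonneg _) (mem_range.2 hk)
  refine this.trans (hx.trans ?_)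
  simp

lemma exists_col (G : SimpleGraph V) (d : ℕ) (hd : ∀ v, (nb G v).card ≤ d) :
    ∃ col : V → ℕ, (∀ v w, G.Adj v w → col v ≠ col w) ∧ ∀ v, col v < d + 1 := by
  have : ∀ S : Finset V, ∃ col : V → ℕ, (∀ v ∈ S, ∀ w ∈ S, G.Adj v w → col v ≠ col w) ∧
      ∀ v, col v < d + 1 := by
    intro S
    induction S using Finset.induction_on with
    | empty => exact ⟨fun _ => 0, by simp, by simp⟩
    | insert a S ha ih =>
      obtain ⟨col, h1, h2⟩ := ih
      have : ∃ j ∈ range (d+1), j ∉ (nb G a).image col := by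
        by_contra hcon
        push Not at hcon
        have := (card_le_card hcon).trans card_image_le
        have := hd a
        simp at *
        omega
      obtain ⟨j, hj, hj'⟩ := this
      have hn : ∀ w, G.Adj a w → col w ≠ j := by
        intro w hw e
        exact hj' (mem_image.2 ⟨w, by simp [nb, hw], e⟩)
      refine ⟨Function.update col a j, ?_, ?_⟩
      · intro v hv w hw hvw
        by_cases hva : v = a
        · subst hva
          have : w ≠ v := hvw.ne'
          simp [this]
          exact fun e => hn w hvw e.symm
        · by_cases hwa : w = a
          · subst hwa
            simp [hva]
            exact hn v hvw.symm
          · simp only [Function.update_of_ne hva, Function.update_of_ne hwa, ne_eq]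
            exact h1 v (by simpa [hva] using hv) w (by simpa [hwa] using hw) hvw
      · intro v
        by_cases hva : v = a
        · subst hva; simpa using hj
        · simpa [hva] using h2 v
  obtain ⟨col, h1, h2⟩ := this univ
  exact ⟨col, fun v w => h1 v (mem_univ _) w (mem_univ _), h2⟩

lemma bad_flp (G : SimpleGraph V) (s : ℤ) (d : ℕ) (hd : ∀ v, (nb G v).card ≤ d)
    (c : V → Bool) (F : Finset V) :
    (badSet G s (flp F c)).card ≤ (badSet G s c).card + F.card * (d + 1) := by
  have : badSet G s (flp F c) ⊆ badSet G s c ∪ F.biUnion (cnb G) := by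
    intro v hv
    by_contra hcon
    simp only [mem_union, mem_biUnion, not_or, not_exists, not_and] at hcon
    apply hcon.1
    simp only [badSet, mem_filter, mem_univ, true_and] at hv ⊢
    rwa [bad_congr G s (flp F c) c v] at hv
    intro w hw
    unfold flp; rw [if_neg]
    exact fun hF => hcon.2 w hF ((cnb_symm G v w).1 hw)
  refine (card_le_card this).trans ((card_union_le _ _).trans ?_)
  gcongr
  exact card_biUnion_le_card_mul _ _ _ fun w _ => card_cnb G d hd w

lemma balance (c : V → Bool) : ∃ F : Finset V, (F.card : ℤ) ≤ |mag c| ∧ |mag (flp F c)| ≤ 1 := by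
  -- majority colour
  have hm : ∀ b : Bool, (mag c) * sg b = 2 * (univ.filter fun v => c v = b).card - Fintype.card V := by
    intro b
    have : ∀ v, sg (c v) * sg b = 2 * (if c v = b then 1 else 0) - 1 := by
      intro v; cases c v <;> cases b <;> decide
    unfold mag
    rw [Finset.sum_mul, Finset.sum_congr rfl fun v _ => this v]
    rw [Finset.sum_sub_distrib, ← Finset.mul_sum, Finset.sum_boole]
    simp
  obtain ⟨b, hb⟩ : ∃ b, mag c * sg b = |mag c| := by
    rcases abs_cases (mag c) with h | h
    · exact ⟨true, by simp [sg, h.1]⟩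
    · exact ⟨false, by simp [sg, h.1]⟩
  have hcard := hm b
  rw [hb] at hcard
  have hle : (univ.filter fun v => c v = b).card ≤ Fintype.card V := card_le_univ _
  obtain ⟨F, hF, hFc⟩ := Finset.exists_subset_card_eq
    (s := univ.filter fun v => c v = b) (n := (|mag c| / 2).toNat) (by omega)
  have h0 := abs_nonneg (mag c)
  refine ⟨F, by omega, ?_⟩
  have : mag (flp F c) * sg b = mag c * sg b - 2 * F.card := by
    unfold mag
    simp only [sg_flp]
    rw [Finset.sum_sub_distrib, ← Finset.mul_sum, sub_mul, ← Finset.sum_filter]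
    have : ∑ v ∈ univ.filter (fun v => v ∈ F), sg (c v) = F.card * sg b := by
      rw [Finset.filter_mem_eq_inter, univ_inter, Finset.sum_congr rfl
        (g := fun _ => sg b) (fun v hv => by rw [(mem_filter.1 (hF hv)).2])]
      simp
    rw [this]
    have := sg_sq b
    linear_combination (-2 * (F.card : ℤ)) * this
  have h1 : |mag (flp F c)| = |mag c - 2 * F.card * sg b| := by
    have : mag (flp F c) = mag c - 2 * F.card * sg b := by
      have hs := sg_sq b
      linear_combination sg b * this - (mag (flp F c) - mag c) * hs
    rw [this]
  have h2 : |mag (flp F c)| = |(|mag c|) - 2 * F.card| := by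
    rw [← hb, ← this, abs_mul, abs_sg, mul_one]
  rw [h2, abs_le]
  omega

lemma core (d : ℕ) (ε : ℝ) (hε : 0 < ε) : ∃ N : ℕ, ∀ n : ℕ, N ≤ n → ∀ G : SimpleGraph (Fin n),
    (∀ v, (nb G v).card ≤ d) → ∀ s : ℤ, |s| = 1 →
    ∃ c : Fin n → Bool, |mag c| ≤ 1 ∧ ((badSet G s c).card : ℝ) ≤ ε * n := by
  obtain ⟨K, hK⟩ := exists_nat_gt (2 * ((d + 1) * d : ℝ) / ε)
  have hK0 : 0 < (K : ℝ) := lt_of_le_of_lt (by positivity) hK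
  set C : ℝ := K * (d + 1) ^ (2 * (K * (d + 1))) with hC
  obtain ⟨N, hN⟩ := exists_nat_gt (4 * (d + 1) ^ 2 * C / ε ^ 2)
  refine ⟨N, fun n hn G hd s hs => ?_⟩
  obtain ⟨col, hcol, hq⟩ := exists_col G d hd
  obtain ⟨x, hx⟩ := exists_start G s d hd col (d + 1) K
  have hbt := bad_total G s hs d hd col hcol (d + 1) hq x K
  have hKn : 0 < K := by exact_mod_cast hK0
  obtain ⟨k, hk, hkb⟩ : ∃ k ∈ range K,
      ((badSet G s (st G s col (d+1) x (k * (d+1)))).card : ℝ) ≤ ε / 2 * n := by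
    refine Finset.exists_le_of_sum_le (s := range K) (g := fun _ => ε / 2 * (n : ℝ)) ⟨0, by simpa using hKn⟩ ?_
    have h1 : (∑ k ∈ range K, ((badSet G s (st G s col (d+1) x (k * (d+1)))).card : ℝ)) ≤
        (d + 1) * (n * d) := by
      have := hbt
      rw [Fintype.card_fin] at this
      exact_mod_cast this
    refine h1.trans ?_
    rw [div_lt_iff₀ hε] at hK
    simp only [sum_const, card_range, nsmul_eq_mul]
    nlinarith [Nat.cast_nonneg (α := ℝ) n]
  set c := st G s col (d+1) x (k * (d+1)) with hc
  have hmag := hx k (mem_range.1 hk)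
  rw [← hc, Fintype.card_fin] at hmag
  obtain ⟨F, hF, hF1⟩ := balance c
  refine ⟨flp F c, hF1, ?_⟩
  have hb := bad_flp G s d hd c F
  have hbR : ((badSet G s (flp F c)).card : ℝ) ≤ (badSet G s c).card + F.card * (d + 1) := by
    exact_mod_cast hb
  have hmR : ((mag c : ℤ) : ℝ) ^ 2 ≤ C * n := by
    have : ((mag c : ℤ) : ℝ) ^ 2 ≤ K * (n * (d + 1) ^ (2 * (K * (d+1)))) := by exact_mod_cast hmag
    rw [hC]; linarith
  have hFR : (F.card : ℝ) ≤ |((mag c : ℤ) : ℝ)| := by exact_mod_cast hF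
  have hnN : 4 * (d + 1) ^ 2 * C ≤ ε ^ 2 * n := by
    rw [div_lt_iff₀ (by positivity)] at hN
    have : (N : ℝ) ≤ n := by exact_mod_cast hn
    nlinarith [sq_nonneg ε]
  have hfin : (F.card : ℝ) * (d + 1) ≤ ε / 2 * n := by
    have h1 : ((F.card : ℝ) * (d + 1)) ^ 2 ≤ (ε / 2 * n) ^ 2 := by
      have h2 : (F.card : ℝ) ^ 2 ≤ C * n := by
        refine le_trans ?_ hmR
        rw [← sq_abs (mag c : ℝ)]
        exact pow_le_pow_left₀ (Nat.cast_nonneg _) hFR 2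
      have hd0 : (0 : ℝ) ≤ (d + 1) ^ 2 := by positivity
      have h3 := mul_le_mul_of_nonneg_right h2 hd0
      have h4 := mul_le_mul_of_nonneg_right hnN (Nat.cast_nonneg (α := ℝ) n)
      nlinarith
    exact (pow_le_pow_iff_left₀ (by positivity) (by positivity) two_ne_zero).1 h1
  linarith

lemma fld_card (G : SimpleGraph V) (c : V → Bool) (v : V) (b : Bool) :
    sg b * fld G c v = 2 * (univ.filter fun w => G.Adj v w ∧ c w = b).card - (nb G v).card := by
  have : ∀ w, sg b * (if G.Adj v w then sg (c w) else 0) =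
      2 * (if G.Adj v w ∧ c w = b then 1 else 0) - (if G.Adj v w then 1 else 0) := by
    intro w
    by_cases h : G.Adj v w
    · simp only [h, if_true, true_and]; cases c w <;> cases b <;> decide
    · simp [h]
  unfold fld nb
  rw [Finset.mul_sum, Finset.sum_congr rfl fun w _ => this w]
  rw [Finset.sum_sub_distrib, ← Finset.mul_sum, Finset.sum_boole, Finset.sum_boole]

lemma ncard_filter (p : V → Prop) : ({v | p v} : Set V).ncard = (univ.filter p).card := by
  rw [← Set.ncard_coe_finset]; simp

lemma fld_ncard (G : SimpleGraph V) (c : V → Bool) (v : V) (b : Bool) :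
    sg b * fld G c v = 2 * (({w | G.Adj v w ∧ c w = b} : Set V).ncard : ℤ) - (nb G v).card := by
  rw [fld_card, ncard_filter]
  congr!

lemma bisec {n : ℕ} (c : Fin n → Bool) (h : |mag c| ≤ 1) : 
  |(({v | c v = true} : Set (Fin n)).ncard : ℤ) -
    (({v | c v = false} : Set (Fin n)).ncard : ℤ)| ≤ 1 := by
  rw [ncard_filter, ncard_filter]
  convert h using 2
  have : ∀ v, sg (c v) = (if c v = true then 1 else 0) - (if c v = false then 1 else 0) := by
    intro v; cases c v <;> rfl
  unfold mag
  rw [Finset.sum_congr rfl fun v _ => this v]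
  rw [Finset.sum_sub_distrib, Finset.sum_boole, Finset.sum_boole]
  congr!

end AIB



/-- A red-blue colouring of `Fin n` is a *bisection* if its two colour classes
differ in size by at most 1. -/
def IsBisection {n : ℕ} (c : Fin n → Bool) : Prop :=
  |(({v | c v = true} : Set (Fin n)).ncard : ℤ) -
    (({v | c v = false} : Set (Fin n)).ncard : ℤ)| ≤ 1

/-- A vertex `v` is *internal* for the colouring `c` if at least half of its
neighbours have the same colour as `v`. -/
def InternalAt {n : ℕ} (G : SimpleGraph (Fin n)) (c : Fin n → Bool) (v : Fin n) : Prop :=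
  (G.neighborSet v).ncard ≤ 2 * ({w | G.Adj v w ∧ c w = c v} : Set (Fin n)).ncard

/-- A vertex `v` is *external* for the colouring `c` if at least half of its
neighbours have the opposite colour to `v`. -/
def ExternalAt {n : ℕ} (G : SimpleGraph (Fin n)) (c : Fin n → Bool) (v : Fin n) : Prop :=
  (G.neighborSet v).ncard ≤ 2 * ({w | G.Adj v w ∧ c w ≠ c v} : Set (Fin n)).ncard

/-- All but at most `ε * n` vertices are internal. -/
def AlmostInternal {n : ℕ} (G : SimpleGraph (Fin n)) (c : Fin n → Bool) (ε : ℝ) : Prop :=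
  ((({v | ¬ InternalAt G c v} : Set (Fin n)).ncard : ℝ)) ≤ ε * n

/-- All but at most `ε * n` vertices are external. -/
def AlmostExternal {n : ℕ} (G : SimpleGraph (Fin n)) (c : Fin n → Bool) (ε : ℝ) : Prop :=
  ((({v | ¬ ExternalAt G c v} : Set (Fin n)).ncard : ℝ)) ≤ ε * n

/-- For every `d` and `ε > 0`, every sufficiently large graph with maximum degree at
most `d` has an `ε`-almost-internal bisection and an `ε`-almost-external bisection. -/
theorem almost_internal_external_bisections (d : ℕ) (ε : ℝ) (hε : 0 < ε) :
    ∃ N : ℕ, ∀ n : ℕ, N ≤ n → ∀ G : SimpleGraph (Fin n),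
      (∀ v, (G.neighborSet v).ncard ≤ d) →
      (∃ c : Fin n → Bool, IsBisection c ∧ AlmostInternal G c ε) ∧
      (∃ c : Fin n → Bool, IsBisection c ∧ AlmostExternal G c ε) := by
  obtain ⟨N, hN⟩ := AIB.core d ε hε
  refine ⟨N, fun n hn G hG => ?_⟩
  have hnb : ∀ v, (G.neighborSet v).ncard = (AIB.nb G v).card := fun v =>
    AIB.ncard_filter (fun w => G.Adj v w)
  have hd : ∀ v, (AIB.nb G v).card ≤ d := fun v => by rw [← hnb]; exact hG v
  constructor
  · obtain ⟨c, h1, h2⟩ := hN n hn G hd 1 (by simp)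
    refine ⟨c, AIB.bisec c h1, ?_⟩
    unfold AlmostInternal
    rw [AIB.ncard_filter]
    refine le_trans (Nat.cast_le.2 (Finset.card_le_card ?_)) h2
    intro v hv
    simp only [AIB.badSet, Finset.mem_filter, Finset.mem_univ, true_and] at hv ⊢
    unfold InternalAt at hv
    rw [hnb] at hv
    unfold AIB.Bad
    rw [AIB.fld_ncard]
    omega
  · obtain ⟨c, h1, h2⟩ := hN n hn G hd (-1) (by simp)
    refine ⟨c, AIB.bisec c h1, ?_⟩
    unfold AlmostExternal
    rw [AIB.ncard_filter]
    refine le_trans (Nat.cast_le.2 (Finset.card_le_card ?_)) h2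
    intro v hv
    simp only [AIB.badSet, Finset.mem_filter, Finset.mem_univ, true_and] at hv ⊢
    unfold ExternalAt at hv
    have e : ({w | G.Adj v w ∧ c w ≠ c v} : Set (Fin n)) = {w | G.Adj v w ∧ c w = !(c v)} := by
      ext w; simp only [Set.mem_ofPred_eq]; cases c w <;> cases c v <;> simp
    rw [hnb, e] at hv
    unfold AIB.Bad
    have h3 := AIB.fld_ncard G c v (!(c v))
    rw [AIB.sg_not] at h3
    have h4 : -1 * (AIB.sg (c v) * AIB.fld G c v) = -AIB.sg (c v) * AIB.fld G c v := by ring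
    rw [h4, h3]
    omega
end

section
/- For any sequence (p_n) in [0,1] (allowed to depend on n), with high probability the binomial random digraph D ~ 𝔻(n, p_n) has a majority 3-colouring. -/
open MeasureTheory Filter

/-- Bernoulli measure on `Bool` with parameter `p`. -/
noncomputable def bernoulliM (p : ℝ) : Measure Bool :=
  (Real.toNNReal p) • Measure.dirac true + (Real.toNNReal (1 - p)) • Measure.dirac false

instance (p : ℝ) : IsFiniteMeasure (bernoulliM p) := by
  unfold bernoulliM; infer_instance

/-- The binomial random digraph measure `𝔻(n,p)`: each of the `n(n-1)` possible arcs
(ordered pairs of distinct vertices) is present independently with probability `p`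
(the diagonal entries of the matrix are ignored, via `DiAdj`). -/
noncomputable def diMeasure (n : ℕ) (p : ℝ) : Measure (Fin n → Fin n → Bool) :=
  Measure.pi fun _ => Measure.pi fun _ => bernoulliM p

/-- The arc relation of the digraph encoded by the matrix `A`. -/
def DiAdj {n : ℕ} (A : Fin n → Fin n → Bool) (v w : Fin n) : Prop :=
  v ≠ w ∧ A v w = true

/-- A vertex `v` is *majority-coloured* with respect to the colouring `c` if at most
half of its out-neighbours have the same colour as `v`. -/
def MajorityAt {n : ℕ} {α : Type*} (A : Fin n → Fin n → Bool) (c : Fin n → α) (v : Fin n) :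
    Prop :=
  2 * ({w | DiAdj A v w ∧ c w = c v} : Set (Fin n)).ncard ≤
    ({w | DiAdj A v w} : Set (Fin n)).ncard


section Peel
variable {V : Type*} [Fintype V] [DecidableEq V]

/-- out-neighbourhood -/
def outS (A : V → V → Bool) (v : V) : Finset V := Finset.univ.filter fun w => w ≠ v ∧ A v w = true

/-- finite version of the colouring property -/
def HasCol (A : V → V → Bool) : Prop :=
  ∃ c : V → Fin 3, ∀ v, 2 * ((outS A v).filter fun w => c w = c v).card ≤ (outS A v).card

/-- no dense in-core of size at most `m` -/
def NoCore (A : V → V → Bool) (m : ℕ) : Prop :=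
  ∀ S : Finset V, S.Nonempty → S.card ≤ m → ∃ x ∈ S, (S.filter fun u => x ∈ outS A u).card ≤ 1


lemma peel_aux (k : ℕ) : ∀ (B : Finset V), B.card = k → ∀ (out : V → Finset V) (D : V → ℕ)
    (_ : ∀ v, (out v).card ≤ D v) (_ : ∀ v, v ∉ out v)
    (_ : ∀ S ⊆ B, S.Nonempty → ∃ x ∈ S, (S.filter (fun u => x ∈ out u)).card ≤ 1)
    (c0 : V → Fin 3), ∃ c : V → Fin 3, (∀ v, v ∉ B → c v = c0 v) ∧
      ∀ v ∈ B, 2 * ((out v).filter (fun w => c w = c v)).card ≤ D v := by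
  induction k with
  | zero =>
    intro B hB out D _ _ _ c0
    rw [Finset.card_eq_zero] at hB
    subst hB
    exact ⟨c0, fun _ _ => rfl, by simp⟩
  | succ k ih =>
    intro B hB out D hD hx hp c0
    have hne : B.Nonempty := by rw [← Finset.card_pos]; omega
    obtain ⟨x, hxB, hx1⟩ := hp B (Finset.Subset.refl _) hne
    obtain ⟨c', h1, h2⟩ := ih (B.erase x) (by rw [Finset.card_erase_of_mem hxB]; omega)
      (fun v => (out v).erase x) D
      (fun v => (Finset.card_erase_le).trans (hD v))
      (fun v hv => hx v (Finset.mem_of_mem_erase hv))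
      (by
        intro S hS hSne
        obtain ⟨y, hy, hy1⟩ := hp S (hS.trans (Finset.erase_subset _ _)) hSne
        refine ⟨y, hy, le_trans (Finset.card_le_card ?_) hy1⟩
        intro u hu
        simp only [Finset.mem_filter] at hu ⊢
        exact ⟨hu.1, Finset.mem_of_mem_erase hu.2⟩) c0
    -- forbidden colour from the in-neighbour
    obtain ⟨q, hq⟩ : ∃ q : Fin 3, ∀ v ∈ B, x ∈ out v → c' v = q := by
      by_cases he : ∃ u ∈ B, x ∈ out u
      · obtain ⟨u, hu, hu'⟩ := he
        refine ⟨c' u, fun v hv hv' => ?_⟩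
        rw [Finset.card_le_one] at hx1
        rw [hx1 v (by simp [hv, hv']) u (by simp [hu, hu'])]
      · push Not at he
        exact ⟨0, fun v hv hv' => absurd hv' (he v hv)⟩
    obtain ⟨k1, hk1, hk2⟩ : ∃ k1 : Fin 3, k1 ≠ q ∧
        2 * ((out x).filter (fun w => c' w = k1)).card ≤ D x := by
      by_contra hcon
      push Not at hcon
      have hsum : ∑ i : Fin 3, ((out x).filter (fun w => c' w = i)).card = (out x).card :=
        (Finset.card_eq_sum_card_fiberwise (f := c') (s := out x) (t := Finset.univ)
          (by intro _ _; simp)).symm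
      rw [Fin.sum_univ_three] at hsum
      have := hD x
      have c0' := hcon 0
      have c1' := hcon 1
      have c2' := hcon 2
      have : q = 0 ∨ q = 1 ∨ q = 2 := by
        fin_cases q <;> simp
      rcases this with h | h | h <;> subst h <;> simp at c0' c1' c2' <;> omega
    refine ⟨Function.update c' x k1, ?_, ?_⟩
    · intro v hv
      have hvx : v ≠ x := fun h => hv (h ▸ hxB)
      rw [Function.update_of_ne hvx]
      exact h1 v (fun h => hv (Finset.mem_of_mem_erase h))
    · intro v hv
      by_cases hvx : v = x
      · subst hvx
        rw [Function.update_self]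
        refine le_trans (Nat.mul_le_mul_left 2 (Finset.card_le_card ?_)) hk2
        intro w hw
        simp only [Finset.mem_filter] at hw ⊢
        have : w ≠ v := fun h => hx v (h ▸ hw.1)
        rw [Function.update_of_ne this] at hw
        exact hw
      · rw [Function.update_of_ne hvx]
        refine le_trans (Nat.mul_le_mul_left 2 (Finset.card_le_card ?_))
          (h2 v (Finset.mem_erase.2 ⟨hvx, hv⟩))
        intro w hw
        simp only [Finset.mem_filter, Finset.mem_erase] at hw ⊢
        by_cases hwx : w = x
        · subst hwx
          rw [Function.update_self] at hw
          exact absurd (hw.2.trans (hq v hv hw.1)) hk1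
        · rw [Function.update_of_ne hwx] at hw
          exact ⟨⟨hwx, hw.1⟩, hw.2⟩

lemma hasCol_of (A : V → V → Bool) (B : Finset V) (c0 : V → Fin 3)
    (hB : NoCore A B.card)
    (h : ∀ u, u ∉ B → 2 * (((outS A u).filter fun w => c0 w = c0 u).card +
      ((outS A u).filter fun w => w ∈ B ∧ c0 w ≠ c0 u).card) ≤ (outS A u).card) :
    HasCol A := by
  obtain ⟨c, h1, h2⟩ := peel_aux B.card B rfl (outS A) (fun v => (outS A v).card)
    (fun _ => le_rfl) (fun v => by simp [outS])
    (fun S hS hne => hB S hne (Finset.card_le_card hS)) c0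
  refine ⟨c, fun v => ?_⟩
  by_cases hv : v ∈ B
  · exact h2 v hv
  · refine le_trans (Nat.mul_le_mul_left 2 ?_) (h v hv)
    refine le_trans (Finset.card_le_card ?_) (Finset.card_union_le _ _)
    intro w hw
    simp only [Finset.mem_filter, Finset.mem_union] at hw ⊢
    rw [h1 v hv] at hw
    by_cases hwB : w ∈ B
    · by_cases hc : c0 w = c0 v
      · exact Or.inl ⟨hw.1, hc⟩
      · exact Or.inr ⟨hw.1, hwB, hc⟩
    · rw [h1 w hwB] at hw
      exact Or.inl hw

lemma hasCol_of_noCore (A : V → V → Bool) (h : NoCore A (Fintype.card V)) : HasCol A :=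
  hasCol_of A Finset.univ (fun _ => 0) h (by simp)


/-- closure lemma -/
lemma closure_aux (act : V → Finset V → Prop)
    (hmono : ∀ u S T, S ⊆ T → act u S → act u T)
    (B0 : Finset V) (m : ℕ) (hm : B0.card ≤ m)
    (hno : ∀ S, B0 ⊆ S → S.card = m → ∃ u ∈ S \ B0, ¬ act u S) :
    ∃ B, B0 ⊆ B ∧ B.card < m ∧ ∀ u, u ∉ B → ¬ act u B := by
  classical
  let F : Finset (Finset V) := Finset.univ.filter fun B => B0 ⊆ B ∧ B.card ≤ m ∧
    ∀ u ∈ B \ B0, act u B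
  obtain ⟨B, hBF, hmax⟩ := F.exists_max_image Finset.card
    ⟨B0, by simp [F, hm]; intros; tauto⟩
  simp only [F, Finset.mem_filter, Finset.mem_univ, true_and] at hBF hmax
  obtain ⟨hB1, hB2, hB3⟩ := hBF
  have hlt : B.card < m := by
    refine lt_of_le_of_ne hB2 fun h => ?_
    obtain ⟨u, hu, hu'⟩ := hno B hB1 h
    exact hu' (hB3 u hu)
  refine ⟨B, hB1, hlt, fun u hu hact => ?_⟩
  have := hmax (insert u B) ⟨hB1.trans (Finset.subset_insert _ _),
    by rw [Finset.card_insert_of_notMem hu]; omega, by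
      intro v hv
      simp only [Finset.mem_sdiff, Finset.mem_insert] at hv
      rcases hv with ⟨rfl | hv, hv'⟩
      · exact hmono _ _ _ (Finset.subset_insert _ _) hact
      · exact hmono _ _ _ (Finset.subset_insert _ _) (hB3 v (Finset.mem_sdiff.2 ⟨hv, hv'⟩))⟩
  rw [Finset.card_insert_of_notMem hu] at this
  omega

end Peel


section Prob
variable {V Ω : Type*} [Fintype V] [DecidableEq V] [Fintype Ω]

/-- product weight -/
def pw (μ : Ω → ℝ) (A : V → Ω) : ℝ := ∏ v, μ (A v)
/-- Bernoulli weight -/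
def bw (p : ℝ) (b : Bool) : ℝ := if b then p else 1 - p
/-- row weight -/
def rowW (p : ℝ) (r : V → Bool) : ℝ := pw (bw p) r
/-- matrix weight -/
def matW (p : ℝ) (A : V → V → Bool) : ℝ := pw (rowW p) A

open Classical in
/-- finite weighted probability -/
noncomputable def Prw (μ : Ω → ℝ) (Q : Ω → Prop) : ℝ := ∑ ω, if Q ω then μ ω else 0


lemma pw_nonneg {μ : Ω → ℝ} (hμ : ∀ ω, 0 ≤ μ ω) (A : V → Ω) : 0 ≤ pw μ A :=
  Finset.prod_nonneg fun _ _ => hμ _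

lemma sum_prod_fun (F : V → Ω → ℝ) : ∑ A : V → Ω, ∏ v, F v (A v) = ∏ v, ∑ ω, F v ω := by
  classical
  rw [Finset.prod_univ_sum, Fintype.piFinset_univ]

lemma sum_pw (μ : Ω → ℝ) (h : ∑ ω, μ ω = 1) : ∑ A : V → Ω, pw μ A = 1 := by
  unfold pw
  rw [sum_prod_fun (fun _ => μ)]
  simp [h]

lemma sum_pw_mul (μ : Ω → ℝ) (F : V → Ω → ℝ) :
    ∑ A : V → Ω, pw μ A * ∏ v, F v (A v) = ∏ v, ∑ ω, μ ω * F v ω := by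
  unfold pw
  rw [← sum_prod_fun]
  simp [Finset.prod_mul_distrib]

lemma bw_nonneg {p : ℝ} (h0 : 0 ≤ p) (h1 : p ≤ 1) (b : Bool) : 0 ≤ bw p b := by
  unfold bw; split_ifs <;> linarith
lemma bw_sum (p : ℝ) : ∑ b, bw p b = 1 := by simp [bw]
lemma rowW_nonneg {p : ℝ} (h0 : 0 ≤ p) (h1 : p ≤ 1) (r : V → Bool) : 0 ≤ rowW p r :=
  pw_nonneg (bw_nonneg h0 h1) r
lemma rowW_sum (p : ℝ) : ∑ r : V → Bool, rowW p r = 1 := sum_pw _ (bw_sum p)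
lemma matW_nonneg {p : ℝ} (h0 : 0 ≤ p) (h1 : p ≤ 1) (r : V → V → Bool) : 0 ≤ matW p r :=
  pw_nonneg (rowW_nonneg h0 h1) r
lemma matW_sum (p : ℝ) : ∑ r : V → V → Bool, matW p r = 1 := sum_pw _ (rowW_sum p)

lemma Prw_mono {μ : Ω → ℝ} (hμ : ∀ ω, 0 ≤ μ ω) {Q R : Ω → Prop} (h : ∀ ω, Q ω → R ω) :
    Prw μ Q ≤ Prw μ R := by
  unfold Prw
  refine Finset.sum_le_sum fun ω _ => ?_
  by_cases hq : Q ω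
  · simp [hq, h ω hq]
  · by_cases hr : R ω <;> simp [hq, hr, hμ]

lemma Prw_nonneg {μ : Ω → ℝ} (hμ : ∀ ω, 0 ≤ μ ω) (Q : Ω → Prop) : 0 ≤ Prw μ Q := by
  unfold Prw
  refine Finset.sum_nonneg fun ω _ => ?_
  split_ifs <;> simp [hμ]

lemma Prw_or {μ : Ω → ℝ} (hμ : ∀ ω, 0 ≤ μ ω) (Q R : Ω → Prop) :
    Prw μ (fun ω => Q ω ∨ R ω) ≤ Prw μ Q + Prw μ R := by
  unfold Prw
  rw [← Finset.sum_add_distrib]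
  refine Finset.sum_le_sum fun ω _ => ?_
  by_cases hq : Q ω <;> by_cases hr : R ω <;> simp [hq, hr, hμ]

lemma Prw_compl {μ : Ω → ℝ} (h1 : ∑ ω, μ ω = 1) (Q : Ω → Prop) :
    Prw μ (fun ω => ¬ Q ω) = 1 - Prw μ Q := by
  unfold Prw
  rw [← h1, eq_sub_iff_add_eq, ← Finset.sum_add_distrib]
  refine Finset.sum_congr rfl fun ω _ => ?_
  by_cases hq : Q ω <;> simp [hq]

/-- A general comparison: probability bounded by weighted sum. -/
lemma Prw_le_sum {μ : Ω → ℝ} (hμ : ∀ ω, 0 ≤ μ ω) (Q : Ω → Prop) (f : Ω → ℝ)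
    (hf : ∀ ω, 0 ≤ f ω) (h : ∀ ω, Q ω → 1 ≤ f ω) : Prw μ Q ≤ ∑ ω, μ ω * f ω := by
  unfold Prw
  refine Finset.sum_le_sum fun ω _ => ?_
  by_cases hq : Q ω
  · simp only [hq, if_true]; nlinarith [h ω hq, hμ ω]
  · simp only [hq, if_false]; exact mul_nonneg (hμ _) (hf _)

lemma Prw_exists {ι : Type*} {μ : Ω → ℝ} (hμ : ∀ ω, 0 ≤ μ ω) (s : Finset ι) (Q : ι → Ω → Prop) :
    Prw μ (fun ω => ∃ i ∈ s, Q i ω) ≤ ∑ i ∈ s, Prw μ (Q i) := by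
  classical
  unfold Prw
  rw [Finset.sum_comm]
  refine Finset.sum_le_sum fun ω _ => ?_
  split_ifs with h
  · obtain ⟨i, hi, hq⟩ := h
    calc μ ω = (if Q i ω then μ ω else 0) := by simp [hq]
      _ ≤ _ := Finset.single_le_sum (f := fun i => if Q i ω then μ ω else 0)
        (fun j _ => by split_ifs <;> simp [hμ]) hi
  · exact Finset.sum_nonneg fun j _ => by split_ifs <;> simp [hμ]

lemma Prw_eq_sum (μ : Ω → ℝ) (Q : Ω → Prop) [DecidablePred Q] :
    Prw μ Q = ∑ ω, μ ω * (if Q ω then 1 else 0) := by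
  unfold Prw
  refine Finset.sum_congr rfl fun ω _ => ?_
  by_cases hq : Q ω <;> simp [hq]

/-- independent rows -/
lemma Prw_pw_forall (μ : Ω → ℝ) (h1 : ∑ ω, μ ω = 1) (S : Finset V) (R : V → Ω → Prop) :
    Prw (pw μ) (fun A : V → Ω => ∀ v ∈ S, R v (A v)) = ∏ v ∈ S, Prw μ (R v) := by
  classical
  rw [Prw_eq_sum]
  have h : ∀ A : V → Ω, (if ∀ v ∈ S, R v (A v) then (1:ℝ) else 0) =
      ∏ v, (if v ∈ S → R v (A v) then (1:ℝ) else 0) := by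
    intro A
    rw [Finset.prod_ite_zero]
    simp
  simp_rw [h]
  rw [sum_pw_mul μ (fun v ω => if v ∈ S → R v ω then (1:ℝ) else 0)]
  rw [← Finset.prod_subset (Finset.subset_univ S)]
  · refine Finset.prod_congr rfl fun v hv => ?_
    rw [Prw_eq_sum]
    simp [hv]
  · intro v _ hv
    simp [hv, h1]

lemma row_sum_prod (p : ℝ) (G : V → Bool → ℝ) :
    ∑ r : V → Bool, rowW p r * ∏ x, G x (r x) = ∏ x, (p * G x true + (1 - p) * G x false) := by
  unfold rowW
  rw [sum_pw_mul]
  simp [bw]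

lemma row_exact (p : ℝ) (W Q : Finset V) (h : Q ⊆ W) :
    Prw (rowW p) (fun r : V → Bool => ∀ x ∈ W, r x = decide (x ∈ Q)) =
      p ^ Q.card * (1 - p) ^ (W.card - Q.card) := by
  unfold rowW
  rw [Prw_pw_forall (bw p) (bw_sum p) W (fun x b => b = decide (x ∈ Q))]
  have : ∀ x, Prw (bw p) (fun b => b = decide (x ∈ Q)) = if x ∈ Q then p else 1 - p := by
    intro x
    by_cases hx : x ∈ Q <;> simp [Prw, hx, bw]
  simp_rw [this]
  rw [Finset.prod_ite]
  simp only [Finset.prod_const]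
  congr 2
  · congr 1; ext x; simp; exact fun hx => h hx
  · rw [← Finset.card_sdiff_of_subset h]; congr 1; ext x; simp

lemma row_all (p : ℝ) (Q : Finset V) :
    Prw (rowW p) (fun r : V → Bool => ∀ x ∈ Q, r x = true) = p ^ Q.card := by
  have := row_exact p Q Q (Finset.Subset.refl _)
  simp only [Nat.sub_self, pow_zero, mul_one] at this
  rw [← this]
  congr 1
  ext r
  exact forall₂_congr fun x hx => by simp [hx]

lemma Prw_transpose (p : ℝ) (Q : (V → V → Bool) → Prop) :
    Prw (matW p) (fun A => Q fun i j => A j i) = Prw (matW p) Q := by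
  unfold Prw
  let e : (V → V → Bool) ≃ (V → V → Bool) := Equiv.piComm fun _ _ => Bool
  refine Fintype.sum_equiv e _ _ fun A => ?_
  have : matW p (e A) = matW p A := by
    unfold matW rowW pw
    rw [Finset.prod_comm]
    rfl
  rw [this]
  rfl

/-- union bound for two in-neighbours -/
lemma row_two_le {p : ℝ} (h0 : 0 ≤ p) (h1 : p ≤ 1) (T : Finset V) :
    Prw (rowW p) (fun r : V → Bool => 2 ≤ (T.filter fun u => r u = true).card) ≤
      (T.card : ℝ) ^ 2 * p ^ 2 / 2 := by
  have step : Prw (rowW p) (fun r : V → Bool => 2 ≤ (T.filter fun u => r u = true).card) ≤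
      Prw (rowW p) (fun r : V → Bool => ∃ Q ∈ T.powersetCard 2, ∀ x ∈ Q, r x = true) := by
    refine Prw_mono (rowW_nonneg h0 h1) fun r hr => ?_
    obtain ⟨Q, hQ, hc⟩ := Finset.exists_subset_card_eq hr
    exact ⟨Q, Finset.mem_powersetCard.2 ⟨hQ.trans (Finset.filter_subset _ _), hc⟩,
      fun x hx => (Finset.mem_filter.1 (hQ hx)).2⟩
  refine step.trans ((Prw_exists (rowW_nonneg h0 h1) _ _).trans ?_)
  have : ∀ Q ∈ T.powersetCard 2, Prw (rowW p) (fun r : V → Bool => ∀ x ∈ Q, r x = true) = p ^ 2 := by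
    intro Q hQ
    rw [row_all, (Finset.mem_powersetCard.1 hQ).2]
  rw [Finset.sum_congr rfl this, Finset.sum_const, Finset.card_powersetCard, nsmul_eq_mul]
  have : ((T.card.choose 2 : ℕ) : ℝ) ≤ (T.card : ℝ) ^ 2 / 2 := by
    have := Nat.choose_le_pow_div (α := ℝ) 2 T.card
    simpa using this
  nlinarith [sq_nonneg p]

/-- exact formula -/
lemma row_two_eq (p : ℝ) (T : Finset V) :
    Prw (rowW p) (fun r : V → Bool => 2 ≤ (T.filter fun u => r u = true).card) =
      1 - (1 - p) ^ T.card - T.card * p * (1 - p) ^ (T.card - 1) := by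
  classical
  have hc := Prw_compl (rowW_sum (V := V) p)
    (fun r : V → Bool => 2 ≤ (T.filter fun u => r u = true).card)
  have h2 : Prw (rowW p) (fun r : V → Bool => ¬ 2 ≤ (T.filter fun u => r u = true).card) =
     Prw (rowW p) (fun r : V → Bool => ∀ x ∈ T, r x = decide (x ∈ (∅ : Finset V))) +
      ∑ y ∈ T, Prw (rowW p) (fun r : V → Bool => ∀ x ∈ T, r x = decide (x ∈ ({y} : Finset V))) := by
    unfold Prw
    rw [Finset.sum_comm, ← Finset.sum_add_distrib]
    refine Finset.sum_congr rfl fun r _ => ?_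
    beta_reduce
    by_cases hr0 : (T.filter fun u => r u = true) = ∅
    · have e0 : ∀ x ∈ T, r x = false := by
        intro x hx
        have := Finset.filter_eq_empty_iff.1 hr0 hx
        simpa using this
      rw [hr0]
      rw [if_pos (by simp), if_pos (by simpa using e0), Finset.sum_eq_zero]
      · ring
      · intro y hy
        rw [if_neg]
        intro h
        have := h y hy
        simp [e0 y hy] at this
    · by_cases hr1 : ∃ y, (T.filter fun u => r u = true) = {y}
      · obtain ⟨y, hy⟩ := hr1
        have hyT : y ∈ T ∧ r y = true := by
          have : y ∈ (T.filter fun u => r u = true) := by rw [hy]; simp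
          simpa using this
        have hall : ∀ x ∈ T, r x = decide (x ∈ ({y} : Finset V)) := by
          intro x hx
          rw [← hy]
          simp [hx]
        rw [hy, if_pos (by simp), if_neg, Finset.sum_eq_single y]
        · rw [if_pos hall]; ring
        · intro z hz hzy
          rw [if_neg]
          intro h
          have h3 := h y hyT.1
          rw [hyT.2] at h3
          simp at h3
          exact hzy h3.symm
        · intro h; exact absurd hyT.1 h
        · intro h
          have := h y hyT.1
          simp [hyT.2] at this
      · have h2 : 2 ≤ (T.filter fun u => r u = true).card := by
          by_contra hlt
          have : (T.filter fun u => r u = true).card = 0 ∨ (T.filter fun u => r u = true).card = 1 := by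
            omega
          rcases this with h | h
          · exact hr0 (Finset.card_eq_zero.1 h)
          · exact hr1 (Finset.card_eq_one.1 h)
        rw [if_neg (not_not.2 h2), if_neg, Finset.sum_eq_zero]
        · ring
        · intro y hy
          rw [if_neg]
          intro h
          apply hr1
          refine ⟨y, ?_⟩
          ext x
          simp only [Finset.mem_filter, Finset.mem_singleton]
          constructor
          · rintro ⟨hx, hrx⟩
            have := h x hx
            rw [hrx] at this
            simpa using this.symm
          · rintro rfl
            exact ⟨hy, by simpa using h x hy⟩
        · intro h
          apply hr0
          rw [Finset.filter_eq_empty_iff]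
          intro x hx
          simp [h x hx]
  rw [h2, row_exact p T ∅ (by simp)] at hc
  rw [Finset.sum_congr rfl (fun y hy => row_exact p T {y} (by simpa using hy))] at hc
  simp at hc
  linarith

/-- Probability of a core of size `s`. -/
lemma core_bound {p : ℝ} (h0 : 0 ≤ p) (h1 : p ≤ 1) (s : ℕ) (b : ℝ)
    (hb : ∀ T : Finset V, T.card = s - 1 →
      Prw (rowW p) (fun r : V → Bool => 2 ≤ (T.filter fun u => r u = true).card) ≤ b) :
    Prw (matW p) (fun A : V → V → Bool => ∃ S ∈ (Finset.univ : Finset V).powersetCard s,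
      ∀ x ∈ S, ¬ (S.filter fun u => x ∈ outS A u).card ≤ 1) ≤
      (Fintype.card V).choose s * b ^ s := by
  refine (Prw_exists (matW_nonneg h0 h1) _ _).trans ?_
  rw [← Finset.card_univ, ← Finset.card_powersetCard, ← nsmul_eq_mul]
  refine Finset.sum_le_card_nsmul _ _ _ fun S hS => ?_
  have hS' := (Finset.mem_powersetCard.1 hS).2
  rw [← Prw_transpose]
  unfold matW
  have hre : ∀ A : V → V → Bool,
      (∀ x ∈ S, ¬ (S.filter fun u => x ∈ outS (fun i j => A j i) u).card ≤ 1) ↔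
      ∀ x ∈ S, 2 ≤ ((S.erase x).filter fun u => A x u = true).card := by
    intro A
    refine forall₂_congr fun x hx => ?_
    have : (S.filter fun u => x ∈ outS (fun i j => A j i) u) =
        ((S.erase x).filter fun u => A x u = true) := by
      ext u
      simp only [outS, Finset.mem_filter, Finset.mem_univ, true_and, Finset.mem_erase]
      constructor
      · rintro ⟨a, b, c⟩; exact ⟨⟨b.symm, a⟩, c⟩
      · rintro ⟨⟨b, a⟩, c⟩; exact ⟨a, b.symm, c⟩
    rw [this]; omega
  simp_rw [hre]
  rw [Prw_pw_forall (rowW p) (rowW_sum p) S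
    (fun x r => 2 ≤ ((S.erase x).filter fun u => r u = true).card), ← hS']
  refine (Finset.prod_le_prod (fun x _ => Prw_nonneg (rowW_nonneg h0 h1) _)
    (fun x hx => hb (S.erase x) (by rw [Finset.card_erase_of_mem hx, hS']))).trans ?_
  simp

lemma noCore_bound {p : ℝ} (h0 : 0 ≤ p) (h1 : p ≤ 1) (m : ℕ) (b : ℕ → ℝ)
    (hb : ∀ s ∈ Finset.Icc 1 m, ∀ T : Finset V, T.card = s - 1 →
      Prw (rowW p) (fun r : V → Bool => 2 ≤ (T.filter fun u => r u = true).card) ≤ b s) :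
    Prw (matW p) (fun A : V → V → Bool => ¬ NoCore A m) ≤
      ∑ s ∈ Finset.Icc 1 m, (Fintype.card V).choose s * b s ^ s := by
  have : Prw (matW p) (fun A : V → V → Bool => ¬ NoCore A m) ≤
    Prw (matW p) (fun A : V → V → Bool => ∃ s ∈ Finset.Icc 1 m,
      ∃ S ∈ (Finset.univ : Finset V).powersetCard s,
      ∀ x ∈ S, ¬ (S.filter fun u => x ∈ outS A u).card ≤ 1) := by
    refine Prw_mono (matW_nonneg h0 h1) fun A hA => ?_
    unfold NoCore at hA
    push Not at hA
    obtain ⟨S, hS, hm, h⟩ := hA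
    exact ⟨S.card, Finset.mem_Icc.2 ⟨hS.card_pos, hm⟩, S,
      Finset.mem_powersetCard.2 ⟨Finset.subset_univ _, rfl⟩, fun x hx => by
        have := h x hx; omega⟩
  refine this.trans ((Prw_exists (matW_nonneg h0 h1) _ _).trans ?_)
  exact Finset.sum_le_sum fun s hs => core_bound h0 h1 s (b s) (hb s hs)

end Prob


lemma bernoulliM_singleton (p : ℝ) (b : Bool) : bernoulliM p {b} = ENNReal.ofReal (bw p b) := by
  unfold bernoulliM bw
  cases b <;> simp [ENNReal.ofReal] <;> rfl

lemma diMeasure_singleton {n : ℕ} {p : ℝ} (h0 : 0 ≤ p) (h1 : p ≤ 1) (A : Fin n → Fin n → Bool) :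
    diMeasure n p {A} = ENNReal.ofReal (matW p A) := by
  unfold diMeasure matW pw
  rw [Measure.pi_singleton]
  rw [ENNReal.ofReal_prod_of_nonneg (fun v _ => rowW_nonneg h0 h1 _)]
  refine Finset.prod_congr rfl fun v _ => ?_
  rw [Measure.pi_singleton]
  unfold rowW pw
  rw [ENNReal.ofReal_prod_of_nonneg (fun v _ => bw_nonneg h0 h1 _)]
  exact Finset.prod_congr rfl fun w _ => bernoulliM_singleton p _

lemma diMeasure_eq {n : ℕ} {p : ℝ} (h0 : 0 ≤ p) (h1 : p ≤ 1) (S : Set (Fin n → Fin n → Bool)) :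
    diMeasure n p S = ENNReal.ofReal (Prw (matW p) (fun A => A ∈ S)) := by
  classical
  have hS : S = ((Finset.univ.filter fun A => A ∈ S : Finset (Fin n → Fin n → Bool)) :
    Set (Fin n → Fin n → Bool)) := by ext; simp
  conv_lhs => rw [hS]
  rw [← sum_measure_singleton]
  simp_rw [diMeasure_singleton h0 h1]
  rw [← ENNReal.ofReal_sum_of_nonneg (fun A _ => matW_nonneg h0 h1 A)]
  congr 1
  unfold Prw
  rw [Finset.sum_filter]

lemma hasCol_iff {n : ℕ} (A : Fin n → Fin n → Bool) :
    (∃ c : Fin n → Fin 3, ∀ v, MajorityAt A c v) ↔ HasCol A := by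
  unfold HasCol
  refine exists_congr fun c => forall_congr' fun v => ?_
  unfold MajorityAt
  have e1 : ({w | DiAdj A v w ∧ c w = c v} : Set (Fin n)) =
      (((outS A v).filter fun w => c w = c v : Finset (Fin n)) : Set (Fin n)) := by
    ext w; simp [outS, DiAdj, @eq_comm _ v w, and_assoc]
  have e2 : ({w | DiAdj A v w} : Set (Fin n)) = ((outS A v : Finset (Fin n)) : Set (Fin n)) := by
    ext w; simp [outS, DiAdj, @eq_comm _ v w]
  rw [e1, e2, Set.ncard_coe_finset, Set.ncard_coe_finset]

lemma final_reduction
    (H : ∀ ε : ℝ, 0 < ε → ∃ n0 : ℕ, ∀ n ≥ n0, ∀ p : ℝ, 0 ≤ p → p ≤ 1 →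
      Prw (matW p) (fun A : Fin n → Fin n → Bool => ¬ HasCol A) ≤ ε)
    (p : ℕ → ℝ) (hp : ∀ n, p n ∈ Set.Icc (0 : ℝ) 1) :
    Tendsto (fun n => diMeasure n (p n)
        {A | ∃ c : Fin n → Fin 3, ∀ v, MajorityAt A c v})
      atTop (nhds 1) := by
  have e : ∀ n, diMeasure n (p n) {A | ∃ c : Fin n → Fin 3, ∀ v, MajorityAt A c v} =
      ENNReal.ofReal (1 - Prw (matW (p n)) (fun A : Fin n → Fin n → Bool => ¬ HasCol A)) := by
    intro n
    rw [diMeasure_eq (hp n).1 (hp n).2, Prw_compl (matW_sum _)]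
    simp_rw [Set.mem_ofPred_eq, hasCol_iff]
    congr 1; ring
  simp_rw [e]
  have : Tendsto (fun n => Prw (matW (p n)) (fun A : Fin n → Fin n → Bool => ¬ HasCol A)) atTop
      (nhds 0) := by
    rw [Metric.tendsto_atTop]
    intro ε hε
    obtain ⟨n0, h⟩ := H (ε / 2) (by linarith)
    refine ⟨n0, fun n hn => ?_⟩
    have h3 := h n hn (p n) (hp n).1 (hp n).2
    rw [Real.dist_eq, sub_zero, abs_of_nonneg (Prw_nonneg (matW_nonneg (hp n).1 (hp n).2) _)]
    linarith
  have h2 := (ENNReal.continuous_ofReal.tendsto _).comp (tendsto_const_nhds (x := (1:ℝ)) |>.sub this)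
  simpa [Function.comp_def] using h2

/-- dense regime -/
lemma dense_row {n : ℕ} {p : ℝ} (h0 : 0 ≤ p) (h1 : p ≤ 1) (hn : 1 ≤ n)
    (c : Fin n → Fin 3) (v : Fin n)
    (hc : 3 * (Finset.univ.filter fun w => w ≠ v ∧ c w = c v).card ≤ n - 1) :
    Prw (rowW p) (fun r : Fin n → Bool =>
      ¬ 2 * (Finset.univ.filter fun w => w ≠ v ∧ r w = true ∧ c w = c v).card ≤
        (Finset.univ.filter fun w => w ≠ v ∧ r w = true).card) ≤
      Real.exp (-(2 / 35) * p * (n - 1)) := by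
  let g : Fin n → ℝ := fun w => if w = v then 1 else if c w = c v then 7 / 5 else 5 / 7
  have hg : ∀ w, 0 < g w := by intro w; simp only [g]; split_ifs <;> norm_num
  have hle := Prw_le_sum (rowW_nonneg h0 h1) (fun r : Fin n → Bool =>
      ¬ 2 * (Finset.univ.filter fun w => w ≠ v ∧ r w = true ∧ c w = c v).card ≤
        (Finset.univ.filter fun w => w ≠ v ∧ r w = true).card)
      (fun r => ∏ w, if r w then g w else 1)
      (fun r => Finset.prod_nonneg fun w _ => by split_ifs; exacts [(hg w).le, zero_le_one])
      (by
        intro r hr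
        have e : ∏ w, (if r w then g w else 1) =
            (7/5 : ℝ) ^ (Finset.univ.filter fun w => w ≠ v ∧ r w = true ∧ c w = c v).card *
            (5/7 : ℝ) ^ (Finset.univ.filter fun w => w ≠ v ∧ r w = true ∧ c w ≠ c v).card := by
          have : ∀ w, (if r w then g w else 1) =
            (if w ≠ v ∧ r w = true ∧ c w = c v then (7/5 : ℝ) else 1) *
            (if w ≠ v ∧ r w = true ∧ c w ≠ c v then (5/7 : ℝ) else 1) := by
            intro w
            simp only [g]
            by_cases h1 : w = v <;> by_cases h2 : r w = true <;> by_cases h3 : c w = c v <;>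
              simp [h1, h2, h3]
          simp_rw [this]
          rw [Finset.prod_mul_distrib, Finset.prod_ite, Finset.prod_ite]
          simp [div_pow]
        rw [e]
        have hsum : (Finset.univ.filter fun w => w ≠ v ∧ r w = true ∧ c w = c v).card +
           (Finset.univ.filter fun w => w ≠ v ∧ r w = true ∧ c w ≠ c v).card =
            (Finset.univ.filter fun w => w ≠ v ∧ r w = true).card := by
          rw [← Finset.card_filter_add_card_filter_not (s := Finset.univ.filter fun w => w ≠ v ∧ r w = true) (fun w => c w = c v)]
          simp only [Finset.filter_filter, and_assoc, ne_eq]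
        set a := (Finset.univ.filter fun w => w ≠ v ∧ r w = true ∧ c w = c v).card
        set b := (Finset.univ.filter fun w => w ≠ v ∧ r w = true ∧ c w ≠ c v).card
        have hab : b ≤ a := by omega
        calc (1:ℝ) = (7/5)^b * (5/7)^b := by rw [← mul_pow]; norm_num
          _ ≤ (7/5)^a * (5/7)^b := by
            gcongr
            norm_num)
  refine hle.trans ?_
  rw [row_sum_prod p (fun w b => if b then g w else 1)]
  simp only [if_true, Bool.false_eq_true, if_false, mul_one]
  have hb : ∀ w, p * g w + (1 - p) ≤ Real.exp (p * (g w - 1)) := by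
    intro w
    have := Real.add_one_le_exp (p * (g w - 1))
    linarith
  refine (Finset.prod_le_prod (fun w _ => by nlinarith [hg w, mul_nonneg h0 (hg w).le]) (fun w _ => hb w)).trans ?_
  rw [← Real.exp_sum, Real.exp_le_exp, ← Finset.mul_sum]
  have hs : ∑ w, (g w - 1) = (2/5) * ((Finset.univ.filter fun w => w ≠ v ∧ c w = c v).card : ℝ)
      - (2/7) * ((Finset.univ.filter fun w => w ≠ v ∧ c w ≠ c v).card : ℝ) := by
    have : ∀ w, g w - 1 = (2/5) * (if w ≠ v ∧ c w = c v then (1:ℝ) else 0) -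
      (2/7) * (if w ≠ v ∧ c w ≠ c v then (1:ℝ) else 0) := by
      intro w
      simp only [g]
      by_cases h1 : w = v <;> by_cases h3 : c w = c v <;> simp [h1, h3] <;> norm_num
    simp_rw [this]
    rw [Finset.sum_sub_distrib, ← Finset.mul_sum, ← Finset.mul_sum]
    simp
  have hcard : (Finset.univ.filter fun w => w ≠ v ∧ c w = c v).card +
     (Finset.univ.filter fun w => w ≠ v ∧ c w ≠ c v).card = n - 1 := by
    rw [← Finset.filter_filter, ← Finset.filter_filter, Finset.card_filter_add_card_filter_not,
      Finset.filter_ne', Finset.card_erase_of_mem (Finset.mem_univ _)]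
    simp
  rw [hs]
  set a := (Finset.univ.filter fun w => w ≠ v ∧ c w = c v).card
  set b := (Finset.univ.filter fun w => w ≠ v ∧ c w ≠ c v).card
  have h3 : 3 * (a:ℝ) ≤ n - 1 := by
    have : ((3 * a : ℕ) : ℝ) ≤ ((n - 1 : ℕ) : ℝ) := by exact_mod_cast hc
    rw [Nat.cast_sub hn] at this
    push_cast at this; exact this
  have h4 : (a:ℝ) + b = n - 1 := by
    have : ((a + b : ℕ) : ℝ) = ((n - 1 : ℕ) : ℝ) := by exact_mod_cast hcard
    rw [Nat.cast_sub hn] at this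
    push_cast at this; exact this
  nlinarith

/-- colouring modulo 3 -/
def col3 {n : ℕ} (w : Fin n) : Fin 3 := ⟨w.val % 3, Nat.mod_lt _ (by norm_num)⟩

lemma mod3_count {n : ℕ} (v : Fin n) :
    3 * (Finset.univ.filter fun w : Fin n => w ≠ v ∧ col3 w = col3 v).card ≤ n - 1 := by
  -- inject into range
  have hmod : ∀ w : Fin n, col3 w = col3 v ↔ w.val % 3 = v.val % 3 := by
    intro w
    simp [col3]
  simp_rw [hmod]
  have h : ((Finset.univ.filter fun w : Fin n => w ≠ v ∧ w.val % 3 = v.val % 3) ×ˢ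
      (Finset.univ : Finset (Fin 3))).card ≤ ((Finset.range n).erase v.val).card := by
    refine Finset.card_le_card_of_injOn
      (fun q => if q.1.val < v.val then q.1.val + q.2.val else q.1.val - q.2.val) ?_ ?_
    · rintro ⟨w, i⟩ hq
      simp only [Finset.coe_product, Set.mem_prod, Finset.mem_coe, Finset.mem_filter,
        Finset.mem_univ, true_and, and_true] at hq
      rw [Finset.mem_coe, Finset.mem_erase, Finset.mem_range]
      have hne : w.val ≠ v.val := fun h => hq.1 (Fin.ext h)
      have := i.isLt
      have := v.isLt
      have := w.isLt
      have := hq.2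
      dsimp only
      split_ifs with h <;> omega
    · rintro ⟨w, i⟩ hq ⟨w', i'⟩ hq' heq
      simp only [Finset.coe_product, Set.mem_prod, Finset.mem_coe, Finset.mem_filter,
        Finset.mem_univ, true_and, and_true] at hq hq'
      have hne : w.val ≠ v.val := fun h => hq.1 (Fin.ext h)
      have hne' : w'.val ≠ v.val := fun h => hq'.1 (Fin.ext h)
      have := i.isLt
      have := i'.isLt
      have hv := heq
      dsimp only at hv
      have key : w.val = w'.val ∧ i.val = i'.val := by
        split_ifs at hv with h h' h' <;> omega
      exact Prod.ext (Fin.ext key.1) (Fin.ext key.2)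
  rw [Finset.card_product, Finset.card_erase_of_mem (Finset.mem_range.2 v.isLt)] at h
  simp at h
  simp
  omega

lemma dense_regime {n : ℕ} {p : ℝ} (h0 : 0 ≤ p) (h1 : p ≤ 1) (hn : 1 ≤ n) :
    Prw (matW p) (fun A : Fin n → Fin n → Bool => ¬ HasCol A) ≤
      n * Real.exp (-(2 / 35) * p * (n - 1)) := by
  let c : Fin n → Fin 3 := col3
  have : Prw (matW p) (fun A : Fin n → Fin n → Bool => ¬ HasCol A) ≤
    Prw (matW p) (fun A : Fin n → Fin n → Bool => ∃ v ∈ (Finset.univ : Finset (Fin n)),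
      ∀ u ∈ ({v} : Finset (Fin n)), ¬ 2 * (Finset.univ.filter fun w => w ≠ u ∧ A u w = true ∧ c w = c u).card ≤
        (Finset.univ.filter fun w => w ≠ u ∧ A u w = true).card) := by
    refine Prw_mono (matW_nonneg h0 h1) fun A hA => ?_
    by_contra hcon
    push Not at hcon
    apply hA
    refine ⟨c, fun v => ?_⟩
    have := hcon v (Finset.mem_univ _)
    simp only [Finset.mem_singleton, exists_eq_left] at this
    unfold outS
    rw [Finset.filter_filter]
    simpa only [and_assoc] using this
  refine this.trans ((Prw_exists (matW_nonneg h0 h1) _ _).trans ?_)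
  have hb : ∀ v ∈ (Finset.univ : Finset (Fin n)), Prw (matW p) (fun A : Fin n → Fin n → Bool =>
      ∀ u ∈ ({v} : Finset (Fin n)), ¬ 2 * (Finset.univ.filter fun w => w ≠ u ∧ A u w = true ∧ c w = c u).card ≤
        (Finset.univ.filter fun w => w ≠ u ∧ A u w = true).card) ≤
        Real.exp (-(2 / 35) * p * (n - 1)) := by
    intro v _
    unfold matW
    rw [Prw_pw_forall (rowW p) (rowW_sum p) {v} (fun u r => ¬ 2 * (Finset.univ.filter fun w => w ≠ u ∧ r w = true ∧ c w = c u).card ≤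
        (Finset.univ.filter fun w => w ≠ u ∧ r w = true).card)]
    rw [Finset.prod_singleton]
    exact dense_row h0 h1 hn c v (mod3_count v)
  refine (Finset.sum_le_card_nsmul _ _ _ hb).trans ?_
  simp


/-- exact two-or-more probability -/
noncomputable def bex (p : ℝ) (s : ℕ) : ℝ :=
  1 - (1 - p) ^ (s - 1) - ((s - 1 : ℕ) : ℝ) * p * (1 - p) ^ (s - 1 - 1)

lemma bex_le_g {p y : ℝ} (h0 : 0 ≤ p) (h1 : p < 1) (s : ℕ) (hy : (s : ℝ) * p / (1 - p) ≤ y) :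
    bex p s ≤ 1 - Real.exp (-y) * (1 + y) := by
  have hq : 0 < 1 - p := by linarith
  set j := s - 1 with hj
  have hj' : (j : ℝ) ≤ s := by exact_mod_cast Nat.sub_le _ _
  set z := (j : ℝ) * p / (1 - p) with hz
  have hz0 : 0 ≤ z := by positivity
  have hzy : z ≤ y := le_trans (by rw [hz]; gcongr) hy
  have e1 : (1 - p) ^ j + (j : ℝ) * p * (1 - p) ^ (j - 1) = (1 - p) ^ j * (1 + z) := by
    rcases Nat.eq_zero_or_pos j with h | h
    · rw [hz, h]; simp
    · obtain ⟨i, hi⟩ : ∃ i, j = i + 1 := ⟨j - 1, by omega⟩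
      rw [hz, hi]
      simp only [Nat.add_sub_cancel, pow_succ]
      field_simp
  have e2 : Real.exp (-z) ≤ (1 - p) ^ j := by
    have : Real.exp (-(p / (1 - p))) ≤ 1 - p := by
      rw [Real.exp_neg]
      rw [inv_le_comm₀ (Real.exp_pos _) hq]
      have := Real.add_one_le_exp (p / (1 - p))
      refine le_trans (le_of_eq ?_) this
      field_simp; ring
    calc Real.exp (-z) = Real.exp (-(p / (1 - p))) ^ j := by
          rw [← Real.exp_nat_mul, hz]; congr 1; ring
      _ ≤ _ := pow_le_pow_left₀ (Real.exp_pos _).le this _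
  have e3 : Real.exp (-y) * (1 + y) ≤ Real.exp (-z) * (1 + z) := by
    have h4 : 1 + y ≤ Real.exp (y - z) * (1 + z) := by
      have := Real.add_one_le_exp (y - z)
      nlinarith
    calc Real.exp (-y) * (1 + y) ≤ Real.exp (-y) * (Real.exp (y - z) * (1 + z)) := by gcongr
      _ = Real.exp (-z) * (1 + z) := by
        rw [← mul_assoc, ← Real.exp_add]; congr 2; ring
  unfold bex
  rw [← hj]
  have : Real.exp (-z) * (1 + z) ≤ (1 - p) ^ j * (1 + z) := by gcongr
  linarith

/-- Taylor lower bound for `exp (-y/2)` -/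
noncomputable def tay (y : ℝ) : ℝ :=
  1 - y/2 + (y/2)^2/2 - (y/2)^3/6 + (y/2)^4/24 - (y/2)^5/120 + (y/2)^6/720 - (y/2)^7/5040
    - (y/2)^8 * (9 / (40320 * 8))

lemma g_num {y G : ℝ} (hy0 : 0 ≤ y) (hy2 : y ≤ 2) (hP : 0 ≤ tay y)
    (h : 1 - tay y ^ 2 * (1 + y) ≤ G) :
    1 - Real.exp (-y) * (1 + y) ≤ G := by
  have hb := Real.exp_bound (x := -(y/2)) (n := 8) (by rw [abs_neg, abs_of_nonneg]; linarith; linarith)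
    (by norm_num)
  rw [abs_neg, abs_of_nonneg (show (0:ℝ) ≤ y/2 by linarith)] at hb
  have hb2 := (abs_le.1 hb).1
  simp [Finset.sum_range_succ, Nat.factorial] at hb2
  have h3 : tay y ≤ Real.exp (-(y/2)) := by
    unfold tay; ring_nf at hb2 ⊢; linarith
  have h4 : tay y ^ 2 ≤ Real.exp (-y) := by
    calc tay y ^ 2 ≤ Real.exp (-(y/2)) ^ 2 := pow_le_pow_left₀ hP h3 2
      _ = Real.exp (-y) := by rw [← Real.exp_nat_mul]; congr 1; push_cast; ring
  have : tay y ^ 2 * (1 + y) ≤ Real.exp (-y) * (1 + y) := by gcongr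
  linarith

lemma choose_mul_pow_le (n s : ℕ) {x : ℝ} (hx : 0 ≤ x) : (n.choose s : ℝ) * x ^ s ≤ (1 + x) ^ n := by
  rcases le_or_gt s n with h | h
  · rw [add_comm, add_pow]
    have := Finset.single_le_sum (f := fun m => x ^ m * 1 ^ (n - m) * (n.choose m : ℝ))
      (s := Finset.range (n+1)) (fun i _ => by positivity) (Finset.mem_range.2 (Nat.lt_succ_of_le h))
    simp only [one_pow, mul_one] at this ⊢
    linarith
  · rw [Nat.choose_eq_zero_of_lt h]; simp; positivity

lemma low_int {n s k1 K : ℕ} {x G : ℝ} (hG0 : 0 ≤ G) (hGx : G ≤ x) (hx : 0 < x)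
    (hk : k1 * n ≤ K * s) (hnum : (1 + x) ^ K * (G / x) ^ k1 ≤ 99 / 100) :
    ((n.choose s : ℝ) * G ^ s) ^ K ≤ (99 / 100) ^ n := by
  have hr0 : 0 ≤ G / x := by positivity
  have hr1 : G / x ≤ 1 := (div_le_one hx).2 hGx
  have h1 : (n.choose s : ℝ) * G ^ s ≤ (1 + x) ^ n * (G / x) ^ s := by
    have := choose_mul_pow_le n s hx.le
    calc (n.choose s : ℝ) * G ^ s = (n.choose s : ℝ) * x ^ s * (G / x) ^ s := by
          rw [mul_assoc, ← mul_pow, mul_div_cancel₀ _ hx.ne']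
      _ ≤ _ := by gcongr
  calc ((n.choose s : ℝ) * G ^ s) ^ K ≤ ((1 + x) ^ n * (G / x) ^ s) ^ K := by gcongr
    _ = ((1 + x) ^ K) ^ n * (G / x) ^ (K * s) := by
        rw [mul_pow, ← pow_mul, ← pow_mul, ← pow_mul, mul_comm n, mul_comm s]
    _ ≤ ((1 + x) ^ K) ^ n * (G / x) ^ (k1 * n) := by
        gcongr ?_ * ?_
        exact pow_le_pow_of_le_one hr0 hr1 hk
    _ = ((1 + x) ^ K * (G / x) ^ k1) ^ n := by rw [mul_pow, pow_mul]
    _ ≤ _ := by gcongr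

lemma low_step {K : ℕ} (hK : 0 < K) (k1 k2 : ℕ) (G x : ℝ) (hG0 : 0 ≤ G) (hGx : G ≤ x) (hx : 0 < x)
    (hk2 : k2 ≤ K ∧ 0 ≤ tay (k2 / K * 1.86) ∧
      1 - tay (k2 / K * 1.86) ^ 2 * (1 + k2 / K * 1.86) ≤ G)
    (hnum : (1 + x) ^ K * (G / x) ^ k1 ≤ 99 / 100)
    (n s : ℕ) (p : ℝ) (h0 : 0 ≤ p) (h1 : p < 1) (hD : n * p / (1 - p) ≤ 1.86)
    (hb0 : 0 ≤ bex p s) (ha : k1 * n ≤ K * s) (hb : K * s ≤ k2 * n) :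
    ((n.choose s : ℝ) * bex p s ^ s) ^ K ≤ (99 / 100) ^ n := by
  have hq : 0 < 1 - p := by linarith
  have hk : (k2 : ℝ) ≤ K := by exact_mod_cast hk2.1
  have hK' : (0:ℝ) < K := by exact_mod_cast hK
  have hkK : (k2 : ℝ) / K ≤ 1 := (div_le_one hK').2 hk
  have hs : (s : ℝ) ≤ k2 / K * n := by
    have : ((K * s : ℕ) : ℝ) ≤ ((k2 * n : ℕ) : ℝ) := by exact_mod_cast hb
    push_cast at this; rw [div_mul_eq_mul_div, le_div_iff₀ hK']; linarith
  have hy : (s : ℝ) * p / (1 - p) ≤ k2 / K * 1.86 := by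
    calc (s : ℝ) * p / (1 - p) ≤ (k2 / K * n) * p / (1 - p) := by gcongr
      _ = k2 / K * (n * p / (1 - p)) := by ring
      _ ≤ _ := by gcongr
  have hG : bex p s ≤ G := (bex_le_g h0 h1 s hy).trans
    (g_num (by positivity) (by nlinarith) hk2.2.1 hk2.2.2)
  have hle : (n.choose s : ℝ) * bex p s ^ s ≤ (n.choose s : ℝ) * G ^ s :=
    mul_le_mul_of_nonneg_left (pow_le_pow_left₀ hb0 hG s) (Nat.cast_nonneg _)
  have hnn : 0 ≤ (n.choose s : ℝ) * bex p s ^ s :=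
    mul_nonneg (Nat.cast_nonneg _) (pow_nonneg hb0 s)
  exact (pow_le_pow_left₀ hnn hle _).trans (low_int hG0 hGx hx ha hnum)

set_option exponentiation.threshold 2000 in
lemma low_large (n s K : ℕ) (hK : K = 1000) (p : ℝ) (h0 : 0 ≤ p) (h1 : p < 1)
    (hD : n * p / (1 - p) ≤ 1.86)
    (hb0 : 0 ≤ bex p s) (hs : 185 * n ≤ K * s) (hsn : s ≤ n) :
    ((n.choose s : ℝ) * bex p s ^ s) ^ K ≤ (99 / 100) ^ n := by
  have hKp : 0 < K := by omega
  rcases le_total (815 * n) (K * s) with h | h'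
  · exact low_step hKp 815 1000 0.5549 4.405 (by norm_num) (by norm_num) (by norm_num) (by subst hK; unfold tay; norm_num) (by subst hK; norm_num) n s p h0 h1 hD hb0 h (by subst hK; omega)
  rcases le_total (729 * n) (K * s) with h | h'
  · exact low_step hKp 729 815 0.4476 2.69 (by norm_num) (by norm_num) (by norm_num) (by subst hK; unfold tay; norm_num) (by subst hK; norm_num) n s p h0 h1 hD hb0 h h'
  rcases le_total (676 * n) (K * s) with h | h'
  · exact low_step hKp 676 729 0.393 2.086 (by norm_num) (by norm_num) (by norm_num) (by subst hK; unfold tay; norm_num) (by subst hK; norm_num) n s p h0 h1 hD hb0 h h'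
  rcases le_total (638 * n) (K * s) with h | h'
  · exact low_step hKp 638 676 0.3581 1.762 (by norm_num) (by norm_num) (by norm_num) (by subst hK; unfold tay; norm_num) (by subst hK; norm_num) n s p h0 h1 hD hb0 h h'
  rcases le_total (609 * n) (K * s) with h | h'
  · exact low_step hKp 609 638 0.3327 1.558 (by norm_num) (by norm_num) (by norm_num) (by subst hK; unfold tay; norm_num) (by subst hK; norm_num) n s p h0 h1 hD hb0 h h'
  rcases le_total (585 * n) (K * s) with h | h'
  · exact low_step hKp 585 609 0.3131 1.41 (by norm_num) (by norm_num) (by norm_num) (by subst hK; unfold tay; norm_num) (by subst hK; norm_num) n s p h0 h1 hD hb0 h h'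
  rcases le_total (564 * n) (K * s) with h | h'
  · exact low_step hKp 564 585 0.2968 1.294 (by norm_num) (by norm_num) (by norm_num) (by subst hK; unfold tay; norm_num) (by subst hK; norm_num) n s p h0 h1 hD hb0 h h'
  rcases le_total (546 * n) (K * s) with h | h'
  · exact low_step hKp 546 564 0.2824 1.203 (by norm_num) (by norm_num) (by norm_num) (by subst hK; unfold tay; norm_num) (by subst hK; norm_num) n s p h0 h1 hD hb0 h h'
  rcases le_total (529 * n) (K * s) with h | h'
  · exact low_step hKp 529 546 0.2701 1.123 (by norm_num) (by norm_num) (by norm_num) (by subst hK; unfold tay; norm_num) (by subst hK; norm_num) n s p h0 h1 hD hb0 h h'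
  rcases le_total (513 * n) (K * s) with h | h'
  · exact low_step hKp 513 529 0.2585 1.053 (by norm_num) (by norm_num) (by norm_num) (by subst hK; unfold tay; norm_num) (by subst hK; norm_num) n s p h0 h1 hD hb0 h h'
  rcases le_total (497 * n) (K * s) with h | h'
  · exact low_step hKp 497 513 0.2475 0.988 (by norm_num) (by norm_num) (by norm_num) (by subst hK; unfold tay; norm_num) (by subst hK; norm_num) n s p h0 h1 hD hb0 h h'
  rcases le_total (481 * n) (K * s) with h | h'
  · exact low_step hKp 481 497 0.2366 0.927 (by norm_num) (by norm_num) (by norm_num) (by subst hK; unfold tay; norm_num) (by subst hK; norm_num) n s p h0 h1 hD hb0 h h'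
  rcases le_total (464 * n) (K * s) with h | h'
  · exact low_step hKp 464 481 0.2257 0.866 (by norm_num) (by norm_num) (by norm_num) (by subst hK; unfold tay; norm_num) (by subst hK; norm_num) n s p h0 h1 hD hb0 h h'
  rcases le_total (447 * n) (K * s) with h | h'
  · exact low_step hKp 447 464 0.2142 0.808 (by norm_num) (by norm_num) (by norm_num) (by subst hK; unfold tay; norm_num) (by subst hK; norm_num) n s p h0 h1 hD hb0 h h'
  rcases le_total (428 * n) (K * s) with h | h'
  · exact low_step hKp 428 447 0.2027 0.748 (by norm_num) (by norm_num) (by norm_num) (by subst hK; unfold tay; norm_num) (by subst hK; norm_num) n s p h0 h1 hD hb0 h h'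
  rcases le_total (407 * n) (K * s) with h | h'
  · exact low_step hKp 407 428 0.1899 0.686 (by norm_num) (by norm_num) (by norm_num) (by subst hK; unfold tay; norm_num) (by subst hK; norm_num) n s p h0 h1 hD hb0 h h'
  rcases le_total (384 * n) (K * s) with h | h'
  · exact low_step hKp 384 407 0.176 0.623 (by norm_num) (by norm_num) (by norm_num) (by subst hK; unfold tay; norm_num) (by subst hK; norm_num) n s p h0 h1 hD hb0 h h'
  rcases le_total (357 * n) (K * s) with h | h'
  · exact low_step hKp 357 384 0.1609 0.555 (by norm_num) (by norm_num) (by norm_num) (by subst hK; unfold tay; norm_num) (by subst hK; norm_num) n s p h0 h1 hD hb0 h h'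
  rcases le_total (325 * n) (K * s) with h | h'
  · exact low_step hKp 325 357 0.1435 0.481 (by norm_num) (by norm_num) (by norm_num) (by subst hK; unfold tay; norm_num) (by subst hK; norm_num) n s p h0 h1 hD hb0 h h'
  rcases le_total (287 * n) (K * s) with h | h'
  · exact low_step hKp 287 325 0.1235 0.403 (by norm_num) (by norm_num) (by norm_num) (by subst hK; unfold tay; norm_num) (by subst hK; norm_num) n s p h0 h1 hD hb0 h h'
  rcases le_total (241 * n) (K * s) with h | h'
  · exact low_step hKp 241 287 0.1008 0.318 (by norm_num) (by norm_num) (by norm_num) (by subst hK; unfold tay; norm_num) (by subst hK; norm_num) n s p h0 h1 hD hb0 h h'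
  exact low_step hKp 185 241 0.0751 0.227 (by norm_num) (by norm_num) (by norm_num) (by subst hK; unfold tay; norm_num) (by subst hK; norm_num) n s p h0 h1 hD hb0 hs h'


lemma small_term (n s : ℕ) (q : ℝ) :
    (n.choose s : ℝ) * ((s : ℝ) ^ 2 * q ^ 2 / 2) ^ s ≤ (Real.exp 1 * s * n * q ^ 2 / 2) ^ s := by
  have h1 : (n.choose s : ℝ) ≤ (n : ℝ) ^ s / (s.factorial : ℝ) := Nat.choose_le_pow_div s n
  have h2 : (s : ℝ) ^ s / (s.factorial : ℝ) ≤ Real.exp s :=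
    Real.pow_div_factorial_le_exp s (Nat.cast_nonneg _) s
  have hf : (0:ℝ) < s.factorial := by exact_mod_cast Nat.factorial_pos s
  calc (n.choose s : ℝ) * ((s : ℝ) ^ 2 * q ^ 2 / 2) ^ s
      ≤ ((n : ℝ) ^ s / (s.factorial : ℝ)) * ((s : ℝ) ^ 2 * q ^ 2 / 2) ^ s := by gcongr
    _ = ((s : ℝ) ^ s / (s.factorial : ℝ)) * (s * n * q ^ 2 / 2) ^ s := by
        rw [div_mul_eq_mul_div, div_mul_eq_mul_div, ← mul_pow, ← mul_pow]
        congr 2; ring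
    _ ≤ Real.exp s * (s * n * q ^ 2 / 2) ^ s := by gcongr
    _ = _ := by
        rw [show (s:ℝ) = s * 1 by ring, Real.exp_nat_mul, ← mul_pow]
        congr 1; ring

lemma geo_sum_le {ρ : ℝ} (h0 : 0 ≤ ρ) (h1 : ρ ≤ 1 / 2) (m : ℕ) :
    ∑ s ∈ Finset.Icc 1 m, ρ ^ s ≤ 2 * ρ := by
  have h : ∀ m : ℕ, ∑ s ∈ Finset.Icc 1 m, ρ ^ s ≤ 2 * ρ - 2 * ρ ^ (m + 1) := by
    intro m
    induction m with
    | zero => simp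
    | succ m ih =>
      rw [Finset.sum_Icc_succ_top (by omega)]
      have : ρ ^ (m + 1 + 1) = ρ * ρ ^ (m + 1) := by ring
      have h3 : 0 ≤ ρ ^ (m + 1) := by positivity
      nlinarith
  have := h m
  have h3 : 0 ≤ ρ ^ (m + 1) := by positivity
  linarith

lemma bex_eq {n : ℕ} (p : ℝ) (s : ℕ) (T : Finset (Fin n)) (hT : T.card = s - 1) :
    Prw (rowW p) (fun r : Fin n → Bool => 2 ≤ (T.filter fun u => r u = true).card) = bex p s := by
  rw [row_two_eq, hT]; rfl

lemma low_regime (ε : ℝ) (hε : 0 < ε) : ∃ n0 : ℕ, ∀ n ≥ n0, ∀ p : ℝ, 0 ≤ p → p ≤ 1 →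
    n * p ≤ 1.855 → Prw (matW p) (fun A : Fin n → Fin n → Bool => ¬ HasCol A) ≤ ε := by
  obtain ⟨θ, hθ0, hθ1, hθ⟩ : ∃ θ : ℝ, 9/10 ≤ θ ∧ θ < 1 ∧ 99 / 100 ≤ θ ^ 1000 := by
    refine ⟨1 - 1/100000, by norm_num, by norm_num, ?_⟩
    have := one_add_mul_le_pow (a := -(1/100000 : ℝ)) (by norm_num) 1000
    refine le_trans ?_ (this.trans (le_of_eq ?_))
    · norm_num
    · norm_num
  have hθp : 0 < θ := by linarith
  -- the tail tends to zero
  have ht : Tendsto (fun k : ℕ => 2 * (4.8 / (k : ℝ)) + ((k : ℝ) + 1) ^ 2 * θ ^ k) atTop (nhds 0) := by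
    have a1 : Tendsto (fun k : ℕ => 2 * (4.8 / (k : ℝ))) atTop (nhds 0) := by
      have := (tendsto_const_div_atTop_nhds_zero_nat (4.8:ℝ)).const_mul 2
      simpa using this
    have habs : |θ| < 1 := by rw [abs_of_pos hθp]; exact hθ1
    have a2 := tendsto_pow_const_mul_const_pow_of_abs_lt_one 2 habs
    have a3 := tendsto_pow_const_mul_const_pow_of_abs_lt_one 1 habs
    have a4 := tendsto_pow_const_mul_const_pow_of_abs_lt_one 0 habs
    have a5 := a1.add ((a2.add (a3.const_mul 2)).add a4)
    simp only [mul_zero, add_zero] at a5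
    refine a5.congr fun k => ?_
    ring
  have hsq : Tendsto Nat.sqrt atTop atTop := by
    rw [tendsto_atTop]
    intro b
    filter_upwards [eventually_ge_atTop (b * b)] with n hn
    exact Nat.le_sqrt.2 hn
  have hev := (ht.comp hsq).eventually (gt_mem_nhds hε)
  obtain ⟨n1, hn1⟩ := eventually_atTop.1 hev
  refine ⟨max n1 1000, fun n hn p h0 h1 hnp => ?_⟩
  have hn1' := hn1 n (le_trans (le_max_left _ _) hn)
  have hn1000 : 1000 ≤ n := le_trans (le_max_right _ _) hn
  simp only [Function.comp] at hn1'
  refine le_trans ?_ hn1'.le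
  have hnR : (1000:ℝ) ≤ n := by exact_mod_cast hn1000
  have hpsmall : p ≤ 0.001855 := by nlinarith
  have hp1 : p < 1 := by linarith
  have hD : n * p / (1 - p) ≤ 1.86 := by
    rw [div_le_iff₀ (by linarith)]; nlinarith
  set k := Nat.sqrt n with hk
  have hkk : k * k ≤ n := Nat.sqrt_le n
  have hkk2 : n < (k + 1) * (k + 1) := Nat.sqrt_lt.1 (Nat.lt_succ_self _)
  have hk10 : 30 ≤ k := Nat.le_sqrt.2 (by omega)
  have hkR : (30:ℝ) ≤ k := by exact_mod_cast hk10
  have step1 : Prw (matW p) (fun A : Fin n → Fin n → Bool => ¬ HasCol A) ≤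
      Prw (matW p) (fun A : Fin n → Fin n → Bool => ¬ NoCore A n) :=
    Prw_mono (matW_nonneg h0 h1) fun A hA h => hA (hasCol_of_noCore A (by simpa using h))
  refine step1.trans ((noCore_bound h0 h1 n (bex p) fun s _ T hT => (bex_eq p s T hT).le).trans ?_)
  rw [Fintype.card_fin]
  have hterm : ∀ s ∈ Finset.Icc 1 n, (n.choose s : ℝ) * bex p s ^ s ≤ (4.8 / (k:ℝ)) ^ s + θ ^ k := by
    intro s hs
    rw [Finset.mem_Icc] at hs
    obtain ⟨T, -, hT⟩ := Finset.exists_subset_card_eq (s := (Finset.univ : Finset (Fin n))) (n := s - 1)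
      (by simp; omega)
    have hb0 : 0 ≤ bex p s := by
      rw [← bex_eq p s T hT]; exact Prw_nonneg (rowW_nonneg h0 h1) _
    have hρ0 : 0 ≤ 4.8 / (k:ℝ) := by positivity
    have hθk : 0 < θ ^ k := by positivity
    have hsmall : (n.choose s : ℝ) * bex p s ^ s ≤ (4.8 * s / n) ^ s := by
      have hb1 : bex p s ≤ (s:ℝ) ^ 2 * p ^ 2 / 2 := by
        rw [← bex_eq p s T hT]
        refine (row_two_le h0 h1 T).trans ?_
        rw [hT]
        have : ((s - 1 : ℕ) : ℝ) ≤ s := by exact_mod_cast Nat.sub_le _ _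
        gcongr
      calc (n.choose s : ℝ) * bex p s ^ s ≤ (n.choose s : ℝ) * ((s:ℝ) ^ 2 * p ^ 2 / 2) ^ s := by gcongr
        _ ≤ _ := small_term n s p
        _ ≤ (4.8 * s / n) ^ s := by
          have he := Real.exp_one_lt_d9
          have hsR : (0:ℝ) ≤ s := Nat.cast_nonneg s
          have : Real.exp 1 * s * n * p ^ 2 / 2 ≤ 4.8 * s / n := by
            rw [le_div_iff₀ (by linarith)]
            have e1 : (n * p) ^ 2 ≤ 1.855 ^ 2 := pow_le_pow_left₀ (by positivity) hnp 2
            have e2 : Real.exp 1 * s * n * p ^ 2 / 2 * n = Real.exp 1 * (n * p) ^ 2 / 2 * s := by ring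
            rw [e2]
            refine mul_le_mul_of_nonneg_right ?_ hsR
            nlinarith [Real.exp_pos 1]
          gcongr
    rcases le_or_gt (s * s) n with hc | hc
    · -- s ≤ k
      have hsk : s ≤ k := Nat.le_sqrt.2 hc
      refine hsmall.trans (le_trans ?_ (le_add_of_nonneg_right hθk.le))
      gcongr ?_ ^ s
      rw [div_le_div_iff₀ (by linarith) (by linarith)]
      have : ((s * k : ℕ) : ℝ) ≤ (n : ℝ) := by
        exact_mod_cast le_trans (Nat.mul_le_mul_right k hsk) hkk
      push_cast at this
      nlinarith
    · have hks : k ≤ s := by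
        by_contra h
        push Not at h
        have : s * s ≤ k * k := Nat.mul_self_le_mul_self h.le
        omega
      refine le_trans ?_ (le_add_of_nonneg_left (by positivity))
      rcases le_or_gt (185 * n) (1000 * s) with hl | hl
      · have := low_large n s 1000 rfl p h0 hp1 hD hb0 hl hs.2
        have h3 : ((n.choose s : ℝ) * bex p s ^ s) ^ 1000 ≤ (θ ^ k) ^ 1000 := by
          refine this.trans ?_
          calc (99/100 : ℝ) ^ n ≤ (θ ^ 1000) ^ n := by gcongr
            _ = (θ ^ n) ^ 1000 := by rw [← pow_mul, ← pow_mul, mul_comm]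
            _ ≤ (θ ^ k) ^ 1000 := by
              refine pow_le_pow_left₀ (by positivity) ?_ 1000
              exact pow_le_pow_of_le_one hθp.le hθ1.le (Nat.sqrt_le_self n)
        exact le_of_pow_le_pow_left₀ (by norm_num) hθk.le h3
      · refine hsmall.trans ?_
        have hl' : (1000:ℝ) * s ≤ 185 * n := by exact_mod_cast hl.le
        calc (4.8 * s / n : ℝ) ^ s ≤ θ ^ s := by
              gcongr
              rw [div_le_iff₀ (by linarith)]
              nlinarith
          _ ≤ θ ^ k := pow_le_pow_of_le_one hθp.le hθ1.le hks
  refine (Finset.sum_le_sum hterm).trans ?_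
  rw [Finset.sum_add_distrib]
  refine add_le_add (geo_sum_le (by positivity) ?_ n) ?_
  · rw [div_le_iff₀ (by linarith)]; linarith
  · simp only [Finset.sum_const, Nat.card_Icc, nsmul_eq_mul, Nat.add_sub_cancel]
    have : (n:ℝ) ≤ ((k:ℝ) + 1) ^ 2 := by
      have : (n:ℝ) ≤ (((k+1)*(k+1) : ℕ) : ℝ) := by exact_mod_cast hkk2.le
      push_cast at this; linarith
    gcongr


section Conc
variable {Ω : Type*} [Fintype Ω]

lemma one_coord (μ : Ω → ℝ) (hμ : ∀ ω, 0 ≤ μ ω) (h1 : ∑ ω, μ ω = 1) (t : ℝ)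
    (F : Ω → ℝ) (hF : ∀ ω, 0 < F ω) (hL : ∀ ω ω', F ω ≤ Real.exp t * F ω') :
    (∑ ω, μ ω * F ω) * (∑ ω, μ ω * (F ω)⁻¹) ≤ Real.exp (t ^ 2 / 2) := by
  have hkey : ∀ ω ω', F ω * (F ω')⁻¹ + F ω' * (F ω)⁻¹ ≤ 2 * Real.exp (t ^ 2 / 2) := by
    intro a b
    have hc := Real.cosh_le_exp_half_sq t
    rw [Real.cosh_eq] at hc
    have hr1 : F a * (F b)⁻¹ ≤ Real.exp t := by
      rw [← div_eq_mul_inv, div_le_iff₀ (hF b)]; exact hL a b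
    have hr2 : F b * (F a)⁻¹ ≤ Real.exp t := by
      rw [← div_eq_mul_inv, div_le_iff₀ (hF a)]; exact hL b a
    have hp1 : 0 < F a * (F b)⁻¹ := mul_pos (hF a) (inv_pos.2 (hF b))
    have hp2 : 0 < F b * (F a)⁻¹ := mul_pos (hF b) (inv_pos.2 (hF a))
    have hprod : (F a * (F b)⁻¹) * (F b * (F a)⁻¹) = 1 := by
      have := (hF a).ne'; have := (hF b).ne'; field_simp
    have hexp : Real.exp t * Real.exp (-t) = 1 := by rw [← Real.exp_add]; simp
    set r := F a * (F b)⁻¹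
    set q := F b * (F a)⁻¹
    have hE : 0 < Real.exp t := Real.exp_pos t
    -- (E - r)(E - q) ≥ 0
    have h3 : 0 ≤ (Real.exp t - r) * (Real.exp t - q) :=
      mul_nonneg (by linarith) (by linarith)
    have h4 : Real.exp t * (r + q) ≤ Real.exp t * (Real.exp t + Real.exp (-t)) := by nlinarith
    have h5 := le_of_mul_le_mul_left h4 hE
    linarith
  have e1 : (∑ ω, μ ω * F ω) * (∑ ω, μ ω * (F ω)⁻¹) =
      ∑ a, ∑ b, μ a * μ b * (F a * (F b)⁻¹) := by
    rw [Finset.sum_mul_sum]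
    exact Finset.sum_congr rfl fun a _ => Finset.sum_congr rfl fun b _ => by ring
  have e2 : (∑ ω, μ ω * F ω) * (∑ ω, μ ω * (F ω)⁻¹) =
      ∑ a, ∑ b, μ a * μ b * (F b * (F a)⁻¹) := by
    rw [e1, Finset.sum_comm]
    exact Finset.sum_congr rfl fun a _ => Finset.sum_congr rfl fun b _ => by ring
  have e3 : 2 * ((∑ ω, μ ω * F ω) * (∑ ω, μ ω * (F ω)⁻¹)) ≤
      ∑ a, ∑ b, μ a * μ b * (2 * Real.exp (t ^ 2 / 2)) := by
    rw [two_mul]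
    nth_rewrite 1 [e1]
    rw [e2, ← Finset.sum_add_distrib]
    refine Finset.sum_le_sum fun a _ => ?_
    rw [← Finset.sum_add_distrib]
    refine Finset.sum_le_sum fun b _ => ?_
    rw [← mul_add]
    exact mul_le_mul_of_nonneg_left (hkey a b) (mul_nonneg (hμ a) (hμ b))
  have e4 : ∑ a, ∑ b, μ a * μ b * (2 * Real.exp (t ^ 2 / 2)) = 2 * Real.exp (t ^ 2 / 2) := by
    simp_rw [← Finset.sum_mul, ← Finset.mul_sum, h1]
    simp [h1]
  linarith

lemma sum_cons {n : ℕ} (μ : Ω → ℝ) (F : (Fin (n+1) → Ω) → ℝ) :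
    ∑ A, pw μ A * F A = ∑ x : Fin n → Ω, pw μ x * ∑ ω, μ ω * F (Fin.cons ω x) := by
  rw [← (Fin.consEquiv (fun _ => Ω)).sum_comp, Fintype.sum_prod_type, Finset.sum_comm]
  refine Finset.sum_congr rfl fun x _ => ?_
  rw [Finset.mul_sum]
  refine Finset.sum_congr rfl fun ω _ => ?_
  simp only [Fin.consEquiv, Equiv.coe_fn_mk, pw, Fin.prod_univ_succ, Fin.cons_zero, Fin.cons_succ]
  ring

lemma conc_prod (μ : Ω → ℝ) (hμ : ∀ ω, 0 ≤ μ ω) (h1 : ∑ ω, μ ω = 1) (t : ℝ) :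
    ∀ (n : ℕ) (F : (Fin n → Ω) → ℝ) (_ : ∀ A, 0 < F A)
      (_ : ∀ A v ω, F (Function.update A v ω) ≤ Real.exp t * F A),
    (∑ A, pw μ A * F A) * (∑ A, pw μ A * (F A)⁻¹) ≤ Real.exp (n * (t ^ 2 / 2)) := by
  intro n
  induction n with
  | zero =>
    intro F hF _
    simp [pw]
    rw [mul_inv_cancel₀ (hF _).ne']
  | succ n ih =>
    intro F hF hL
    have hLc : ∀ (x : Fin n → Ω) (a b : Ω), F (Fin.cons a x) ≤ Real.exp t * F (Fin.cons b x) := by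
      intro x a b
      have := hL (Fin.cons b x) 0 a
      rwa [Fin.update_cons_zero] at this
    let g : (Fin n → Ω) → ℝ := fun x => ∑ ω, μ ω * F (Fin.cons ω x)
    have hg : ∀ x, 0 < g x := by
      intro x
      obtain ⟨a, ha⟩ : ∃ a, 0 < μ a := by
        by_contra h
        push Not at h
        have : ∑ ω, μ ω ≤ 0 := Finset.sum_nonpos fun ω _ => h ω
        linarith
      exact Finset.sum_pos' (fun ω _ => mul_nonneg (hμ ω) (hF _).le)
        ⟨a, Finset.mem_univ _, mul_pos ha (hF _)⟩
    have hgL : ∀ x v ω, g (Function.update x v ω) ≤ Real.exp t * g x := by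
      intro x v ω
      simp only [g]
      rw [Finset.mul_sum]
      refine Finset.sum_le_sum fun a _ => ?_
      have := hL (Fin.cons a x) v.succ ω
      rw [← Fin.cons_update] at this
      nlinarith [hμ a]
    have hi := ih g hg hgL
    rw [sum_cons μ F, sum_cons μ (fun A => (F A)⁻¹)]
    have hb : ∑ x : Fin n → Ω, pw μ x * ∑ ω, μ ω * (F (Fin.cons ω x))⁻¹ ≤
        Real.exp (t ^ 2 / 2) * ∑ x : Fin n → Ω, pw μ x * (g x)⁻¹ := by
      rw [Finset.mul_sum]
      refine Finset.sum_le_sum fun x _ => ?_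
      have := one_coord μ hμ h1 t (fun ω => F (Fin.cons ω x)) (fun _ => hF _) (hLc x)
      have h3 : ∑ ω, μ ω * (F (Fin.cons ω x))⁻¹ ≤ Real.exp (t ^ 2 / 2) * (g x)⁻¹ := by
        rw [← div_eq_mul_inv, le_div_iff₀ (hg x), mul_comm]
        exact this
      calc pw μ x * ∑ ω, μ ω * (F (Fin.cons ω x))⁻¹ ≤ pw μ x * (Real.exp (t ^ 2 / 2) * (g x)⁻¹) :=
            mul_le_mul_of_nonneg_left h3 (pw_nonneg hμ x)
        _ = _ := by ring
    have hpos : 0 ≤ ∑ x : Fin n → Ω, pw μ x * g x :=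
      Finset.sum_nonneg fun x _ => mul_nonneg (pw_nonneg hμ x) (hg x).le
    calc _ ≤ (∑ x : Fin n → Ω, pw μ x * g x) * (Real.exp (t ^ 2 / 2) * ∑ x : Fin n → Ω, pw μ x * (g x)⁻¹) :=
          mul_le_mul_of_nonneg_left hb hpos
      _ = Real.exp (t ^ 2 / 2) * ((∑ x : Fin n → Ω, pw μ x * g x) * ∑ x : Fin n → Ω, pw μ x * (g x)⁻¹) := by ring
      _ ≤ Real.exp (t ^ 2 / 2) * Real.exp (n * (t ^ 2 / 2)) := by gcongr
      _ = _ := by rw [← Real.exp_add]; congr 1; push_cast; ring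

lemma conc_dist [DecidableEq Ω] (μ : Ω → ℝ) (hμ : ∀ ω, 0 ≤ μ ω) (h1 : ∑ ω, μ ω = 1)
    (n k : ℕ) (hn : 0 < n) (E : (Fin n → Ω) → Prop) :
    Prw (pw μ) E * Prw (pw μ) (fun A => ∀ A', E A' → k ≤ hammingDist A A') ≤
      Real.exp (-((k:ℝ) ^ 2 / (2 * n))) := by
  classical
  by_cases hE : ∃ A, E A
  swap
  · have : Prw (pw μ) E = 0 := by
      unfold Prw
      refine Finset.sum_eq_zero fun A _ => if_neg fun h => hE ⟨A, h⟩
    rw [this, zero_mul]; exact (Real.exp_pos _).le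
  let dset : (Fin n → Ω) → Set ℕ := fun A => {d | ∃ A', E A' ∧ hammingDist A A' = d}
  have hne : ∀ A, (dset A).Nonempty := fun A => by
    obtain ⟨A', h⟩ := hE; exact ⟨_, A', h, rfl⟩
  let f : (Fin n → Ω) → ℕ := fun A => sInf (dset A)
  have hnR : (0:ℝ) < n := by exact_mod_cast hn
  set t : ℝ := k / n with ht
  have ht0 : 0 ≤ t := by positivity
  have hLf : ∀ A v ω, f (Function.update A v ω) ≤ f A + 1 := by
    intro A v ω
    obtain ⟨A', hA', hd⟩ := Nat.sInf_mem (hne A)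
    have h2 : f (Function.update A v ω) ≤ hammingDist (Function.update A v ω) A' :=
      Nat.sInf_le ⟨A', hA', rfl⟩
    have h3 := hammingDist_triangle (Function.update A v ω) A A'
    have h4 : hammingDist (Function.update A v ω) A ≤ 1 := by
      unfold hammingDist
      rw [Finset.card_le_one]
      intro a ha b hb
      have aux : ∀ c, c ∈ (Finset.univ.filter fun i => Function.update A v ω i ≠ A i) → c = v := by
        intro c hc
        by_contra hcv
        simp [Function.update_of_ne hcv] at hc
      rw [aux a ha, aux b hb]
    have : f A = hammingDist A A' := hd.symm
    omega
  have hmain := conc_prod μ hμ h1 t n (fun A => Real.exp (t * f A)) (fun A => Real.exp_pos _) (by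
    intro A v ω
    rw [← Real.exp_add, Real.exp_le_exp]
    have : (f (Function.update A v ω) : ℝ) ≤ f A + 1 := by exact_mod_cast hLf A v ω
    nlinarith)
  have hb1 : Prw (pw μ) E ≤ ∑ A, pw μ A * (Real.exp (t * f A))⁻¹ := by
    refine Prw_le_sum (pw_nonneg hμ) E _ (fun A => by positivity) fun A hA => ?_
    have : f A = 0 := Nat.le_zero.1 (Nat.sInf_le ⟨A, hA, hammingDist_self A⟩)
    simp [this]
  have hb2 : Prw (pw μ) (fun A => ∀ A', E A' → k ≤ hammingDist A A') * Real.exp (t * k) ≤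
      ∑ A, pw μ A * Real.exp (t * f A) := by
    rw [← le_div_iff₀ (Real.exp_pos _)]
    refine (Prw_le_sum (pw_nonneg hμ) _ (fun A => Real.exp (t * f A) / Real.exp (t * k))
      (fun A => by positivity) fun A hA => ?_).trans (le_of_eq ?_)
    · rw [one_le_div (Real.exp_pos _), Real.exp_le_exp]
      obtain ⟨A', hA', hd⟩ := Nat.sInf_mem (hne A)
      have : k ≤ f A := by
        have h3 := hA A' hA'
        rw [hd] at h3
        exact h3
      have : (k:ℝ) ≤ f A := by exact_mod_cast this
      gcongr
    · rw [Finset.sum_div]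
      exact Finset.sum_congr rfl fun A _ => by ring
  set P1 := Prw (pw μ) E
  set P2 := Prw (pw μ) (fun A => ∀ A', E A' → k ≤ hammingDist A A')
  have hP1 : 0 ≤ P1 := Prw_nonneg (pw_nonneg hμ) _
  have hP2 : 0 ≤ P2 := Prw_nonneg (pw_nonneg hμ) _
  have h6 : (P2 * Real.exp (t * k)) * P1 ≤ Real.exp (n * (t ^ 2 / 2)) :=
    (mul_le_mul hb2 hb1 hP1 (Finset.sum_nonneg fun A _ =>
      mul_nonneg (pw_nonneg hμ A) (Real.exp_pos _).le)).trans hmain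
  have h7 : P1 * P2 ≤ Real.exp (n * (t ^ 2 / 2)) / Real.exp (t * k) := by
    rw [le_div_iff₀ (Real.exp_pos _)]; linarith
  refine h7.trans (le_of_eq ?_)
  rw [← Real.exp_sub, ht]
  congr 1
  field_simp
  ring

end Conc


section Wt
variable {V : Type*} [Fintype V] [DecidableEq V]

lemma exists_perm_of_fibres {K : Type*} [DecidableEq K] (g h : V → K)
    (H : ∀ k, (Finset.univ.filter fun x => g x = k).card = (Finset.univ.filter fun x => h x = k).card) :
    ∃ σ : V ≃ V, ∀ x, g (σ x) = h x := by
  have e : ∀ k, Nonempty ({x // h x = k} ≃ {x // g x = k}) := by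
    intro k
    rw [← Fintype.card_eq, Fintype.card_subtype, Fintype.card_subtype, H k]
  let E : ∀ k, {x // h x = k} ≃ {x // g x = k} := fun k => Classical.choice (e k)
  refine ⟨(Equiv.sigmaFiberEquiv h).symm.trans
    ((Equiv.sigmaCongrRight E).trans (Equiv.sigmaFiberEquiv g)), fun x => ?_⟩
  simp only [Equiv.trans_apply, Equiv.sigmaFiberEquiv, Equiv.coe_fn_symm_mk, Equiv.coe_fn_mk,
    Equiv.sigmaCongrRight_apply, Sigma.map]
  exact (E (h x) ⟨x, rfl⟩).2

/-- number of out-neighbours in the row `r` of colour `i` -/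
def cnt (r : V → Bool) (c : V → Option (Fin 3)) (i : Fin 3) : ℕ :=
  (Finset.univ.filter fun x => r x = true ∧ c x = some i).card

/-- minimising colours -/
def amin (r : V → Bool) (c : V → Option (Fin 3)) : Finset (Fin 3) :=
  Finset.univ.filter fun i => ∀ j, cnt r c i ≤ cnt r c j

/-- weights -/
noncomputable def wt (r : V → Bool) (c : V → Option (Fin 3)) : Option (Fin 3) → ℝ
  | none => 1
  | some i => if i ∈ amin r c then ((amin r c).card : ℝ)⁻¹ else 0

lemma amin_nonempty (r : V → Bool) (c : V → Option (Fin 3)) : (amin r c).Nonempty := by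
  obtain ⟨i, -, hi⟩ := (Finset.univ : Finset (Fin 3)).exists_min_image (cnt r c) ⟨0, by simp⟩
  exact ⟨i, by simp only [amin, Finset.mem_filter, Finset.mem_univ, true_and]; intro j; exact hi j (by simp)⟩

lemma wt_sum (r : V → Bool) (c : V → Option (Fin 3)) : ∑ i, wt r c (some i) = 1 := by
  have h : ((amin r c).card : ℝ) ≠ 0 := by
    exact_mod_cast (Finset.card_pos.2 (amin_nonempty r c)).ne'
  simp only [wt]
  rw [← Finset.sum_filter]
  simp [h]

lemma wt_nonneg (r : V → Bool) (c : V → Option (Fin 3)) (o) : 0 ≤ wt r c o := by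
  cases o with
  | none => simp [wt]
  | some i => simp only [wt]; split_ifs <;> positivity

lemma wt_le_one (r : V → Bool) (c : V → Option (Fin 3)) (o) : wt r c o ≤ 1 := by
  cases o with
  | none => simp [wt]
  | some i =>
    rw [← wt_sum r c]
    exact Finset.single_le_sum (f := fun i => wt r c (some i)) (fun i _ => wt_nonneg r c _) (Finset.mem_univ i)

lemma rowW_comp (p : ℝ) (r : V → Bool) (σ : V ≃ V) : rowW p (r ∘ σ) = rowW p r := by
  unfold rowW pw
  exact σ.prod_comp (fun x => bw p (r x))

lemma cnt_comp (r : V → Bool) (c : V → Option (Fin 3)) (σ : V ≃ V) (i : Fin 3) :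
    cnt (r ∘ σ) (c ∘ σ) i = cnt r c i := by
  unfold cnt
  refine Finset.card_bij (fun x _ => σ x) ?_ ?_ ?_
  · intro x hx; simpa using hx
  · intro x _ y _ h; exact σ.injective h
  · intro y hy; exact ⟨σ.symm y, by simpa using hy, by simp⟩

lemma wt_comp (r : V → Bool) (c : V → Option (Fin 3)) (σ : V ≃ V) (o) :
    wt (r ∘ σ) (c ∘ σ) o = wt r c o := by
  have : amin (r ∘ σ) (c ∘ σ) = amin r c := by
    unfold amin; simp_rw [cnt_comp]
  cases o <;> simp [wt, this]

lemma cnt_map (r : V → Bool) (c : V → Option (Fin 3)) (π : Fin 3 ≃ Fin 3) (i : Fin 3) :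
    cnt r (fun x => (c x).map π) (π i) = cnt r c i := by
  unfold cnt
  congr 1
  ext x
  simp

lemma wt_map (r : V → Bool) (c : V → Option (Fin 3)) (π : Fin 3 ≃ Fin 3) (i : Fin 3) :
    wt r (fun x => (c x).map π) (some (π i)) = wt r c (some i) := by
  have h1 : ∀ j, π j ∈ amin r (fun x => (c x).map π) ↔ j ∈ amin r c := by
    intro j
    simp only [amin, Finset.mem_filter, Finset.mem_univ, true_and]
    rw [← π.forall_congr_right (q := fun k => cnt r (fun x => (c x).map π) (π j) ≤ cnt r (fun x => (c x).map π) k)]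
    simp_rw [cnt_map]
  have h2 : (amin r (fun x => (c x).map π)) = (amin r c).map π.toEmbedding := by
    ext j
    rw [Finset.mem_map_equiv, ← h1]
    simp
  have h3 : (amin r (fun x => (c x).map π)).card = (amin r c).card := by
    rw [h2, Finset.card_map]
  simp only [wt, h1, h3]

/-- expectation of the weight -/
lemma wt_exp (p : ℝ) (c : V → Option (Fin 3)) (a : ℕ)
    (hc : ∀ i, (Finset.univ.filter fun x => c x = some i).card = a) (i : Fin 3) :
    ∑ r, rowW p r * wt r c (some i) = 1 / 3 := by
  have hsym : ∀ i j : Fin 3, ∑ r, rowW p r * wt r c (some i) = ∑ r, rowW p r * wt r c (some j) := by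
    intro i j
    let π : Fin 3 ≃ Fin 3 := Equiv.swap i j
    obtain ⟨σ, hσ⟩ := exists_perm_of_fibres c (fun x => (c x).map π) (by
      intro k
      cases k with
      | none => congr 1; ext x; simp
      | some k =>
        rw [hc k, ← hc (π.symm k)]
        congr 1; ext x
        simp only [Finset.mem_filter, Finset.mem_univ, true_and, Option.map_eq_some_iff]
        constructor
        · intro h; exact ⟨_, h, by simp⟩
        · rintro ⟨b, hb, rfl⟩; simpa using hb)
    have hσ' : c ∘ σ = fun x => (c x).map π := funext hσ
    calc ∑ r, rowW p r * wt r c (some i)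
        = ∑ r, rowW p r * wt r (fun x => (c x).map π) (some (π i)) := by simp_rw [wt_map]
      _ = ∑ r, rowW p r * wt r (c ∘ σ) (some j) := by rw [hσ']; simp [π]
      _ = ∑ r, rowW p r * wt r c (some j) := by
        symm
        refine Fintype.sum_equiv (Equiv.arrowCongr σ.symm (Equiv.refl Bool)) _ _ fun r => ?_
        have : (Equiv.arrowCongr σ.symm (Equiv.refl Bool)) r = r ∘ σ := by
          ext x; simp [Equiv.arrowCongr]
        rw [this, rowW_comp, wt_comp]
  have h1 : ∑ i, ∑ r, rowW p r * wt r c (some i) = 1 := by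
    rw [Finset.sum_comm]
    simp_rw [← Finset.mul_sum, wt_sum, mul_one]
    exact rowW_sum p
  rw [Fin.sum_univ_three, hsym 0 i, hsym 1 i, hsym 2 i] at h1
  linarith

/-- pair expectation -/
noncomputable def thet (p : ℝ) (g : V → Option (Fin 3) × Option (Fin 3))
    (z : Option (Fin 3) × Option (Fin 3)) : ℝ :=
  ∑ r, rowW p r * (wt r (fun x => (g x).1) z.1 * wt r (fun x => (g x).2) z.2)

lemma thet_nonneg {p : ℝ} (h0 : 0 ≤ p) (h1 : p ≤ 1) (g : V → Option (Fin 3) × Option (Fin 3)) (z) :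
    0 ≤ thet p g z :=
  Finset.sum_nonneg fun r _ => mul_nonneg (rowW_nonneg h0 h1 r)
    (mul_nonneg (wt_nonneg _ _ _) (wt_nonneg _ _ _))

lemma thet_congr (p : ℝ) (g h : V → Option (Fin 3) × Option (Fin 3))
    (H : ∀ k, (Finset.univ.filter fun x => g x = k).card = (Finset.univ.filter fun x => h x = k).card) (z) :
    thet p g z = thet p h z := by
  obtain ⟨σ, hσ⟩ := exists_perm_of_fibres g h H
  have h1 : (fun x => (h x).1) = (fun x => (g x).1) ∘ σ := by ext1 x; simp [hσ]
  have h2 : (fun x => (h x).2) = (fun x => (g x).2) ∘ σ := by ext1 x; simp [hσ]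
  unfold thet
  rw [h1, h2]
  refine Fintype.sum_equiv (Equiv.arrowCongr σ.symm (Equiv.refl Bool)) _ _ fun r => ?_
  have : (Equiv.arrowCongr σ.symm (Equiv.refl Bool)) r = r ∘ σ := by
    ext x; simp [Equiv.arrowCongr]
  rw [this, rowW_comp, wt_comp, wt_comp]

lemma thet_sum (p : ℝ) (g : V → Option (Fin 3) × Option (Fin 3)) :
    ∑ i : Fin 3, ∑ j : Fin 3, thet p g (some i, some j) = 1 := by
  unfold thet
  simp_rw [Finset.sum_comm (s := (Finset.univ : Finset (Fin 3))) (t := (Finset.univ : Finset (V → Bool)))]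
  simp_rw [← Finset.mul_sum, wt_sum, mul_one, wt_sum, mul_one]
  exact rowW_sum p

lemma thet_none (p : ℝ) (g : V → Option (Fin 3) × Option (Fin 3)) :
    thet p g (none, none) = 1 := by
  unfold thet
  simp [wt, rowW_sum]

end Wt

section Second
variable {n : ℕ}

open Classical in
/-- balanced colourings -/
noncomputable def Bal (n a : ℕ) : Finset (Fin n → Option (Fin 3)) :=
  Finset.univ.filter fun c => (∀ x, c x = none ↔ ¬ x.val < 3 * a) ∧
    ∀ i, (Finset.univ.filter fun x => c x = some i).card = a

lemma second_moment {a : ℕ} {p : ℝ} (h0 : 0 ≤ p) (h1 : p ≤ 1) :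
    ∑ A : Fin n → Fin n → Bool, matW p A * (∑ c ∈ Bal n a, ∏ u, wt (A u) c (c u)) ^ 2 ≤
      ((n : ℝ) + 1) ^ 16 := by
  classical
  -- expand
  have e1 : ∑ A : Fin n → Fin n → Bool, matW p A * (∑ c ∈ Bal n a, ∏ u, wt (A u) c (c u)) ^ 2 =
      ∑ q ∈ Bal n a ×ˢ Bal n a, ∏ u, thet p (fun x => (q.1 x, q.2 x)) (q.1 u, q.2 u) := by
    have : ∀ A : Fin n → Fin n → Bool, matW p A * (∑ c ∈ Bal n a, ∏ u, wt (A u) c (c u)) ^ 2 =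
        ∑ q ∈ Bal n a ×ˢ Bal n a, matW p A * ∏ u, (wt (A u) q.1 (q.1 u) * wt (A u) q.2 (q.2 u)) := by
      intro A
      rw [sq, Finset.sum_mul_sum, Finset.sum_product, Finset.mul_sum]
      refine Finset.sum_congr rfl fun c _ => ?_
      rw [Finset.mul_sum]
      refine Finset.sum_congr rfl fun c' _ => ?_
      rw [Finset.prod_mul_distrib]
    simp_rw [this]
    rw [Finset.sum_comm]
    refine Finset.sum_congr rfl fun q _ => ?_
    unfold matW
    rw [sum_pw_mul (rowW p) (fun u r => wt r q.1 (q.1 u) * wt r q.2 (q.2 u))]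
    rfl
  rw [e1]
  let O := Option (Fin 3) × Option (Fin 3)
  let t : Fin n → Finset O := fun u => if u.val < 3 * a then
      (Finset.univ.filter fun z : O => z.1 ≠ none ∧ z.2 ≠ none) else {(none, none)}
  have ht : ∀ (g : Fin n → O) u, ∑ z ∈ t u, thet p g z = 1 := by
    intro g u
    simp only [t]
    split_ifs with hu
    · rw [← thet_sum p g, ← Finset.sum_product']
      symm
      refine Finset.sum_bij (fun q _ => (some q.1, some q.2)) ?_ ?_ ?_ ?_
      · intro q _; simp
      · rintro ⟨q1, q2⟩ _ ⟨q1', q2'⟩ _ h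
        have h' := Prod.mk.inj h
        exact Prod.ext (Option.some.inj h'.1) (Option.some.inj h'.2)
      · rintro ⟨z1, z2⟩ hz
        simp only [Finset.mem_filter, Finset.mem_univ, true_and] at hz
        obtain ⟨i, hi⟩ := Option.ne_none_iff_exists'.1 hz.1
        obtain ⟨j, hj⟩ := Option.ne_none_iff_exists'.1 hz.2
        exact ⟨(i, j), by simp, by simp [hi, hj]⟩
      · intro q _; rfl
    · simp [thet_none]
  let G : Finset (Fin n → O) := Fintype.piFinset t
  let T : (Fin n → O) → ℝ := fun g => ∏ u, thet p g (g u)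
  have hTn : ∀ g, 0 ≤ T g := fun g => Finset.prod_nonneg fun u _ => thet_nonneg h0 h1 _ _
  have e2 : ∑ q ∈ Bal n a ×ˢ Bal n a, ∏ u, thet p (fun x => (q.1 x, q.2 x)) (q.1 u, q.2 u) ≤
      ∑ g ∈ G, T g := by
    have hinj : Set.InjOn (fun q : (Fin n → Option (Fin 3)) × (Fin n → Option (Fin 3)) =>
        (fun x => (q.1 x, q.2 x) : Fin n → O)) (Bal n a ×ˢ Bal n a : Finset _) := by
      rintro ⟨q1, q2⟩ _ ⟨q1', q2'⟩ _ h
      have := fun x => congrFun h x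
      simp only [Prod.mk.injEq] at this
      exact Prod.ext (funext fun x => (this x).1) (funext fun x => (this x).2)
    rw [← Finset.sum_image (f := T) hinj]
    refine Finset.sum_le_sum_of_subset_of_nonneg ?_ fun g _ _ => hTn g
    intro g hg
    rw [Finset.mem_image] at hg
    obtain ⟨q, hq, rfl⟩ := hg
    rw [Finset.mem_product] at hq
    simp only [Bal, Finset.mem_filter, Finset.mem_univ, true_and] at hq
    rw [Fintype.mem_piFinset]
    intro u
    simp only [t]
    split_ifs with hu
    · simp only [Finset.mem_filter, Finset.mem_univ, true_and]
      exact ⟨fun h => (hq.1.1 u).1 h hu, fun h => (hq.2.1 u).1 h hu⟩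
    · simp [(hq.1.1 u).2 hu, (hq.2.1 u).2 hu]
  refine e2.trans ?_
  -- group by profile
  let prof : (Fin n → O) → (O → Fin (n + 1)) := fun g z =>
    ⟨(Finset.univ.filter fun x => g x = z).card, by
      refine Nat.lt_succ_of_le ((Finset.card_le_univ _).trans (by simp))⟩
  rw [← Finset.sum_fiberwise (s := G) (g := prof)]
  have hcardO : Fintype.card (O → Fin (n + 1)) = (n + 1) ^ 16 := by
    rw [Fintype.card_fun]; simp [O]
  have hb : ∀ y ∈ (Finset.univ : Finset (O → Fin (n + 1))), ∑ g ∈ G.filter (fun g => prof g = y), T g ≤ 1 := by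
    intro y _
    by_cases hne : ∃ g0, prof g0 = y
    swap
    · have : G.filter (fun g => prof g = y) = ∅ := by
        rw [Finset.filter_eq_empty_iff]; exact fun g _ h => hne ⟨g, h⟩
      rw [this]; simp
    obtain ⟨g0, hg0⟩ := hne
    calc ∑ g ∈ G.filter (fun g => prof g = y), T g
        = ∑ g ∈ G.filter (fun g => prof g = y), ∏ u, thet p g0 (g u) := by
          refine Finset.sum_congr rfl fun g hg => ?_
          have hg' := (Finset.mem_filter.1 hg).2
          refine Finset.prod_congr rfl fun u _ => thet_congr p g g0 ?_ _
          intro k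
          have := congrFun (hg'.trans hg0.symm) k
          exact congrArg Fin.val this
      _ ≤ ∑ g ∈ G, ∏ u, thet p g0 (g u) :=
          Finset.sum_le_sum_of_subset_of_nonneg (Finset.filter_subset _ _) fun g _ _ =>
            Finset.prod_nonneg fun u _ => thet_nonneg h0 h1 _ _
      _ = ∏ u, ∑ z ∈ t u, thet p g0 z := by rw [Finset.prod_univ_sum]
      _ = 1 := by simp [ht]
  refine (Finset.sum_le_card_nsmul _ _ _ hb).trans ?_
  rw [Finset.card_univ, hcardO]
  simp

end Second


section Act
variable {V : Type*} [Fintype V] [DecidableEq V]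

/-- activity of a vertex of colour `i` with row `r` -/
def actv (c : V → Option (Fin 3)) (i : Fin 3) (S : Finset V) (r : V → Bool) : Prop :=
  ∑ j, cnt r c j < 2 * (cnt r c i + (S.filter fun x => (c x ≠ none ∧ c x ≠ some i) ∧ r x = true).card)

instance (c : V → Option (Fin 3)) (i : Fin 3) (S : Finset V) (r : V → Bool) :
    Decidable (actv c i S r) := by unfold actv; infer_instance

/-- the support inside the coloured vertices is exactly `Q` -/
def exactW (c : V → Option (Fin 3)) (Q : Finset V) (r : V → Bool) : Prop :=
  ∀ x ∈ Finset.univ.filter (fun x => c x ≠ none), r x = decide (x ∈ Q)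

instance (c : V → Option (Fin 3)) (Q : Finset V) (r : V → Bool) :
    Decidable (exactW c Q r) := by unfold exactW; infer_instance

lemma third (i j : Fin 3) (h : j ≠ i) : ∃ k : Fin 3, k ≠ i ∧ k ≠ j ∧
    (Finset.univ : Finset (Fin 3)) = {i, j, k} := by
  revert i j; decide

lemma act_pointwise (c : V → Option (Fin 3)) (i : Fin 3) (S : Finset V) (r : V → Bool) :
    wt r c (some i) * (if actv c i S r then 1 else 0) ≤
      ∑ x ∈ S.filter (fun x => c x ≠ none ∧ c x ≠ some i),
        ((1/2 : ℝ) * (if exactW c {x} r then 1 else 0) + (1/3 : ℝ) *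
          ∑ y ∈ Finset.univ.filter (fun y => c y ≠ none ∧ c y ≠ some i ∧ c y ≠ c x),
            ∑ z ∈ Finset.univ.filter (fun z => c z = some i),
              (if exactW c {x, y, z} r then (1:ℝ) else 0)) +
      (if 2 ≤ (S.filter fun x => r x = true).card then 1 else 0) := by
  set T := S.filter (fun x => c x ≠ none ∧ c x ≠ some i) with hT
  have hin : ∀ x, (0:ℝ) ≤ (1/3 : ℝ) *
          ∑ y ∈ Finset.univ.filter (fun y => c y ≠ none ∧ c y ≠ some i ∧ c y ≠ c x),
            ∑ z ∈ Finset.univ.filter (fun z => c z = some i),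
              (if exactW c {x, y, z} r then (1:ℝ) else 0) := by
    intro x
    refine mul_nonneg (by norm_num) (Finset.sum_nonneg fun y _ => Finset.sum_nonneg fun z _ => ?_)
    split_ifs <;> norm_num
  have hh : ∀ x, (0:ℝ) ≤ (1/2 : ℝ) * (if exactW c {x} r then 1 else 0) := by
    intro x; split_ifs <;> norm_num
  have hterm : ∀ x ∈ T, (0:ℝ) ≤ ((1/2 : ℝ) * (if exactW c {x} r then 1 else 0) + (1/3 : ℝ) *
          ∑ y ∈ Finset.univ.filter (fun y => c y ≠ none ∧ c y ≠ some i ∧ c y ≠ c x),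
            ∑ z ∈ Finset.univ.filter (fun z => c z = some i),
              (if exactW c {x, y, z} r then (1:ℝ) else 0)) := fun x _ => add_nonneg (hh x) (hin x)
  have hlast : (0:ℝ) ≤ (if 2 ≤ (S.filter fun x => r x = true).card then 1 else 0) := by
    split_ifs <;> norm_num
  have hRnn := add_nonneg (Finset.sum_nonneg hterm) hlast
  by_cases hact : actv c i S r
  swap
  · simpa [hact] using hRnn
  by_cases hi : i ∈ amin r c
  swap
  · simpa [wt, hi] using hRnn
  rw [if_pos hact, mul_one]
  unfold actv at hact
  have hmin : ∀ j, cnt r c i ≤ cnt r c j := by simpa [amin] using hi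
  have hTe : (S.filter fun x => (c x ≠ none ∧ c x ≠ some i) ∧ r x = true) = T.filter (fun x => r x = true) := by
    rw [hT, Finset.filter_filter]
  rw [hTe] at hact
  by_cases h2 : 2 ≤ (S.filter fun x => r x = true).card
  · rw [if_pos h2]
    linarith [wt_le_one r c (some i), Finset.sum_nonneg hterm]
  have hle : (T.filter (fun x => r x = true)).card ≤ (S.filter fun x => r x = true).card :=
    Finset.card_le_card (Finset.filter_subset_filter _ (Finset.filter_subset _ _))
  have h3 : (T.filter (fun x => r x = true)).card = 1 := by
    rcases Nat.eq_zero_or_pos (T.filter (fun x => r x = true)).card with h0 | h0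
    · exfalso
      rw [h0] at hact
      have := hmin 0; have := hmin 1; have := hmin 2
      rw [Fin.sum_univ_three] at hact
      omega
    · omega
  rw [h3] at hact
  obtain ⟨x, hx⟩ := Finset.card_eq_one.1 h3
  have hxT : x ∈ T ∧ r x = true := by
    have : x ∈ T.filter (fun x => r x = true) := by rw [hx]; simp
    simpa using this
  have hxc := (Finset.mem_filter.1 hxT.1).2
  obtain ⟨j, hj⟩ := Option.ne_none_iff_exists'.1 hxc.1
  have hji : j ≠ i := by
    intro h; subst h; exact hxc.2 hj
  obtain ⟨k, hki, hkj, huniv⟩ := third i j hji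
  have hsum : ∑ l, cnt r c l = cnt r c i + cnt r c j + cnt r c k := by
    rw [huniv, Finset.sum_insert, Finset.sum_insert, Finset.sum_singleton, add_assoc]
    · simp [hkj.symm]
    · simp [hji.symm, hki.symm]
  have hcases : ∀ l : Fin 3, l = i ∨ l = j ∨ l = k := by
    intro l
    have : l ∈ (Finset.univ : Finset (Fin 3)) := Finset.mem_univ l
    rw [huniv] at this; simpa using this
  have hxj : x ∈ Finset.univ.filter (fun x => r x = true ∧ c x = some j) := by simp [hxT.2, hj]
  have hjpos : 1 ≤ cnt r c j := Finset.card_pos.2 ⟨x, hxj⟩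
  rw [hsum] at hact
  have hmj := hmin j
  have hmk := hmin k
  have key : (cnt r c i = 0 ∧ cnt r c j = 1 ∧ cnt r c k = 0) ∨
      (cnt r c i = 1 ∧ cnt r c j = 1 ∧ cnt r c k = 1) := by omega
  have hone : cnt r c j = 1 := by omega
  have huj : ∀ w, r w = true → c w = some j → w = x := by
    intro w hw hw'
    obtain ⟨x', hx'⟩ := Finset.card_eq_one.1 hone
    have e1 : w ∈ ({x'} : Finset V) := by rw [← hx']; simp [hw, hw']
    have e2 : x ∈ ({x'} : Finset V) := by rw [← hx']; exact hxj
    simp at e1 e2; rw [e1, e2]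
  have hle2 : ∀ v : ℝ, v ≤ ((1/2 : ℝ) * (if exactW c {x} r then 1 else 0) + (1/3 : ℝ) *
          ∑ y ∈ Finset.univ.filter (fun y => c y ≠ none ∧ c y ≠ some i ∧ c y ≠ c x),
            ∑ z ∈ Finset.univ.filter (fun z => c z = some i),
              (if exactW c {x, y, z} r then (1:ℝ) else 0)) → v ≤ _ := fun v hv =>
    hv.trans ((Finset.single_le_sum hterm hxT.1).trans (le_add_of_nonneg_right hlast))
  apply hle2
  rcases key with ⟨k1, k2, k3⟩ | ⟨k1, k2, k3⟩
  · have hex : exactW c {x} r := by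
      intro w hw
      obtain ⟨l, hl⟩ := Option.ne_none_iff_exists'.1 (Finset.mem_filter.1 hw).2
      by_cases hwx : w = x
      · subst hwx; simp [hxT.2]
      · simp only [Finset.mem_singleton, hwx, decide_false]
        by_contra hcon
        have hrw : r w = true := by simpa using hcon
        rcases hcases l with h | h | h
        · subst h
          have := Finset.card_eq_zero.1 k1
          have hm : w ∈ (∅ : Finset V) := by rw [← this]; simp [hrw, hl]
          simp at hm
        · subst h; exact hwx (huj w hrw hl)
        · subst h
          have := Finset.card_eq_zero.1 k3
          have hm : w ∈ (∅ : Finset V) := by rw [← this]; simp [hrw, hl]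
          simp at hm
    rw [if_pos hex, mul_one]
    refine le_trans ?_ (le_add_of_nonneg_right (hin x))
    have hk : k ∈ amin r c := by simp [amin, k3]
    have hcard : 2 ≤ (amin r c).card := by
      rw [← Finset.card_pair hki]
      exact Finset.card_le_card (by intro y hy; simp at hy; rcases hy with rfl | rfl <;> assumption)
    simp only [wt, if_pos hi]
    rw [one_div]
    exact inv_anti₀ (by norm_num) (by exact_mod_cast hcard)
  · obtain ⟨y, hy⟩ := Finset.card_eq_one.1 k3
    obtain ⟨z, hz⟩ := Finset.card_eq_one.1 k1
    have hy' : r y = true ∧ c y = some k := by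
      have : y ∈ ({y} : Finset V) := by simp
      rw [← hy] at this; simpa using this
    have hz' : r z = true ∧ c z = some i := by
      have : z ∈ ({z} : Finset V) := by simp
      rw [← hz] at this; simpa using this
    have hex : exactW c {x, y, z} r := by
      intro w hw
      obtain ⟨l, hl⟩ := Option.ne_none_iff_exists'.1 (Finset.mem_filter.1 hw).2
      by_cases hwx : w ∈ ({x, y, z} : Finset V)
      · have hrw : r w = true := by
          simp at hwx
          rcases hwx with rfl | rfl | rfl
          · exact hxT.2
          · exact hy'.1
          · exact hz'.1
        simp [hwx, hrw]
      · rw [decide_eq_false hwx]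
        by_contra hcon
        have hrw : r w = true := by simpa using hcon
        apply hwx
        rcases hcases l with h | h | h
        · subst h
          have hm : w ∈ ({z} : Finset V) := by rw [← hz]; simp [hrw, hl]
          simp at hm; simp [hm]
        · subst h; simp [huj w hrw hl]
        · subst h
          have hm : w ∈ ({y} : Finset V) := by rw [← hy]; simp [hrw, hl]
          simp at hm; simp [hm]
    refine le_trans ?_ (le_add_of_nonneg_left (hh x))
    have hall : amin r c = Finset.univ := by
      ext l; simp only [amin, Finset.mem_filter, Finset.mem_univ, true_and, iff_true]
      intro l'
      rcases hcases l with rfl | rfl | rfl <;> rcases hcases l' with rfl | rfl | rfl <;> omega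
    have hw3 : wt r c (some i) = 1/3 * 1 := by simp [wt, hall]
    rw [hw3]
    refine mul_le_mul_of_nonneg_left ?_ (by norm_num)
    have hym : y ∈ Finset.univ.filter (fun y => c y ≠ none ∧ c y ≠ some i ∧ c y ≠ c x) := by
      simp [hy'.2, hj, hki, hkj]
    have hzm : z ∈ Finset.univ.filter (fun z => c z = some i) := by simp [hz'.2]
    refine le_trans ?_ (Finset.single_le_sum (fun y _ => Finset.sum_nonneg fun z _ => ?_) hym)
    · refine le_trans ?_ (Finset.single_le_sum (fun z _ => ?_) hzm)
      · rw [if_pos hex]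
      · split_ifs <;> norm_num
    · split_ifs <;> norm_num
end Act


section ActExp
variable {V : Type*} [Fintype V] [DecidableEq V]

lemma card_coloured (c : V → Option (Fin 3)) (a : ℕ)
    (hc : ∀ i, (Finset.univ.filter fun x => c x = some i).card = a) :
    (Finset.univ.filter fun x => c x ≠ none).card = 3 * a := by
  have h : (Finset.univ.filter fun x => c x ≠ none) =
      (Finset.univ : Finset (Fin 3)).biUnion (fun i => Finset.univ.filter fun x => c x = some i) := by
    ext x; simp [Option.ne_none_iff_exists']
  rw [h, Finset.card_biUnion]
  · simp [hc]
  · intro i _ j _ hij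
    rw [Function.onFun, Finset.disjoint_filter]
    intro x _ h1 h2
    rw [h1] at h2; exact hij (Option.some.inj h2)

lemma act_exp {p : ℝ} (h0 : 0 ≤ p) (h1 : p ≤ 1) (c : V → Option (Fin 3)) (a : ℕ) (ha : 1 ≤ a)
    (hc : ∀ i, (Finset.univ.filter fun x => c x = some i).card = a) (i : Fin 3) (S : Finset V) :
    ∑ r, rowW p r * (wt r c (some i) * (if actv c i S r then 1 else 0)) ≤
      ((S.filter (fun x => c x ≠ none ∧ c x ≠ some i)).card : ℝ) *
        (p * (1 - p) ^ (3 * a - 3) * (1/2 + (a:ℝ)^2 * p^2 / 3)) + (S.card : ℝ)^2 * p^2 / 2 := by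
  have hW := card_coloured c a hc
  have hE : ∀ Q : Finset V, (∀ x ∈ Q, c x ≠ none) →
      ∑ r, rowW p r * (if exactW c Q r then (1:ℝ) else 0) = p ^ Q.card * (1 - p) ^ (3 * a - Q.card) := by
    intro Q hQ
    rw [← Prw_eq_sum, ← hW]
    exact row_exact p _ Q (by intro x hx; simp [hQ x hx])
  have hq0 : 0 ≤ 1 - p := by linarith
  have hq1 : 1 - p ≤ 1 := by linarith
  refine (Finset.sum_le_sum fun r _ => mul_le_mul_of_nonneg_left (act_pointwise c i S r)
    (rowW_nonneg h0 h1 r)).trans ?_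
  rw [Finset.sum_congr rfl (fun r _ => mul_add _ _ _), Finset.sum_add_distrib]
  refine add_le_add ?_ ?_
  swap
  · rw [← Prw_eq_sum]; exact row_two_le h0 h1 S
  have hsw : ∑ r, rowW p r * ∑ x ∈ S.filter (fun x => c x ≠ none ∧ c x ≠ some i),
        ((1/2 : ℝ) * (if exactW c {x} r then 1 else 0) + (1/3 : ℝ) *
          ∑ y ∈ Finset.univ.filter (fun y => c y ≠ none ∧ c y ≠ some i ∧ c y ≠ c x),
            ∑ z ∈ Finset.univ.filter (fun z => c z = some i),
              (if exactW c {x, y, z} r then (1:ℝ) else 0)) =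
      ∑ x ∈ S.filter (fun x => c x ≠ none ∧ c x ≠ some i),
        ((1/2 : ℝ) * (∑ r, rowW p r * (if exactW c {x} r then 1 else 0)) + (1/3 : ℝ) *
          ∑ y ∈ Finset.univ.filter (fun y => c y ≠ none ∧ c y ≠ some i ∧ c y ≠ c x),
            ∑ z ∈ Finset.univ.filter (fun z => c z = some i),
              ∑ r, rowW p r * (if exactW c {x, y, z} r then (1:ℝ) else 0)) := by
    simp_rw [Finset.mul_sum]
    rw [Finset.sum_comm]
    refine Finset.sum_congr rfl fun x _ => ?_
    simp_rw [mul_add, Finset.sum_add_distrib]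
    congr 1
    · refine Finset.sum_congr rfl fun r _ => by ring
    · simp_rw [Finset.mul_sum]
      rw [Finset.sum_comm]
      refine Finset.sum_congr rfl fun y _ => ?_
      rw [Finset.sum_comm]
      refine Finset.sum_congr rfl fun z _ => ?_
      refine Finset.sum_congr rfl fun r _ => by ring
  rw [hsw, ← nsmul_eq_mul]
  refine Finset.sum_le_card_nsmul _ _ _ fun x hx => ?_
  have hxc := (Finset.mem_filter.1 hx).2
  obtain ⟨j, hj⟩ := Option.ne_none_iff_exists'.1 hxc.1
  have hji : j ≠ i := by
    intro h; subst h; exact hxc.2 hj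
  obtain ⟨k, hki, hkj, huniv⟩ := third i j hji
  have hcases : ∀ l : Fin 3, l = i ∨ l = j ∨ l = k := by
    intro l
    have : l ∈ (Finset.univ : Finset (Fin 3)) := Finset.mem_univ l
    rw [huniv] at this; simpa using this
  have hset : Finset.univ.filter (fun y => c y ≠ none ∧ c y ≠ some i ∧ c y ≠ c x) =
      Finset.univ.filter (fun y => c y = some k) := by
    ext y
    simp only [Finset.mem_filter, Finset.mem_univ, true_and, hj]
    constructor
    · rintro ⟨g1, g2, g3⟩
      obtain ⟨l, hl⟩ := Option.ne_none_iff_exists'.1 g1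
      rw [hl] at g2 g3 ⊢
      rcases hcases l with rfl | rfl | rfl
      · exact absurd rfl g2
      · exact absurd rfl g3
      · rfl
    · intro h; rw [h]; simp [hki, hkj]
  rw [hset, hE {x} (by simpa using hxc.1)]
  have hin : ∑ y ∈ Finset.univ.filter (fun y => c y = some k),
      ∑ z ∈ Finset.univ.filter (fun z => c z = some i),
        ∑ r, rowW p r * (if exactW c {x, y, z} r then (1:ℝ) else 0) =
      (a:ℝ) * (a * (p ^ 3 * (1 - p) ^ (3 * a - 3))) := by
    have : ∀ y ∈ Finset.univ.filter (fun y => c y = some k),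
        ∑ z ∈ Finset.univ.filter (fun z => c z = some i),
        ∑ r, rowW p r * (if exactW c {x, y, z} r then (1:ℝ) else 0) = a * (p ^ 3 * (1 - p) ^ (3 * a - 3)) := by
      intro y hy
      have hy' : c y = some k := by simpa using hy
      have : ∀ z ∈ Finset.univ.filter (fun z => c z = some i),
        ∑ r, rowW p r * (if exactW c {x, y, z} r then (1:ℝ) else 0) = p ^ 3 * (1 - p) ^ (3 * a - 3) := by
        intro z hz
        have hz' : c z = some i := by simpa using hz
        have hcard : ({x, y, z} : Finset V).card = 3 := by
          rw [Finset.card_eq_three]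
          refine ⟨x, y, z, ?_, ?_, ?_, rfl⟩
          · rintro rfl; rw [hj] at hy'; exact hkj (Option.some.inj hy').symm
          · rintro rfl; rw [hj] at hz'; exact hji (Option.some.inj hz')
          · rintro rfl; rw [hy'] at hz'; exact hki (Option.some.inj hz')
        rw [hE, hcard]
        intro w hw
        simp at hw
        rcases hw with rfl | rfl | rfl
        · exact hxc.1
        · rw [hy']; simp
        · rw [hz']; simp
      rw [Finset.sum_congr rfl this, Finset.sum_const, hc, nsmul_eq_mul]
    rw [Finset.sum_congr rfl this, Finset.sum_const, hc, nsmul_eq_mul]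
  rw [hin, Finset.card_singleton, pow_one]
  have hpow : (1 - p) ^ (3 * a - 1) ≤ (1 - p) ^ (3 * a - 3) :=
    pow_le_pow_of_le_one hq0 hq1 (by omega)
  nlinarith [mul_le_mul_of_nonneg_left hpow h0]
end ActExp


section Bad
variable {V : Type*} [Fintype V] [DecidableEq V]

/-- activity of the vertex `u` -/
def actU (c : V → Option (Fin 3)) (u : V) (S : Finset V) (r : V → Bool) : Prop :=
  ∃ i, c u = some i ∧ actv c i S r

/-- goodness of the colouring -/
def goodC (c : V → Option (Fin 3)) (k m : ℕ) (A : V → V → Bool) : Prop :=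
  ∀ S B0 : Finset V, (∀ x, c x = none → x ∈ B0) → B0 ⊆ S → S.card = m → B0.card = k →
    ∃ u ∈ S \ B0, ¬ actU c u S (A u)

/-- the main rate -/
noncomputable def lam (a m : ℕ) (p : ℝ) : ℝ :=
  (1 - p) ^ (3 * a - 3) * (1 + 2 * (a:ℝ)^2 * p^2 / 3) + 5 * m * p

lemma act_exp2 {p : ℝ} (h0 : 0 ≤ p) (h1 : p ≤ 1) (c : V → Option (Fin 3)) (a : ℕ) (ha : 1 ≤ a)
    (hc : ∀ i, (Finset.univ.filter fun x => c x = some i).card = a) (i : Fin 3) (S : Finset V)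
    (m : ℕ) (hm : 1 ≤ m) (hS : S.card = m) :
    ∑ r, rowW p r * (wt r c (some i) * (if actv c i S r then 1 else 0)) ≤
      1 / 3 * ((m * p * lam a m p) *
        Real.exp (1/2 - 3/2 * ((S.filter fun x => c x = some i).card : ℝ) / m)) := by
  have hmr : (0:ℝ) < m := by exact_mod_cast hm
  refine (act_exp h0 h1 c a ha hc i S).trans ?_
  set s : ℝ := ((S.filter fun x => c x = some i).card : ℝ) with hs
  have hsm : s ≤ m := by
    rw [hs, ← hS]; exact_mod_cast Finset.card_filter_le _ _
  have hT : ((S.filter (fun x => c x ≠ none ∧ c x ≠ some i)).card : ℝ) ≤ m - s := by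
    have : (S.filter (fun x => c x ≠ none ∧ c x ≠ some i)).card + (S.filter fun x => c x = some i).card ≤ m := by
      rw [← hS, ← Finset.card_union_of_disjoint]
      · exact Finset.card_le_card (Finset.union_subset (Finset.filter_subset _ _) (Finset.filter_subset _ _))
      · rw [Finset.disjoint_filter]; intro x _ h1 h2; exact h1.2 h2
    rw [hs, le_sub_iff_add_le]; exact_mod_cast this
  have hs0 : 0 ≤ s := by positivity
  set E := Real.exp (1/2 - 3/2 * s / m) with hE
  have hdiv : s / m ≤ 1 := by rw [div_le_one hmr]; exact hsm
  have hE1 : 3/2 * (1 - s / m) ≤ E := by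
    have := Real.add_one_le_exp (1/2 - 3/2 * s / m)
    rw [hE]; have e : 3/2 * s / (m:ℝ) = 3/2 * (s / m) := by ring
    rw [e] at this ⊢; linarith
  have hE2 : 3/2 ≤ 5 * E := by
    have h1 : Real.exp (-1) ≤ E := by
      rw [hE]; apply Real.exp_le_exp.2
      have e : 3/2 * s / (m:ℝ) = 3/2 * (s / m) := by ring
      rw [e]; linarith
    have h2 : (0.36 : ℝ) < Real.exp (-1) := by
      have := Real.exp_neg_one_gt_d9; linarith
    linarith
  set q := (1 - p) ^ (3 * a - 3) with hq
  have hq0 : 0 ≤ q := pow_nonneg (by linarith) _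
  rw [hS]
  have key : (m - s) * (p * q * (1/2 + (a:ℝ)^2 * p^2 / 3)) ≤
      1/3 * (m * p * (q * (1 + 2 * (a:ℝ)^2 * p^2 / 3)) * E) := by
    have e1 : (m - s) * (p * q * (1/2 + (a:ℝ)^2 * p^2 / 3)) =
      1/3 * (m * p * (q * (1 + 2 * (a:ℝ)^2 * p^2 / 3)) * (3/2 * (1 - s/m))) := by
      field_simp
    rw [e1]
    have : 0 ≤ m * p * (q * (1 + 2 * (a:ℝ)^2 * p^2 / 3)) := by positivity
    have := mul_le_mul_of_nonneg_left hE1 this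
    linarith
  have key2 : (m:ℝ)^2 * p^2 / 2 ≤ 1/3 * (m * p * (5 * m * p) * E) := by
    have : 0 ≤ (m:ℝ)^2 * p^2 := by positivity
    nlinarith [mul_le_mul_of_nonneg_left hE2 this]
  have key3 : ((S.filter (fun x => c x ≠ none ∧ c x ≠ some i)).card : ℝ) * (p * q * (1/2 + (a:ℝ)^2 * p^2 / 3))
      ≤ (m - s) * (p * q * (1/2 + (a:ℝ)^2 * p^2 / 3)) :=
    mul_le_mul_of_nonneg_right hT (by positivity)
  unfold lam
  rw [← hq]
  calc _ ≤ 1/3 * (m * p * (q * (1 + 2 * (a:ℝ)^2 * p^2 / 3)) * E) + 1/3 * (m * p * (5 * m * p) * E) := by linarith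
    _ = _ := by ring

lemma lam_nonneg {p : ℝ} (h0 : 0 ≤ p) (h1 : p ≤ 1) (a m : ℕ) : 0 ≤ lam a m p := by
  have : 0 ≤ (1 - p) ^ (3 * a - 3) := pow_nonneg (by linarith) _
  unfold lam; positivity

/-- the exponent in the entropy estimate -/
lemma exponent_le (c : V → Option (Fin 3)) (S B0 : Finset V) (m k : ℕ) (hm : 1 ≤ m)
    (hL : ∀ x, c x = none → x ∈ B0) (hB : B0 ⊆ S) (hS : S.card = m) (hk : B0.card = k) :
    ∑ u ∈ S \ B0, (1/2 - 3/2 * ((S.filter fun x => c x = c u).card : ℝ) / m) ≤ k := by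
  have hmr : (0:ℝ) < m := by exact_mod_cast hm
  set e : V → ℝ := fun u => 1/2 - 3/2 * ((S.filter fun x => c x = c u).card : ℝ) / m with he
  have hlow : ∀ u, -1 ≤ e u := by
    intro u
    have : ((S.filter fun x => c x = c u).card : ℝ) / m ≤ 1 := by
      rw [div_le_one hmr, ← hS]; exact_mod_cast Finset.card_filter_le _ _
    simp only [he]
    have e' : 3/2 * ((S.filter fun x => c x = c u).card : ℝ) / (m:ℝ) = 3/2 * (((S.filter fun x => c x = c u).card : ℝ) / m) := by ring
    rw [e']; linarith
  have hset : S \ B0 = (S.filter fun x => c x ≠ none) \ (B0.filter fun x => c x ≠ none) := by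
    ext x
    simp only [Finset.mem_sdiff, Finset.mem_filter]
    by_cases hx : c x = none
    · simp [hx, hL x hx]
    · simp [hx]
  have hsub : (B0.filter fun x => c x ≠ none) ⊆ (S.filter fun x => c x ≠ none) :=
    Finset.filter_subset_filter _ hB
  have h1 : ∑ u ∈ S \ B0, e u = ∑ u ∈ S.filter (fun x => c x ≠ none), e u -
      ∑ u ∈ B0.filter (fun x => c x ≠ none), e u := by
    rw [hset, ← Finset.sum_sdiff hsub]; ring
  have h2 : -((B0.filter (fun x => c x ≠ none)).card : ℝ) ≤ ∑ u ∈ B0.filter (fun x => c x ≠ none), e u := by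
    have := Finset.card_nsmul_le_sum (B0.filter (fun x => c x ≠ none)) e (-1) (fun u _ => hlow u)
    simpa using this
  have hcB := Finset.card_filter_add_card_filter_not (s := B0) (fun x => c x ≠ none)
  have hcS := Finset.card_filter_add_card_filter_not (s := S) (fun x => c x ≠ none)
  have hnone : (B0.filter fun x => ¬ (c x ≠ none)) = (S.filter fun x => ¬ (c x ≠ none)) := by
    ext x
    simp only [Finset.mem_filter, not_not]
    exact ⟨fun h => ⟨hB h.1, h.2⟩, fun h => ⟨hL x h.2, h.2⟩⟩
  rw [hnone, hk] at hcB
  rw [hS] at hcS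
  set s : Fin 3 → ℝ := fun i => ((S.filter fun x => c x = some i).card : ℝ) with hs
  have hbi : (S.filter fun x => c x ≠ none) =
      (Finset.univ : Finset (Fin 3)).biUnion (fun i => S.filter fun x => c x = some i) := by
    ext x; simp [Option.ne_none_iff_exists']
  have hdis : ∀ i ∈ (Finset.univ : Finset (Fin 3)), ∀ j ∈ (Finset.univ : Finset (Fin 3)), i ≠ j →
      Disjoint (S.filter fun x => c x = some i) (S.filter fun x => c x = some j) := by
    intro i _ j _ hij
    rw [Finset.disjoint_filter]
    intro x _ h1 h2
    rw [h1] at h2; exact hij (Option.some.inj h2)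
  have h3 : ∑ u ∈ S.filter (fun x => c x ≠ none), e u = ∑ i, s i * (1/2 - 3/2 * s i / m) := by
    rw [hbi, Finset.sum_biUnion hdis]
    refine Finset.sum_congr rfl fun i _ => ?_
    rw [Finset.sum_congr rfl (g := fun _ => 1/2 - 3/2 * s i / m), Finset.sum_const, nsmul_eq_mul]
    intro u hu
    have : c u = some i := (Finset.mem_filter.1 hu).2
    simp only [he, hs, this]
  have h4 : ((S.filter fun x => c x ≠ none).card : ℝ) = ∑ i, s i := by
    rw [hbi, Finset.card_biUnion hdis]; push_cast; rfl
  have h5 : ∑ i, s i * (1/2 - 3/2 * s i / m) ≤ 1/2 * (m - ∑ i, s i) := by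
    rw [Fin.sum_univ_three, Fin.sum_univ_three]
    have : s 0 * (1/2 - 3/2 * s 0 / m) + s 1 * (1/2 - 3/2 * s 1 / m) + s 2 * (1/2 - 3/2 * s 2 / m)
      = ((s 0 + s 1 + s 2) * m - 3 * (s 0 ^2 + s 1 ^2 + s 2 ^ 2)) / (2 * m) := by
      field_simp
      ring
    rw [this, div_le_iff₀ (by positivity)]
    nlinarith [sq_nonneg (m - (s 0 + s 1 + s 2)), sq_nonneg (s 0 - s 1), sq_nonneg (s 1 - s 2), sq_nonneg (s 0 - s 2)]
  have hcBr : ((B0.filter (fun x => c x ≠ none)).card : ℝ) + ((S.filter fun x => ¬ (c x ≠ none)).card : ℝ) = k := by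
    exact_mod_cast hcB
  have hcSr : ((S.filter (fun x => c x ≠ none)).card : ℝ) + ((S.filter fun x => ¬ (c x ≠ none)).card : ℝ) = m := by
    exact_mod_cast hcS
  have hnn : (0:ℝ) ≤ ((S.filter fun x => ¬ (c x ≠ none)).card : ℝ) := by positivity
  rw [h1]
  linarith

open Classical in
lemma bad_pair {p : ℝ} (h0 : 0 ≤ p) (h1 : p ≤ 1) (c : V → Option (Fin 3)) (a : ℕ) (ha : 1 ≤ a)
    (hc : ∀ i, (Finset.univ.filter fun x => c x = some i).card = a) (S B0 : Finset V) (m k : ℕ) (hm : 1 ≤ m)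
    (hL : ∀ x, c x = none → x ∈ B0) (hB : B0 ⊆ S) (hS : S.card = m) (hk : B0.card = k) :
    ∑ A : V → V → Bool, matW p A * ((∏ u, wt (A u) c (c u)) *
      (if ∀ u ∈ S \ B0, actU c u S (A u) then 1 else 0)) ≤
    (1/3)^(3 * a) * ((m * p * lam a m p) ^ (m - k) * Real.exp k) := by
  have hx : 0 ≤ m * p * lam a m p := by have := lam_nonneg h0 h1 a m; positivity
  have e1 : ∀ A : V → V → Bool, (∏ u, wt (A u) c (c u)) *
      (if ∀ u ∈ S \ B0, actU c u S (A u) then (1:ℝ) else 0) =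
      ∏ u, (wt (A u) c (c u) * (if u ∈ S \ B0 → actU c u S (A u) then (1:ℝ) else 0)) := by
    intro A
    rw [Finset.prod_mul_distrib, Finset.prod_ite_zero]
    simp
  simp_rw [e1]
  unfold matW
  rw [sum_pw_mul (rowW p) (fun u r => wt r c (c u) * (if u ∈ S \ B0 → actU c u S r then (1:ℝ) else 0))]
  set e : V → ℝ := fun u => 1/2 - 3/2 * ((S.filter fun x => c x = c u).card : ℝ) / m with he
  have step : ∀ u, ∑ r, rowW p r * (wt r c (c u) * (if u ∈ S \ B0 → actU c u S r then (1:ℝ) else 0)) ≤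
      (if c u = none then 1 else 1/3) * (if u ∈ S \ B0 then (m * p * lam a m p) * Real.exp (e u) else 1) := by
    intro u
    by_cases hu : u ∈ S \ B0
    · have hne : c u ≠ none := fun h => (Finset.mem_sdiff.1 hu).2 (hL u h)
      obtain ⟨i, hi⟩ := Option.ne_none_iff_exists'.1 hne
      rw [if_neg hne, if_pos hu]
      refine le_trans (le_of_eq ?_) ((act_exp2 h0 h1 c a ha hc i S m hm hS).trans (le_of_eq ?_))
      · refine Finset.sum_congr rfl fun r _ => ?_
        have : (u ∈ S \ B0 → actU c u S r) ↔ actv c i S r := by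
          simp only [hu, actU, hi, true_imp_iff]
          constructor
          · rintro ⟨j, hj, h⟩; rw [Option.some.inj hj]; exact h
          · intro h; exact ⟨i, rfl, h⟩
        rw [hi]; simp only [this]
      · simp only [he, hi]
    · rw [if_neg hu, mul_one]
      simp only [hu, false_imp_iff, if_true, mul_one]
      by_cases hne : c u = none
      · rw [if_pos hne, hne]; simp [wt, rowW_sum]
      · obtain ⟨i, hi⟩ := Option.ne_none_iff_exists'.1 hne
        rw [if_neg hne, hi, wt_exp p c a hc i]
  refine (Finset.prod_le_prod (fun u _ => Finset.sum_nonneg fun r _ => mul_nonneg (rowW_nonneg h0 h1 r)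
    (mul_nonneg (wt_nonneg _ _ _) (by split_ifs <;> norm_num))) (fun u _ => step u)).trans ?_
  rw [Finset.prod_mul_distrib]
  have hp1 : ∏ u, (if c u = none then (1:ℝ) else 1/3) = (1/3)^(3*a) := by
    rw [Finset.prod_ite, Finset.prod_const_one, one_mul, Finset.prod_const]
    congr 1
    rw [← card_coloured c a hc]
  rw [hp1]
  refine mul_le_mul_of_nonneg_left ?_ (by positivity)
  rw [Finset.prod_ite_mem, Finset.univ_inter, Finset.prod_mul_distrib, Finset.prod_const, ← Real.exp_sum,
    Finset.card_sdiff_of_subset hB, hS, hk]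
  refine mul_le_mul_of_nonneg_left ?_ (by positivity)
  exact Real.exp_le_exp.2 (exponent_le c S B0 m k hm hL hB hS hk)

open Classical in
lemma bad_bound {p : ℝ} (h0 : 0 ≤ p) (h1 : p ≤ 1) (c : V → Option (Fin 3)) (a : ℕ) (ha : 1 ≤ a)
    (hc : ∀ i, (Finset.univ.filter fun x => c x = some i).card = a) (m k : ℕ) (hm : 1 ≤ m) :
    ∑ A : V → V → Bool, matW p A * ((∏ u, wt (A u) c (c u)) * (if goodC c k m A then 0 else 1)) ≤
    ((Fintype.card V).choose m * m.choose k : ℝ) *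
      ((1/3)^(3 * a) * ((m * p * lam a m p) ^ (m - k) * Real.exp k)) := by
  have hx : 0 ≤ m * p * lam a m p := by have := lam_nonneg h0 h1 a m; positivity
  have pt : ∀ A : V → V → Bool, matW p A * ((∏ u, wt (A u) c (c u)) * (if goodC c k m A then (0:ℝ) else 1)) ≤
      ∑ S ∈ Finset.univ.powersetCard m, ∑ B0 ∈ S.powersetCard k,
        (if ∀ x, c x = none → x ∈ B0 then matW p A * ((∏ u, wt (A u) c (c u)) *
          (if ∀ u ∈ S \ B0, actU c u S (A u) then 1 else 0)) else 0) := by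
    intro A
    have hw : 0 ≤ ∏ u, wt (A u) c (c u) := Finset.prod_nonneg fun u _ => wt_nonneg _ _ _
    have hm0 := matW_nonneg h0 h1 A
    have hnn : ∀ S B0 : Finset V, 0 ≤ (if ∀ x, c x = none → x ∈ B0 then matW p A * ((∏ u, wt (A u) c (c u)) *
          (if ∀ u ∈ S \ B0, actU c u S (A u) then (1:ℝ) else 0)) else 0) := by
      intro S B0
      split_ifs <;> positivity
    by_cases hg : goodC c k m A
    · simp only [hg, if_true, mul_zero]
      exact Finset.sum_nonneg fun S _ => Finset.sum_nonneg fun B0 _ => hnn S B0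
    · have hg' := hg
      unfold goodC at hg'
      push Not at hg'
      obtain ⟨S, B0, g1, g2, g3, g4, g5⟩ := hg'
      refine le_trans ?_ (Finset.single_le_sum (fun S _ => Finset.sum_nonneg fun B0 _ => hnn S B0)
        (show S ∈ Finset.univ.powersetCard m by simp [Finset.mem_powersetCard, g3]))
      refine le_trans ?_ (Finset.single_le_sum (fun B0 _ => hnn S B0)
        (show B0 ∈ S.powersetCard k by simp [Finset.mem_powersetCard, g2, g4]))
      rw [if_pos g1, if_pos g5, if_neg hg]
  refine (Finset.sum_le_sum fun A _ => pt A).trans ?_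
  rw [Finset.sum_comm]
  have bd : ∀ S ∈ (Finset.univ : Finset V).powersetCard m, ∑ A : V → V → Bool, ∑ B0 ∈ S.powersetCard k,
        (if ∀ x, c x = none → x ∈ B0 then matW p A * ((∏ u, wt (A u) c (c u)) *
          (if ∀ u ∈ S \ B0, actU c u S (A u) then (1:ℝ) else 0)) else 0) ≤
      (m.choose k : ℝ) * ((1/3)^(3 * a) * ((m * p * lam a m p) ^ (m - k) * Real.exp k)) := by
    intro S hS
    have hS' := (Finset.mem_powersetCard.1 hS).2
    rw [Finset.sum_comm, ← hS', ← Finset.card_powersetCard, ← nsmul_eq_mul]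
    refine Finset.sum_le_card_nsmul _ _ _ fun B0 hB => ?_
    have hB' := Finset.mem_powersetCard.1 hB
    by_cases hL : ∀ x, c x = none → x ∈ B0
    · rw [Finset.sum_congr rfl (fun A _ => if_pos hL)]
      exact bad_pair h0 h1 c a ha hc S B0 S.card k (by omega) hL hB'.1 rfl hB'.2
    · rw [Finset.sum_congr rfl (fun A _ => if_neg hL), Finset.sum_const_zero]
      have := lam_nonneg h0 h1 a S.card
      positivity
  refine (Finset.sum_le_card_nsmul _ _ _ bd).trans ?_
  rw [Finset.card_powersetCard, Finset.card_univ, nsmul_eq_mul]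
  exact le_of_eq (mul_assoc _ _ _).symm
end Bad


lemma fact_bound (a : ℕ) (ha : 1 ≤ a) : 27 ^ a * (a.factorial) ^ 3 ≤ 5 * a ^ 2 * (3 * a).factorial := by
  induction a, ha using Nat.le_induction with
  | base => norm_num [Nat.factorial]
  | succ a ha ih =>
    have e : (3 * (a + 1)).factorial = (3 * a + 3) * ((3 * a + 2) * ((3 * a + 1) * (3 * a).factorial)) := by
      rw [show 3 * (a + 1) = 3 * a + 2 + 1 by ring, Nat.factorial_succ, Nat.factorial_succ, Nat.factorial_succ]
    rw [e, Nat.factorial_succ]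
    calc 27 ^ (a + 1) * ((a + 1) * a.factorial) ^ 3 = 27 * (a+1)^3 * (27 ^ a * a.factorial ^ 3) := by ring
      _ ≤ 27 * (a+1)^3 * (5 * a ^ 2 * (3 * a).factorial) := Nat.mul_le_mul_left _ ih
      _ = 5 * (a+1)^2 * (3 * a).factorial * (3 * (a + 1) * (9 * a^2)) := by ring
      _ ≤ 5 * (a+1)^2 * (3 * a).factorial * (3 * (a + 1) * ((3 * a + 2) * (3 * a + 1))) := by
        have : 9 * a^2 ≤ (3 * a + 2) * (3 * a + 1) := by nlinarith
        exact Nat.mul_le_mul_left _ (Nat.mul_le_mul_left _ this)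
      _ = _ := by ring

lemma choose_bound (a : ℕ) (ha : 1 ≤ a) : 27 ^ a ≤ 5 * a ^ 2 * ((3 * a).choose a * (2 * a).choose a) := by
  have h1 := Nat.choose_mul_factorial_mul_factorial (show a ≤ 3 * a by omega)
  have h2 := Nat.choose_mul_factorial_mul_factorial (show a ≤ 2 * a by omega)
  rw [show 3 * a - a = 2 * a by omega] at h1
  rw [show 2 * a - a = a by omega] at h2
  have h := fact_bound a ha
  have hpos : 0 < (a.factorial) ^ 3 := by positivity
  refine Nat.le_of_mul_le_mul_right ?_ hpos
  refine h.trans (le_of_eq ?_)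
  rw [← h1, ← h2]; ring

open Classical in
lemma card_Bal (n a : ℕ) (h : 3 * a ≤ n) : (3 * a).choose a * (2 * a).choose a ≤ (Bal n a).card := by
  set U : Finset (Fin n) := Finset.univ.filter (fun x => x.val < 3 * a) with hU
  have hUc : U.card = 3 * a := by
    rw [hU, Fin.card_filter_val_lt]; omega
  set D : Finset (Σ _ : Finset (Fin n), Finset (Fin n)) :=
    (U.powersetCard a).sigma (fun S => (U \ S).powersetCard a) with hD
  have hDc : D.card = (3 * a).choose a * (2 * a).choose a := by
    rw [hD, Finset.card_sigma]
    rw [Finset.sum_congr rfl (g := fun _ => (2 * a).choose a), Finset.sum_const, Finset.card_powersetCard, hUc,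
      smul_eq_mul]
    intro S hS
    have hS' := Finset.mem_powersetCard.1 hS
    rw [Finset.card_powersetCard, Finset.card_sdiff_of_subset hS'.1, hUc, hS'.2]
    congr 1; omega
  rw [← hDc]
  let F : (Σ _ : Finset (Fin n), Finset (Fin n)) → (Fin n → Option (Fin 3)) := fun q x =>
    if x ∈ U then (if x ∈ q.1 then some 0 else if x ∈ q.2 then some 1 else some 2) else none
  have cls : ∀ q ∈ D, (∀ x, F q x = none ↔ x ∉ U) ∧
      (Finset.univ.filter fun x => F q x = some 0) = q.1 ∧
      (Finset.univ.filter fun x => F q x = some 1) = q.2 ∧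
      (Finset.univ.filter fun x => F q x = some 2) = (U \ q.1) \ q.2 := by
    rintro ⟨S1, S2⟩ hq
    rw [hD, Finset.mem_sigma, Finset.mem_powersetCard, Finset.mem_powersetCard] at hq
    obtain ⟨⟨g1, -⟩, g2, -⟩ := hq
    simp only at g1 g2
    refine ⟨?_, ?_, ?_, ?_⟩
    · intro x; simp only [F]; split_ifs <;> simp_all
    · ext x; simp only [F, Finset.mem_filter, Finset.mem_univ, true_and]
      have := @g1 x
      clear_value U
      split_ifs with q1 q2 q3 <;> simp <;> tauto
    · ext x; simp only [F, Finset.mem_filter, Finset.mem_univ, true_and]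
      have := @g2 x
      rw [Finset.mem_sdiff] at this
      clear_value U
      split_ifs with q1 q2 q3 <;> simp <;> tauto
    · ext x; simp only [F, Finset.mem_filter, Finset.mem_univ, true_and, Finset.mem_sdiff]
      split_ifs <;> simp_all
  refine Finset.card_le_card_of_injOn F ?_ ?_
  · intro q hq
    have hq0 : q ∈ D := hq
    obtain ⟨c0, c1, c2, c3⟩ := cls q hq0
    rw [hD, Finset.mem_sigma, Finset.mem_powersetCard, Finset.mem_powersetCard] at hq0
    obtain ⟨⟨g1, g1'⟩, g2, g2'⟩ := hq0
    simp only [Bal, Finset.coe_filter, Finset.mem_univ, true_and, Set.mem_setOf_eq]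
    refine ⟨fun x => by rw [c0]; simp [hU], fun i => ?_⟩
    fin_cases i
    · exact (congrArg Finset.card c1).trans g1'
    · exact (congrArg Finset.card c2).trans g2'
    · refine (congrArg Finset.card c3).trans ?_
      rw [Finset.card_sdiff_of_subset g2, Finset.card_sdiff_of_subset g1, hUc, g1', g2']; omega
  · intro q hq q' hq' hF
    obtain ⟨-, c1, c2, -⟩ := cls q hq
    obtain ⟨-, d1, d2, -⟩ := cls q' hq'
    rw [hF] at c1 c2
    have e1 : q.1 = q'.1 := c1.symm.trans d1
    have e2 : q.2 = q'.2 := c2.symm.trans d2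
    exact Sigma.ext e1 (heq_of_eq e2)

open Classical in
lemma first_total {n a : ℕ} (p : ℝ) (c : Fin n → Option (Fin 3)) 
    (hc : ∀ i, (Finset.univ.filter fun x => c x = some i).card = a) :
    ∑ A : Fin n → Fin n → Bool, matW p A * ∏ u, wt (A u) c (c u) = (1/3)^(3*a) := by
  unfold matW
  rw [sum_pw_mul (rowW p) (fun u r => wt r c (c u))]
  have : ∀ u, ∑ r, rowW p r * wt r c (c u) = if c u = none then (1:ℝ) else 1/3 := by
    intro u
    by_cases hne : c u = none
    · rw [if_pos hne, hne]; simp [wt, rowW_sum]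
    · obtain ⟨i, hi⟩ := Option.ne_none_iff_exists'.1 hne
      rw [if_neg hne, hi, wt_exp p c a hc i]
  simp_rw [this]
  rw [Finset.prod_ite, Finset.prod_const_one, one_mul, Finset.prod_const]
  congr 1
  rw [← card_coloured c a hc]

open Classical in
lemma prob_E {n a m k : ℕ} {p : ℝ} (h0 : 0 ≤ p) (h1 : p ≤ 1) (ha : 1 ≤ a) (hm : 1 ≤ m) (han : 3 * a ≤ n)
    (hbad : (n.choose m * m.choose k : ℝ) * ((m * p * lam a m p) ^ (m - k) * Real.exp k) ≤ 1/2) :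
    1 / (100 * (a:ℝ)^4 * (n+1)^16) ≤
      Prw (matW p) (fun A : Fin n → Fin n → Bool => ∃ c ∈ Bal n a, goodC c k m A) := by
  set X : (Fin n → Fin n → Bool) → ℝ := fun A => ∑ c ∈ Bal n a, (∏ u, wt (A u) c (c u)) * (if goodC c k m A then 1 else 0) with hX
  have hwn : ∀ (A : Fin n → Fin n → Bool) (c : Fin n → Option (Fin 3)), 0 ≤ ∏ u, wt (A u) c (c u) := fun A c =>
    Finset.prod_nonneg fun u _ => wt_nonneg _ _ _
  have hX0 : ∀ A, 0 ≤ X A := fun A => Finset.sum_nonneg fun c _ =>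
    mul_nonneg (hwn A c) (by split_ifs <;> norm_num)
  have ha' : (0:ℝ) < a := by exact_mod_cast ha
  -- first moment
  have hEX : 1 / (10 * (a:ℝ)^2) ≤ ∑ A, matW p A * X A := by
    have e : ∑ A, matW p A * X A = ∑ c ∈ Bal n a,
        ∑ A : Fin n → Fin n → Bool, matW p A * ((∏ u, wt (A u) c (c u)) * (if goodC c k m A then 1 else 0)) := by
      simp only [hX, Finset.mul_sum]
      rw [Finset.sum_comm]
    have l : ∀ c ∈ Bal n a, (1/3:ℝ)^(3*a) * (1/2) ≤
        ∑ A : Fin n → Fin n → Bool, matW p A * ((∏ u, wt (A u) c (c u)) * (if goodC c k m A then 1 else 0)) := by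
      intro c hcB
      simp only [Bal, Finset.mem_filter, Finset.mem_univ, true_and] at hcB
      have hc : ∀ i, (Finset.univ.filter fun x => c x = some i).card = a := by
        intro i; rw [← hcB.2 i]
      have b := bad_bound h0 h1 c a ha hc m k hm
      have f := first_total p c hc
      have sp : ∑ A : Fin n → Fin n → Bool, matW p A * ((∏ u, wt (A u) c (c u)) * (if goodC c k m A then 1 else 0)) =
          (1/3)^(3*a) - ∑ A : Fin n → Fin n → Bool, matW p A * ((∏ u, wt (A u) c (c u)) * (if goodC c k m A then 0 else 1)) := by
        rw [← f, ← Finset.sum_sub_distrib]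
        refine Finset.sum_congr rfl fun A _ => ?_
        split_ifs <;> ring
      rw [sp]
      rw [Fintype.card_fin] at b
      have h3 : (0:ℝ) ≤ (1/3)^(3*a) := by positivity
      have : (n.choose m * m.choose k : ℝ) * ((1/3)^(3*a) * ((m * p * lam a m p) ^ (m - k) * Real.exp k)) ≤
          (1/3)^(3*a) * (1/2) := by
        calc _ = (1/3)^(3*a) * ((n.choose m * m.choose k : ℝ) * ((m * p * lam a m p) ^ (m - k) * Real.exp k)) := by ring
          _ ≤ _ := mul_le_mul_of_nonneg_left hbad h3
      linarith
    rw [e]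
    have := Finset.card_nsmul_le_sum _ _ _ l
    refine le_trans ?_ this
    rw [nsmul_eq_mul]
    have hcb : (27:ℝ)^a ≤ 5 * (a:ℝ)^2 * ((Bal n a).card : ℝ) := by
      have := (choose_bound a ha).trans (Nat.mul_le_mul_left _ (card_Bal n a han))
      exact_mod_cast this
    have h27 : (1/3:ℝ)^(3*a) = 1 / 27^a := by
      rw [pow_mul, one_div_pow, one_div_pow]; norm_num
    rw [h27, div_le_iff₀ (by positivity)]
    have hpos : (0:ℝ) < 27^a := by positivity
    calc (1:ℝ) = 27^a * (1 / 27^a) := by field_simp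
      _ ≤ (5 * (a:ℝ)^2 * ((Bal n a).card : ℝ)) * (1 / 27^a) := mul_le_mul_of_nonneg_right hcb (by positivity)
      _ = _ := by ring
  -- second moment
  have hX2 : ∑ A, matW p A * X A ^ 2 ≤ ((n:ℝ)+1)^16 := by
    refine le_trans (Finset.sum_le_sum fun A _ => ?_) (second_moment (n := n) (a := a) h0 h1)
    refine mul_le_mul_of_nonneg_left ?_ (matW_nonneg h0 h1 A)
    refine pow_le_pow_left₀ (hX0 A) ?_ 2
    refine Finset.sum_le_sum fun c _ => ?_
    have := hwn A c
    split_ifs <;> simp [this]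
  have hCS := Finset.sum_sq_le_sum_mul_sum_of_sq_eq_mul (Finset.univ : Finset (Fin n → Fin n → Bool))
    (r := fun A => matW p A * X A) (f := fun A => matW p A * X A ^ 2)
    (g := fun A => matW p A * (if ∃ c ∈ Bal n a, goodC c k m A then 1 else 0))
    (fun A _ => mul_nonneg (matW_nonneg h0 h1 A) (sq_nonneg _))
    (fun A _ => mul_nonneg (matW_nonneg h0 h1 A) (by split_ifs <;> norm_num))
    (fun A _ => by
      by_cases hE : ∃ c ∈ Bal n a, goodC c k m A
      · rw [if_pos hE]; ring
      · rw [if_neg hE]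
        have : X A = 0 := by
          rw [hX]
          refine Finset.sum_eq_zero fun c hc => ?_
          rw [if_neg (fun hg => hE ⟨c, hc, hg⟩), mul_zero]
        rw [this]; ring)
  rw [← Prw_eq_sum] at hCS
  have hP := Prw_nonneg (matW_nonneg h0 h1) (fun A : Fin n → Fin n → Bool => ∃ c ∈ Bal n a, goodC c k m A)
  have h4 : (1 / (10 * (a:ℝ)^2))^2 ≤ (∑ A, matW p A * X A)^2 :=
    pow_le_pow_left₀ (by positivity) hEX 2
  have h5 := h4.trans (hCS.trans (mul_le_mul_of_nonneg_right hX2 hP))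
  have h6 : (0:ℝ) < (n+1)^16 := by positivity
  rw [div_le_iff₀ (by positivity)]
  have : (1 / (10 * (a:ℝ)^2))^2 * (100 * (a:ℝ)^4) = 1 := by field_simp; norm_num
  have h7 := mul_le_mul_of_nonneg_right h5 (show (0:ℝ) ≤ 100 * (a:ℝ)^4 by positivity)
  rw [this] at h7
  linarith


lemma actU_mono {V : Type*} [Fintype V] [DecidableEq V] (c : V → Option (Fin 3)) (u : V) (r : V → Bool)
    (S T : Finset V) (h : S ⊆ T) (hs : actU c u S r) : actU c u T r := by
  obtain ⟨i, hi, ha⟩ := hs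
  refine ⟨i, hi, ?_⟩
  unfold actv at *
  have := Finset.card_le_card (Finset.filter_subset_filter (fun x => (c x ≠ none ∧ c x ≠ some i) ∧ r x = true) h)
  omega

open Classical in
lemma apply_det {n a k1 m : ℕ} (A A' : Fin n → Fin n → Bool) (c : Fin n → Option (Fin 3))
    (hc : c ∈ Bal n a) (hg : goodC c (2 * k1 + 2) m A') (hd : hammingDist A A' ≤ k1)
    (hl : (Finset.univ.filter fun u => A u u = true ∨ ∃ l : Fin n, ¬ l.val < 3 * a ∧ A u l = true).card ≤ k1)
    (hn : n ≤ 3 * a + 2) (hkm : 2 * k1 + 2 ≤ m) (hmn : m ≤ n) (hNC : NoCore A m) : HasCol A := by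
  have hcB : (∀ x, c x = none ↔ ¬ x.val < 3 * a) := by
    simp only [Bal, Finset.mem_filter, Finset.mem_univ, true_and] at hc
    exact hc.1
  set L : Finset (Fin n) := Finset.univ.filter (fun x => ¬ x.val < 3 * a) with hL
  have hLc : L.card ≤ 2 := by
    have h1 := Finset.card_filter_add_card_filter_not (s := (Finset.univ : Finset (Fin n))) (fun x => x.val < 3 * a)
    rw [Fin.card_filter_val_lt, Finset.card_univ, Fintype.card_fin] at h1
    rw [← hL] at h1
    omega
  set D := (Finset.univ.filter fun u => A u ≠ A' u) with hD
  have hDc : D.card ≤ k1 := hd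
  set K := (Finset.univ.filter fun u => A u u = true ∨ ∃ l : Fin n, ¬ l.val < 3 * a ∧ A u l = true) with hK
  have hcard : (D ∪ K ∪ L).card ≤ 2 * k1 + 2 := by
    have h1 := Finset.card_union_le (D ∪ K) L
    have h2 := Finset.card_union_le D K
    omega
  obtain ⟨B0, hB0, hB0c⟩ := Finset.exists_superset_card_eq hcard (by rw [Fintype.card_fin]; omega)
  obtain ⟨B, hBB, hBm, hBact⟩ := closure_aux (fun u S => actU c u S (A' u))
    (fun u S T h hs => actU_mono c u (A' u) S T h hs) B0 m (by omega) (by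
      intro S hS hSm
      obtain ⟨u, hu, h⟩ := hg S B0 (fun x hx => hB0 (Finset.mem_union_right _ (by simp [hL]; simpa using (hcB x).1 hx))) hS hSm hB0c
      exact ⟨u, hu, h⟩)
  refine hasCol_of A B (fun x => (c x).getD 0) ?_ ?_
  · intro S hS hSc; exact hNC S hS (by omega)
  intro u hu
  have hu' : u ∉ D ∪ K ∪ L := fun h => hu (hBB (hB0 h))
  simp only [Finset.mem_union, not_or] at hu'
  obtain ⟨⟨huD, huK⟩, huL⟩ := hu'
  have hAu : A u = A' u := by simpa [hD] using huD
  have hcu : c u ≠ none := fun h => huL (by simp [hL]; simpa using (hcB u).1 h)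
  obtain ⟨i, hi⟩ := Option.ne_none_iff_exists'.1 hcu
  have hnot := hBact u hu
  rw [← hAu] at hnot
  have hnv : ¬ actv c i B (A u) := fun h => hnot ⟨i, hi, h⟩
  unfold actv at hnv
  push Not at hnv
  have huK' : ¬ (A u u = true ∨ ∃ l : Fin n, ¬ l.val < 3 * a ∧ A u l = true) := by
    intro h; exact huK (by simp only [hK, Finset.mem_filter, Finset.mem_univ, true_and]; exact h)
  push Not at huK'
  have hout : ∀ w, w ∈ outS A u ↔ A u w = true := by
    intro w
    simp only [outS, Finset.mem_filter, Finset.mem_univ, true_and]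
    refine ⟨fun h => h.2, fun h => ⟨?_, h⟩⟩
    rintro rfl; exact huK'.1 h
  have hcol : ∀ w, A u w = true → ∃ j, c w = some j := by
    intro w hw
    apply Option.ne_none_iff_exists'.1
    intro h
    exact huK'.2 w (by simpa using (hcB w).1 h) hw
  have hsum : (outS A u).card = ∑ j, cnt (A u) c j := by
    have : outS A u = (Finset.univ : Finset (Fin 3)).biUnion
        (fun j => Finset.univ.filter fun x => A u x = true ∧ c x = some j) := by
      ext w
      rw [hout]
      simp only [Finset.mem_biUnion, Finset.mem_filter, Finset.mem_univ, true_and]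
      constructor
      · intro h; obtain ⟨j, hj⟩ := hcol w h; exact ⟨j, h, hj⟩
      · rintro ⟨j, h, -⟩; exact h
    rw [this, Finset.card_biUnion]
    · rfl
    · intro j _ j' _ hj
      rw [Function.onFun, Finset.disjoint_filter]
      intro x _ h1 h2
      rw [h1.2] at h2; exact hj (Option.some.inj h2.2)
  rw [hsum]
  refine le_trans ?_ hnv
  refine Nat.mul_le_mul_left _ (Nat.add_le_add (le_of_eq ?_) (Finset.card_le_card ?_))
  · unfold cnt
    congr 1
    ext w
    simp only [Finset.mem_filter, hout, Finset.mem_univ, true_and, hi, Option.getD_some]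
    constructor
    · rintro ⟨h, h'⟩; obtain ⟨j, hj⟩ := hcol w h; rw [hj] at h' ⊢; simp at h'; exact ⟨h, by rw [h']⟩
    · rintro ⟨h, h'⟩; exact ⟨h, by rw [h']; rfl⟩
  · intro w hw
    simp only [Finset.mem_filter, hout, hi, Option.getD_some] at hw ⊢
    obtain ⟨h, hB', h'⟩ := hw
    obtain ⟨j, hj⟩ := hcol w h
    rw [hj] at h' ⊢
    refine ⟨hB', ⟨by simp, ?_⟩, h⟩
    intro he; exact h' (by simpa using he)


lemma entry_prob {V : Type*} [Fintype V] [DecidableEq V] (p : ℝ) (u l : V) :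
    Prw (matW p) (fun A : V → V → Bool => A u l = true) = p := by
  have h1 := Prw_pw_forall (rowW p) (rowW_sum p) ({u} : Finset V) (fun _ r => r l = true)
  have h2 := row_all p ({l} : Finset V)
  simp only [Finset.mem_singleton, forall_eq, Finset.prod_singleton, Finset.card_singleton, pow_one] at h1 h2
  rw [h2] at h1
  exact h1

open Classical in
lemma loops_bound {n a k1 : ℕ} {p : ℝ} (h0 : 0 ≤ p) (h1 : p ≤ 1) (hn : n ≤ 3 * a + 2) (hk : 1 ≤ k1) :
    Prw (matW p) (fun A : Fin n → Fin n → Bool => k1 ≤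
      (Finset.univ.filter fun u => A u u = true ∨ ∃ l : Fin n, ¬ l.val < 3 * a ∧ A u l = true).card)
      ≤ 3 * (n * p) / k1 := by
  have hkr : (0:ℝ) < k1 := by exact_mod_cast hk
  set L : Finset (Fin n) := Finset.univ.filter (fun x => ¬ x.val < 3 * a) with hL
  have hLc : L.card ≤ 2 := by
    have h1 := Finset.card_filter_add_card_filter_not (s := (Finset.univ : Finset (Fin n))) (fun x => x.val < 3 * a)
    rw [Fin.card_filter_val_lt, Finset.card_univ, Fintype.card_fin] at h1
    rw [← hL] at h1
    omega
  refine (Prw_le_sum (matW_nonneg h0 h1) _ (fun A => ((Finset.univ.filter fun u => A u u = true ∨ ∃ l : Fin n, ¬ l.val < 3 * a ∧ A u l = true).card : ℝ) / k1)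
    (fun A => by positivity) (fun A hA => ?_)).trans ?_
  · rw [le_div_iff₀ hkr, one_mul]; exact_mod_cast hA
  have e : ∀ A : Fin n → Fin n → Bool, matW p A * (((Finset.univ.filter fun u => A u u = true ∨ ∃ l : Fin n, ¬ l.val < 3 * a ∧ A u l = true).card : ℝ) / k1)
      = ∑ u, (matW p A * (if A u u = true ∨ ∃ l : Fin n, ¬ l.val < 3 * a ∧ A u l = true then 1 else 0)) / k1 := by
    intro A
    rw [Finset.card_filter]; push_cast
    rw [← Finset.sum_div, ← Finset.mul_sum, mul_div_assoc]
  simp_rw [e]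
  rw [Finset.sum_comm]
  simp_rw [← Finset.sum_div]
  gcongr
  have bd : ∀ u ∈ (Finset.univ : Finset (Fin n)), ∑ A : Fin n → Fin n → Bool, matW p A *
      (if A u u = true ∨ ∃ l : Fin n, ¬ l.val < 3 * a ∧ A u l = true then (1:ℝ) else 0) ≤ 3 * p := by
    intro u _
    rw [← Prw_eq_sum]
    have h2 : Prw (matW p) (fun A : Fin n → Fin n → Bool => A u u = true ∨ ∃ l : Fin n, ¬ l.val < 3 * a ∧ A u l = true) ≤
        Prw (matW p) (fun A : Fin n → Fin n → Bool => ∃ l ∈ insert u L, A u l = true) := by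
      refine Prw_mono (matW_nonneg h0 h1) fun A hA => ?_
      rcases hA with hA | ⟨l, hl, hA⟩
      · exact ⟨u, by simp, hA⟩
      · exact ⟨l, by simp only [hL, Finset.mem_insert, Finset.mem_filter, Finset.mem_univ, true_and]; exact Or.inr hl, hA⟩
    refine h2.trans ((Prw_exists (matW_nonneg h0 h1) _ _).trans ?_)
    simp_rw [entry_prob]
    rw [Finset.sum_const, nsmul_eq_mul]
    refine mul_le_mul_of_nonneg_right ?_ h0
    have := Finset.card_insert_le u L
    exact_mod_cast (by omega : (insert u L).card ≤ 3)
  refine (Finset.sum_le_card_nsmul _ _ _ bd).trans (le_of_eq ?_)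
  rw [Finset.card_univ, Fintype.card_fin, nsmul_eq_mul]; ring

lemma nocore_simple {n m : ℕ} {p : ℝ} (h0 : 0 ≤ p) (h1 : p ≤ 1)
    (hρ : Real.exp 1 * m * n * p ^ 2 / 2 ≤ 1 / 2) :
    Prw (matW p) (fun A : Fin n → Fin n → Bool => ¬ NoCore A m) ≤ 2 * (Real.exp 1 * m * n * p ^ 2 / 2) := by
  refine (noCore_bound h0 h1 m (fun s => (s:ℝ)^2 * p^2 / 2) ?_).trans ?_
  · intro s hs T hT
    refine (row_two_le h0 h1 T).trans ?_
    have : (T.card : ℝ) ≤ s := by rw [hT]; exact_mod_cast Nat.sub_le _ _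
    gcongr
  · refine le_trans ?_ (geo_sum_le (by positivity) hρ m)
    refine Finset.sum_le_sum fun s hs => ?_
    rw [Fintype.card_fin]
    refine (small_term n s p).trans ?_
    have : (s:ℝ) ≤ m := by exact_mod_cast (Finset.mem_Icc.1 hs).2
    gcongr

open Classical in
lemma mid_bound {n a k1 m : ℕ} {p : ℝ} (h0 : 0 ≤ p) (h1 : p ≤ 1) (ha : 1 ≤ a) (hm : 1 ≤ m) (hk : 1 ≤ k1)
    (han : 3 * a ≤ n) (hn : n ≤ 3 * a + 2) (hkm : 2 * k1 + 2 ≤ m) (hmn : m ≤ n)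
    (hbad : (n.choose m * m.choose (2 * k1 + 2) : ℝ) *
      ((m * p * lam a m p) ^ (m - (2 * k1 + 2)) * Real.exp ((2 * k1 + 2 : ℕ) : ℝ)) ≤ 1/2)
    (hρ : Real.exp 1 * m * n * p ^ 2 / 2 ≤ 1 / 2) :
    Prw (matW p) (fun A : Fin n → Fin n → Bool => ¬ HasCol A) ≤
      100 * (a:ℝ)^4 * (n+1)^16 * Real.exp (-((k1:ℝ) ^ 2 / (2 * n))) + 3 * (n * p) / k1 +
        2 * (Real.exp 1 * m * n * p ^ 2 / 2) := by
  set E : (Fin n → Fin n → Bool) → Prop := fun A => ∃ c ∈ Bal n a, goodC c (2 * k1 + 2) m A with hE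
  have hP := prob_E h0 h1 ha hm han hbad
  have hconc := conc_dist (rowW p) (rowW_nonneg h0 h1) (rowW_sum p) n k1 (by omega) E
  have ha' : (0:ℝ) < a := by exact_mod_cast ha
  have hfar0 := Prw_nonneg (matW_nonneg h0 h1) (fun A : Fin n → Fin n → Bool => ∀ A', E A' → k1 ≤ hammingDist A A')
  have hfar : Prw (matW p) (fun A : Fin n → Fin n → Bool => ∀ A', E A' → k1 ≤ hammingDist A A') ≤
      100 * (a:ℝ)^4 * (n+1)^16 * Real.exp (-((k1:ℝ) ^ 2 / (2 * n))) := by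
    have hq : (0:ℝ) < 100 * (a:ℝ)^4 * (n+1)^16 := by positivity
    have h2 := (mul_le_mul_of_nonneg_right hP hfar0).trans hconc
    rw [one_div, inv_mul_le_iff₀ hq] at h2
    exact h2
  refine le_trans (Prw_mono (matW_nonneg h0 h1) (R := fun A => ((∀ A', E A' → k1 ≤ hammingDist A A') ∨
    k1 ≤ (Finset.univ.filter fun u => A u u = true ∨ ∃ l : Fin n, ¬ l.val < 3 * a ∧ A u l = true).card) ∨
      ¬ NoCore A m) ?_) ?_
  · intro A hA
    by_contra hcon
    push Not at hcon
    obtain ⟨⟨⟨A', ⟨c, hc, hg⟩, hd⟩, hl⟩, hNC⟩ := hcon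
    exact hA (apply_det A A' c hc hg hd.le (by push Not; exact hl.le) hn hkm hmn hNC)
  · refine (Prw_or (matW_nonneg h0 h1) _ _).trans (add_le_add ((Prw_or (matW_nonneg h0 h1) _ _).trans
      (add_le_add hfar (loops_bound h0 h1 hn hk))) (nocore_simple h0 h1 hρ))


lemma bad_simple {n a m k : ℕ} {p ρ : ℝ} (h0 : 0 < p) (hm : 1 ≤ m) (hk : k ≤ m) (hn : 1 ≤ n)
    (hρ : Real.exp 1 * (n * p) * lam a m p ≤ ρ) (hlow : 1 / (n:ℝ)^2 ≤ p * lam a m p) :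
    (n.choose m * m.choose k : ℝ) * ((m * p * lam a m p) ^ (m - k) * Real.exp k) ≤
      ρ ^ m * (Real.exp 1 * (n:ℝ)^2) ^ k := by
  have hnr : (0:ℝ) < n := by exact_mod_cast hn
  have hmr : (0:ℝ) < m := by exact_mod_cast hm
  set Λ := lam a m p with hΛ
  have hpL : 0 < p * Λ := lt_of_lt_of_le (by positivity) hlow
  have hL : 0 < Λ := by
    by_contra h
    push Not at h
    nlinarith
  have hx : 0 < m * p * Λ := by positivity
  have c1 : (n.choose m : ℝ) * (m * p * Λ) ^ m ≤ (Real.exp 1 * (n * p) * Λ) ^ m := by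
    have h1 : (n.choose m : ℝ) ≤ (n : ℝ) ^ m / (m.factorial : ℝ) := Nat.choose_le_pow_div m n
    have h2 : (m : ℝ) ^ m / (m.factorial : ℝ) ≤ Real.exp m :=
      Real.pow_div_factorial_le_exp m (Nat.cast_nonneg _) m
    calc (n.choose m : ℝ) * (m * p * Λ) ^ m ≤ ((n : ℝ) ^ m / (m.factorial : ℝ)) * (m * p * Λ) ^ m := by gcongr
      _ = ((m : ℝ) ^ m / (m.factorial : ℝ)) * (n * p * Λ) ^ m := by
        rw [div_mul_eq_mul_div, div_mul_eq_mul_div, ← mul_pow, ← mul_pow]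
        congr 2; ring
      _ ≤ Real.exp m * (n * p * Λ) ^ m := by gcongr
      _ = _ := by
        rw [← Real.exp_one_pow, ← mul_pow]; congr 1; ring
  have c2 : (m.choose k : ℝ) ≤ (m:ℝ)^k := by exact_mod_cast Nat.choose_le_pow m k
  have e1 : (m * p * Λ) ^ (m - k) = (m * p * Λ) ^ m / (m * p * Λ)^k := by
    rw [pow_sub₀ _ hx.ne' hk, div_eq_mul_inv]
  have c3 : (m:ℝ)^k * Real.exp k / (m * p * Λ)^k ≤ (Real.exp 1 * (n:ℝ)^2) ^ k := by
    rw [← Real.exp_one_pow, ← mul_pow, ← div_pow]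
    refine pow_le_pow_left₀ (by positivity) ?_ k
    have : m * Real.exp 1 / (m * p * Λ) = Real.exp 1 * (1 / (p * Λ)) := by field_simp
    rw [this]
    refine mul_le_mul_of_nonneg_left ?_ (Real.exp_pos 1).le
    rw [div_le_iff₀ hpL]
    rw [div_le_iff₀ (by positivity)] at hlow
    linarith
  rw [e1]
  calc (n.choose m * m.choose k : ℝ) * ((m * p * Λ) ^ m / (m * p * Λ)^k * Real.exp k)
      = ((n.choose m : ℝ) * (m * p * Λ) ^ m) * (m.choose k * Real.exp k / (m * p * Λ)^k) := by ring
    _ ≤ (Real.exp 1 * (n * p) * Λ) ^ m * ((m:ℝ)^k * Real.exp k / (m * p * Λ)^k) := by gcongr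
    _ ≤ ρ ^ m * (Real.exp 1 * (n:ℝ)^2) ^ k := by
      refine mul_le_mul (pow_le_pow_left₀ (by positivity) hρ m) c3 (by positivity) ?_
      exact pow_nonneg (le_trans (by positivity) hρ) m

lemma exp_085 : (2.339:ℝ) ≤ Real.exp 0.85 := by
  have := Real.sum_le_exp_of_nonneg (x := (0.85:ℝ)) (by norm_num) 8
  refine le_trans ?_ this
  norm_num [Finset.sum_range_succ, Nat.factorial]

lemma rate_bound (d : ℝ) (hd : 1.85 ≤ d) : Real.exp (1 - d) * (d + 2 * d^3 / 27) ≤ 0.992 := by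
  have ht : 0 ≤ d - 1.85 := by linarith
  set t := d - 1.85 with htd
  have h3 : 1 + t + t^2/2 + t^3/6 ≤ Real.exp t := by
    have := Real.sum_le_exp_of_nonneg ht 4
    refine le_trans (le_of_eq ?_) this
    norm_num [Finset.sum_range_succ, Nat.factorial]
  have h4 : 2.339 * (1 + t + t^2/2 + t^3/6) ≤ Real.exp (d - 1) := by
    rw [show d - 1 = 0.85 + t by rw [htd]; ring, Real.exp_add]
    exact mul_le_mul exp_085 h3 (by positivity) (Real.exp_pos _).le
  rw [show 1 - d = -(d - 1) by ring, Real.exp_neg, inv_mul_le_iff₀ (Real.exp_pos _)]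
  have hdt : d = 1.85 + t := by rw [htd]; ring
  refine le_trans ?_ (mul_le_mul_of_nonneg_right h4 (by norm_num))
  rw [hdt]
  nlinarith [pow_nonneg ht 2, pow_nonneg ht 3, ht]

lemma lam_rate {n a m : ℕ} {p : ℝ} (h0 : 0 ≤ p) (h1 : p ≤ 1) (ha : 1 ≤ a)
    (hd : 1.85 ≤ 3 * a * p) (hf : (n:ℝ) * Real.exp (3 * p) ≤ 1.002 * (3 * a))
    (hs : 14 * m * (n * p)^2 ≤ 0.001 * n) (hn : 1 ≤ n) :
    Real.exp 1 * (n * p) * lam a m p ≤ 0.995 := by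
  have hnr : (0:ℝ) < n := by exact_mod_cast hn
  have har : (0:ℝ) < a := by exact_mod_cast ha
  have hq : (1 - p) ^ (3 * a - 3) ≤ Real.exp (3 * p) * Real.exp (-(3 * a * p)) := by
    have e1 : (1 - p) ≤ Real.exp (-p) := by have := Real.add_one_le_exp (-p); linarith
    have e2 := pow_le_pow_left₀ (by linarith : 0 ≤ 1 - p) e1 (3 * a - 3)
    refine e2.trans (le_of_eq ?_)
    rw [← Real.exp_nat_mul, ← Real.exp_add, Nat.cast_sub (by omega)]
    push_cast; congr 1; ring
  have hr := rate_bound (3 * a * p) hd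
  have he := Real.exp_one_lt_d9
  unfold lam
  have p1 : Real.exp 1 * (n * p) * ((1 - p) ^ (3 * a - 3) * (1 + 2 * (a:ℝ)^2 * p^2 / 3)) ≤ 1.002 * 0.992 := by
    calc _ ≤ Real.exp 1 * (n * p) * ((Real.exp (3 * p) * Real.exp (-(3 * a * p))) * (1 + 2 * (a:ℝ)^2 * p^2 / 3)) := by
          gcongr
      _ = (n * Real.exp (3 * p)) * ((Real.exp 1 * Real.exp (-(3 * a * p))) * (p * (1 + 2 * (a:ℝ)^2 * p^2 / 3))) := by ring
      _ ≤ (1.002 * (3 * a)) * ((Real.exp 1 * Real.exp (-(3 * a * p))) * (p * (1 + 2 * (a:ℝ)^2 * p^2 / 3))) := by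
          gcongr
      _ = 1.002 * (Real.exp (1 - 3 * a * p) * (3 * a * p + 2 * (3 * a * p)^3 / 27)) := by
          rw [← Real.exp_add, ← sub_eq_add_neg]; ring
      _ ≤ _ := by linarith
  have p2 : Real.exp 1 * (n * p) * (5 * m * p) ≤ 0.001 := by
    have : Real.exp 1 * (n * p) * (5 * m * p) = (5 * Real.exp 1) * m * (n * p)^2 / n := by
      field_simp
    rw [this, div_le_iff₀ hnr]
    refine le_trans ?_ hs
    gcongr; linarith
  rw [mul_add]
  linarith

set_option maxHeartbeats 1000000 in
lemma mid_core {n : ℕ} {p s ε : ℝ} (h0 : 0 ≤ p) (h1 : p ≤ 1) (hε : 0 < ε)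
    (hs : s ^ 20 = n) (hlog : Real.log n ≤ s) (hS : 10^9 / ε + 10^6 ≤ s)
    (hd : 1.85 ≤ 3 * ((n / 3 : ℕ) : ℝ) * p) (hu : n * p ≤ 40 * Real.log n) :
    Prw (matW p) (fun A : Fin n → Fin n → Bool => ¬ HasCol A) ≤ ε := by
  have hs6 : 10^6 ≤ s := le_trans (by have : 0 < 10^9/ε := by positivity
                                      linarith) hS
  have hsε : 10^9 ≤ ε * s := by
    have h : 10^9 / ε ≤ s := by linarith
    rw [div_le_iff₀ hε] at h; linarith
  have hs0 : 0 < s := by linarith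
  have hs1 : 1 ≤ s := by linarith
  have hnr : (10:ℝ)^6 ≤ n := by
    rw [← hs]; exact hs6.trans (le_self_pow₀ hs1 (by norm_num))
  have hn0 : (0:ℝ) < n := by linarith
  have hnN : 10^6 ≤ n := by exact_mod_cast hnr
  set a := n / 3 with ha
  have han : 3 * a ≤ n := by omega
  have han2 : n ≤ 3 * a + 2 := by omega
  have ha1 : 1 ≤ a := by omega
  have hanr : (n:ℝ) ≤ 3 * a + 2 := by exact_mod_cast han2
  have hanr' : 3 * (a:ℝ) ≤ n := by exact_mod_cast han
  have har : (1:ℝ) ≤ a := by exact_mod_cast ha1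
  have hnp : n * p ≤ 40 * s := hu.trans (by linarith)
  have hnp0 : 0 ≤ n * p := by positivity
  have hnpl : 1.85 ≤ n * p := hd.trans (mul_le_mul_of_nonneg_right hanr' h0)
  have hp0 : 0 < p := by
    rcases h0.lt_or_eq with h | h
    · exact h
    · rw [← h] at hnpl; norm_num at hnpl
  -- parameters
  set k1 := ⌈s^12⌉₊ with hk1
  set m := ⌈s^14⌉₊ with hm
  have k1l : s^12 ≤ k1 := Nat.le_ceil _
  have k1u : (k1:ℝ) ≤ s^12 + 1 := (Nat.ceil_lt_add_one (by positivity)).le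
  have ml : s^14 ≤ m := Nat.le_ceil _
  have mu : (m:ℝ) ≤ s^14 + 1 := (Nat.ceil_lt_add_one (by positivity)).le
  have s12 : 1 ≤ s^12 := one_le_pow₀ hs1
  have s14 : 1 ≤ s^14 := one_le_pow₀ hs1
  have mu2 : (m:ℝ) ≤ 2 * s^14 := by linarith
  have hk1' : 1 ≤ k1 := by
    have : (1:ℝ) ≤ k1 := by linarith
    exact_mod_cast this
  have hm1 : 1 ≤ m := by
    have : (1:ℝ) ≤ m := by linarith
    exact_mod_cast this
  have hs2 : (10:ℝ)^12 ≤ s^2 := le_trans (by norm_num) (pow_le_pow_left₀ (by norm_num) hs6 2)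
  have hkm : 2 * k1 + 2 ≤ m := by
    have : (2:ℝ) * k1 + 2 ≤ m := by
      have e : s^14 = s^12 * s^2 := by ring
      have := mul_le_mul_of_nonneg_left hs2 (by positivity : 0 ≤ s^12)
      linarith
    exact_mod_cast this
  have hs4 : (10:ℝ)^24 ≤ s^4 := le_trans (by norm_num) (pow_le_pow_left₀ (by norm_num) hs6 4)
  have hmn : m ≤ n := by
    have : (m:ℝ) ≤ n := by
      rw [← hs]
      have e : s^20 = s^14 * s^6 := by ring
      have h6 : 2 ≤ s^6 := le_trans (by linarith) (le_self_pow₀ hs1 (by norm_num : 6 ≠ 0))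
      rw [e]
      have := mul_le_mul_of_nonneg_left h6 (by positivity : 0 ≤ s^14)
      linarith
    exact_mod_cast this
  -- m (np)^2 bound
  have hmq : (m:ℝ) * (n * p)^2 * s^4 ≤ 3200 * n := by
    have h2 : (n * p)^2 ≤ (40 * s)^2 := pow_le_pow_left₀ hnp0 hnp 2
    calc (m:ℝ) * (n * p)^2 * s^4 ≤ (2 * s^14) * (40 * s)^2 * s^4 := by gcongr
      _ = 3200 * s^20 := by ring
      _ = _ := by rw [hs]
  have hmq0 : 0 ≤ (m:ℝ) * (n * p)^2 := by positivity
  have hsmall : 14 * m * (n * p)^2 ≤ 0.001 * n := by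
    have : (m:ℝ) * (n * p)^2 * 10^24 ≤ 3200 * n := le_trans (by gcongr) hmq
    linarith
  have he := Real.exp_one_lt_d9
  have hmid : Real.exp 1 * m * n * p^2 / 2 = Real.exp 1 * (m * (n * p)^2) / (2 * n) := by
    field_simp
  have hρ : Real.exp 1 * m * n * p ^ 2 / 2 ≤ 1 / 2 := by
    rw [hmid, div_le_iff₀ (by positivity)]
    have w2 : Real.exp 1 * (m * (n * p)^2) ≤ 3 * (m * (n * p)^2) := by gcongr; linarith
    linarith
  -- exponential bound
  have hp3 : p ≤ 0.0001 := by
    have : n * p ≤ n * 0.0001 := by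
      refine hnp.trans ?_
      rw [← hs]
      have : s^20 = s * s^19 := by ring
      have h19 : (10:ℝ)^12 ≤ s^19 := hs2.trans (pow_le_pow_right₀ hs1 (by norm_num))
      rw [this]
      have := mul_le_mul_of_nonneg_left h19 hs0.le
      linarith
    exact le_of_mul_le_mul_left this hn0
  have hf : (n:ℝ) * Real.exp (3 * p) ≤ 1.002 * (3 * a) := by
    have e1 : Real.exp (3 * p) ≤ 1.0005 := by
      have h := Real.add_one_le_exp (-(3 * p))
      rw [Real.exp_neg] at h
      have hpos := Real.exp_pos (3 * p)
      have h2 : (-(3 * p) + 1) * Real.exp (3 * p) ≤ 1 := by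
        calc _ ≤ (Real.exp (3 * p))⁻¹ * Real.exp (3 * p) := by gcongr
          _ = 1 := inv_mul_cancel₀ hpos.ne'
      have h3 := mul_le_mul_of_nonneg_right hp3 hpos.le
      linarith
    have : (n:ℝ) * Real.exp (3 * p) ≤ n * 1.0005 := by gcongr
    linarith
  have hrate : Real.exp 1 * (n * p) * lam a m p ≤ 0.995 := lam_rate h0 h1 ha1 hd hf hsmall (by omega)
  have hlow : 1 / (n:ℝ)^2 ≤ p * lam a m p := by
    have hL : p ≤ lam a m p := by
      unfold lam
      have : 0 ≤ (1 - p) ^ (3 * a - 3) * (1 + 2 * (a:ℝ)^2 * p^2 / 3) :=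
        mul_nonneg (pow_nonneg (by linarith) _) (by positivity)
      have hm1r : (1:ℝ) ≤ m := by exact_mod_cast hm1
      have := mul_le_mul_of_nonneg_right hm1r h0
      linarith
    rw [div_le_iff₀ (by positivity)]
    have : p * p ≤ p * lam a m p := by gcongr
    have g1 := mul_le_mul_of_nonneg_right this (sq_nonneg (n:ℝ))
    have g2 : 1 ≤ (n * p)^2 := one_le_pow₀ (by linarith)
    have g3 : (n * p)^2 = p * p * (n:ℝ)^2 := by ring
    linarith
  have hnexp : (n:ℝ) = Real.exp (Real.log n) := (Real.exp_log hn0).symm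
  have hbad : (n.choose m * m.choose (2 * k1 + 2) : ℝ) *
      ((m * p * lam a m p) ^ (m - (2 * k1 + 2)) * Real.exp ((2 * k1 + 2 : ℕ) : ℝ)) ≤ 1/2 := by
    refine (bad_simple hp0 hm1 hkm (by omega) hrate hlow).trans ?_
    have b1 : (0.995:ℝ)^m ≤ Real.exp (-(0.005 * m)) := by
      have : (0.995:ℝ) ≤ Real.exp (-0.005) := by
        have := Real.add_one_le_exp (-0.005 : ℝ); linarith
      refine (pow_le_pow_left₀ (by norm_num) this m).trans (le_of_eq ?_)
      rw [← Real.exp_nat_mul]; congr 1; ring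
    have b2 : (Real.exp 1 * (n:ℝ)^2)^(2 * k1 + 2) ≤ Real.exp ((2 * k1 + 2) * (1 + 2 * s)) := by
      have : Real.exp 1 * (n:ℝ)^2 ≤ Real.exp (1 + 2 * s) := by
        rw [Real.exp_add]
        refine mul_le_mul_of_nonneg_left ?_ (Real.exp_pos _).le
        have e : (n:ℝ)^2 = Real.exp (2 * Real.log n) := by
          rw [two_mul, Real.exp_add, Real.exp_log hn0]; ring
        rw [e]; exact Real.exp_le_exp.2 (by linarith)
      refine (pow_le_pow_left₀ (by positivity) this _).trans (le_of_eq ?_)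
      rw [← Real.exp_nat_mul]; congr 1; push_cast; ring
    have b3 : Real.exp (-1) ≤ 1/2 := by
      have := Real.exp_neg_one_lt_d9; linarith
    refine le_trans (mul_le_mul b1 b2 (by positivity) (Real.exp_pos _).le) ?_
    rw [← Real.exp_add]
    refine le_trans (Real.exp_le_exp.2 ?_) b3
    have c1 : (2 * (k1:ℝ) + 2) * (1 + 2 * s) ≤ (6 * s^12) * (3 * s) := by
      refine mul_le_mul (by linarith) (by linarith) (by linarith) (by positivity)
    have c2 : 1 ≤ s^13 := one_le_pow₀ hs1
    have c3 : s^14 = s^13 * s := by ring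
    have c4 := mul_le_mul_of_nonneg_left hs6 (by positivity : 0 ≤ s^13)
    have c5 : 6 * s^12 * (3 * s) = 18 * s^13 := by ring
    linarith
  refine (mid_bound h0 h1 ha1 hm1 hk1' han han2 hkm hmn hbad hρ).trans ?_
  -- three terms
  have t1 : 100 * (a:ℝ)^4 * (n+1)^16 * Real.exp (-((k1:ℝ) ^ 2 / (2 * n))) ≤ ε / 3 := by
    have q1 : 100 * (a:ℝ)^4 * (n+1)^16 ≤ 100 * 2^16 * Real.exp (20 * s) := by
      have w1 : (a:ℝ) ≤ n := by linarith
      have w2 : (n:ℝ) + 1 ≤ 2 * n := by linarith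
      calc 100 * (a:ℝ)^4 * (n+1)^16 ≤ 100 * (n:ℝ)^4 * (2 * n)^16 := by gcongr
        _ = 100 * 2^16 * (n:ℝ)^20 := by ring
        _ ≤ 100 * 2^16 * (Real.exp s)^20 := by
          have : (n:ℝ) ≤ Real.exp s := by
            rw [hnexp]; exact Real.exp_le_exp.2 hlog
          gcongr
        _ = _ := by rw [← Real.exp_nat_mul]; norm_num
    have q2 : s^4 / 2 ≤ (k1:ℝ)^2 / (2 * n) := by
      rw [div_le_div_iff₀ (by norm_num) (by positivity)]
      have : (s^12)^2 ≤ (k1:ℝ)^2 := pow_le_pow_left₀ (by positivity) k1l 2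
      have e : (s^12)^2 = s^4 * n := by rw [← hs]; ring
      rw [e] at this; linarith
    have q3 : Real.exp (-((k1:ℝ) ^ 2 / (2 * n))) ≤ Real.exp (-(21 * s)) := by
      apply Real.exp_le_exp.2
      have : 42 * s ≤ s^4 := by
        have e : s^4 = s^3 * s := by ring
        have e3 : 42 ≤ s^3 := le_trans (by linarith) (le_self_pow₀ hs1 (by norm_num : 3 ≠ 0))
        rw [e]; exact mul_le_mul_of_nonneg_right e3 hs0.le
      linarith
    have q4 : Real.exp (20 * s) * Real.exp (-(21 * s)) ≤ 1 / s := by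
      rw [← Real.exp_add, show 20 * s + -(21 * s) = -s by ring, Real.exp_neg, one_div]
      refine inv_anti₀ hs0 ?_
      have := Real.add_one_le_exp s; linarith
    calc _ ≤ (100 * 2^16 * Real.exp (20 * s)) * Real.exp (-(21 * s)) := by gcongr
      _ = 100 * 2^16 * (Real.exp (20 * s) * Real.exp (-(21 * s))) := by ring
      _ ≤ 100 * 2^16 * (1 / s) := by gcongr
      _ ≤ ε / 3 := by
        rw [mul_one_div, div_le_iff₀ hs0]
        linarith
  have t2 : 3 * (n * p) / k1 ≤ ε / 3 := by
    rw [div_le_iff₀ (by exact_mod_cast hk1')]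
    have w : s^2 ≤ k1 := le_trans (pow_le_pow_right₀ hs1 (by norm_num)) k1l
    have w2 : ε * s^2 ≤ ε * k1 := by gcongr
    have w3 : 10^9 * s ≤ ε * s^2 := by
      have := mul_le_mul_of_nonneg_right hsε hs0.le
      linarith
    linarith
  have t3 : 2 * (Real.exp 1 * m * n * p ^ 2 / 2) ≤ ε / 3 := by
    rw [hmid]
    have w : s ≤ s^4 := le_self_pow₀ hs1 (by norm_num)
    have w1 : (m:ℝ) * (n * p)^2 * s ≤ 3200 * n := le_trans (by gcongr) hmq
    have w2 : Real.exp 1 * (m * (n * p)^2) ≤ 3 * (m * (n * p)^2) := by gcongr; linarith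
    have w3 : 3 * ((m:ℝ) * (n * p)^2) ≤ ε * n / 3 := by
      have : 3 * ((m:ℝ) * (n * p)^2) * s ≤ (ε * n / 3) * s := by
        have : 10^9 * (n:ℝ) ≤ ε * s * n := by gcongr
        linarith
      exact le_of_mul_le_mul_right this hs0
    rw [← mul_div_assoc, div_le_iff₀ (by positivity)]
    linarith
  linarith


theorem all_regimes (ε : ℝ) (hε : 0 < ε) : ∃ n0 : ℕ, ∀ n ≥ n0, ∀ p : ℝ, 0 ≤ p → p ≤ 1 →
    Prw (matW p) (fun A : Fin n → Fin n → Bool => ¬ HasCol A) ≤ ε := by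
  obtain ⟨nL, hL⟩ := low_regime ε hε
  have hlog : ∀ᶠ n : ℕ in atTop, Real.log (n:ℝ) ≤ (n:ℝ) ^ (1/20 : ℝ) := by
    have h := (isLittleO_log_rpow_atTop (r := (1/20:ℝ)) (by norm_num)).comp_tendsto
      (tendsto_natCast_atTop_atTop (R := ℝ))
    have h2 := h.def (c := 1) one_pos
    filter_upwards [h2] with n hn
    simp only [Function.comp, one_mul, Real.norm_eq_abs] at hn
    rw [abs_of_nonneg (Real.rpow_nonneg (Nat.cast_nonneg n) _)] at hn
    exact (le_abs_self _).trans hn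
  have hbig : ∀ᶠ n : ℕ in atTop, 10^9/ε + 10^6 ≤ (n:ℝ) ^ (1/20 : ℝ) :=
    ((tendsto_rpow_atTop (by norm_num : (0:ℝ) < 1/20)).comp
      (tendsto_natCast_atTop_atTop (R := ℝ))).eventually_ge_atTop _
  have hinv : ∀ᶠ n : ℕ in atTop, 1/ε ≤ (n:ℝ) :=
    (tendsto_natCast_atTop_atTop (R := ℝ)).eventually_ge_atTop _
  obtain ⟨n0, h0⟩ := eventually_atTop.1
    (hlog.and (hbig.and (hinv.and ((eventually_ge_atTop nL).and (eventually_ge_atTop 2000)))))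
  refine ⟨n0, fun n hn p hp0 hp1 => ?_⟩
  obtain ⟨a1, a2, a3, a4, a5⟩ := h0 n hn
  have hn2 : (2000:ℝ) ≤ n := by exact_mod_cast a5
  have hnpos : (0:ℝ) < n := by linarith
  by_cases hc : 40 * Real.log n ≤ n * p
  · refine (dense_regime hp0 hp1 (by omega)).trans ?_
    have hlp : 0 ≤ Real.log n := Real.log_nonneg (by linarith)
    have e1 : -(2/35) * p * ((n:ℝ) - 1) ≤ -(2 * Real.log n) := by
      have : 0.9 * (n * p) ≤ p * ((n:ℝ) - 1) := by nlinarith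
      nlinarith
    calc (n:ℝ) * Real.exp (-(2/35) * p * ((n:ℝ) - 1)) ≤ n * Real.exp (-(2 * Real.log n)) := by
          gcongr
      _ = 1 / n := by
          rw [Real.exp_neg, two_mul, Real.exp_add, Real.exp_log hnpos]
          field_simp
      _ ≤ ε := by
          rw [div_le_iff₀ hε] at a3
          rw [div_le_iff₀ hnpos]; linarith
  · by_cases hd : 1.85 ≤ 3 * ((n/3 : ℕ):ℝ) * p
    · refine mid_core (s := (n:ℝ) ^ (1/20 : ℝ)) hp0 hp1 hε ?_ a1 a2 hd (not_le.1 hc).le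
      rw [← Real.rpow_natCast, ← Real.rpow_mul hnpos.le]; norm_num
    · refine hL n a4 p hp0 hp1 ?_
      have hfl : (n:ℝ) ≤ 3 * ((n/3 : ℕ):ℝ) + 2 := by
        have : n ≤ 3 * (n/3) + 2 := by omega
        exact_mod_cast this
      push Not at hd
      have h1 : (n:ℝ) * p ≤ 1.85 + 2 * p := by nlinarith
      nlinarith

/-- For any sequence `pₙ ∈ [0,1]`, with high probability the binomial random digraph
`𝔻(n,pₙ)` has a majority 3-colouring. -/
theorem whp_majority_three_colouring (p : ℕ → ℝ) (hp : ∀ n, p n ∈ Set.Icc (0 : ℝ) 1) :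
    Tendsto (fun n => diMeasure n (p n)
        {A | ∃ c : Fin n → Fin 3, ∀ v, MajorityAt A c v})
      atTop (nhds 1) := by
  exact final_reduction all_regimes p hp
end
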